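/- arXiv:2407.16120 — 4 statements merged into one kernel-verified Lean document; each statement's English description precedes it below -/
import Mathlib

section
/- There is an absolute constant c > 0 with the following property. Let n ≥ 1 be an integer and let M be a real number with 1 ≤ M ≤ (1/4)·exp(n/9), and set a := (log(4M)/n)^{1/2} (so that a ≤ 1/3). Then for every choice of real numbers a_0, a_1, …, a_n ∈ [1, M] there exist b_0, b_1, …, b_n ∈ {−1, 0, 1} such that the polynomial P(x) = Σ_{j=0}^{n} b_j a_j x^j has at least c·(n/log(4M))^{1/2} − 1 distinct sign changes in the open interval I_a := (1−2a, 1−a); that is, there exist points t_0 < t_1 < ⋯ < t_q in (1−2a, 1−a) with q ≥ c·(n/log(4M))^{1/2} − 1 and P(t_{i−1})·P(t_i) < 0 for each i = 1, …, q. -/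
/-- factor zeros -/
lemma bp_factor (U : Set ℂ) (hU : IsOpen U) (N : ℕ) (p : ℕ → ℂ) (hp : ∀ i < N, p i ∈ U)
    (hinj : ∀ i < N, ∀ j < N, p i = p j → i = j) (F : ℂ → ℂ) (hF : DifferentiableOn ℂ F U)
    (hz : ∀ i < N, F (p i) = 0) :
    ∃ S : ℂ → ℂ, DifferentiableOn ℂ S U ∧ ∀ u, F u = (∏ i ∈ Finset.range N, (u - p i)) * S u := by
  induction N with
  | zero => exact ⟨F, hF, by simp⟩
  | succ N ih =>
    obtain ⟨S, hS, hFS⟩ := ih (fun i hi => hp i (by omega))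
      (fun i hi j hj h => hinj i (by omega) j (by omega) h) (fun i hi => hz i (by omega))
    have hSN : S (p N) = 0 := by
      have h1 := hz N (by omega)
      rw [hFS] at h1
      rcases mul_eq_zero.1 h1 with h | h
      · rw [Finset.prod_eq_zero_iff] at h
        obtain ⟨i, hi, h⟩ := h
        rw [Finset.mem_range] at hi
        have := hinj N (by omega) i (by omega) (sub_eq_zero.1 h)
        omega
      · exact h
    refine ⟨dslope S (p N), ?_, fun u => ?_⟩
    · rwa [Complex.differentiableOn_dslope (hU.mem_nhds (hp N (by omega)))]
    · rw [hFS, Finset.prod_range_succ, mul_assoc]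
      congr 1
      have := sub_smul_dslope S (p N) u
      rw [hSN, sub_zero, smul_eq_mul] at this
      exact this.symm

lemma bp_sphere (p : ℝ) (u : ℂ) (hu : ‖u‖ = 1) : ‖u - p‖ = ‖1 - p * u‖ := by
  have h1 : u * (starRingEnd ℂ) u = 1 := by
    rw [Complex.mul_conj, Complex.normSq_eq_norm_sq, hu]; simp
  have h2 : 1 - p * u = u * (starRingEnd ℂ) (u - p) := by
    rw [map_sub, Complex.conj_ofReal, mul_sub, h1]; ring
  rw [h2, norm_mul, hu, Complex.norm_conj, one_mul]

/-- Blaschke bound -/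
lemma bp_blaschke (U : Set ℂ) (hU : IsOpen U) (hUb : Metric.closedBall (0:ℂ) 1 ⊆ U)
    (N : ℕ) (p : ℕ → ℝ) (hp : ∀ i < N, 0 ≤ p i ∧ p i ≤ 1/3)
    (hinj : ∀ i < N, ∀ j < N, p i = p j → i = j) (F : ℂ → ℂ) (hF : DifferentiableOn ℂ F U)
    (hz : ∀ i < N, F (p i) = 0) (B : ℝ) (hB : ∀ u : ℂ, ‖u‖ = 1 → ‖F u‖ ≤ B)
    (d : ℝ) (hd0 : 0 < d) (hd1 : d ≤ 1) :
    ‖F ((-(1 - d) : ℝ) : ℂ)‖ ≤ B * (1 - d / 2) ^ N := by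
  obtain ⟨S, hS, hFS⟩ := bp_factor U hU N (fun i => (p i : ℂ)) (fun i hi => hUb (by
      have := hp i hi
      simp only [Metric.mem_closedBall, dist_zero_right, Complex.norm_real, Real.norm_eq_abs]
      rw [abs_le]; constructor <;> linarith))
    (fun i hi j hj h => hinj i hi j hj (by exact_mod_cast h)) F hF hz
  set H : ℂ → ℂ := fun u => (∏ i ∈ Finset.range N, (1 - (p i : ℂ) * u)) * S u with hH
  have hHd : DifferentiableOn ℂ H U := by
    apply DifferentiableOn.mul _ hS
    fun_prop
  have hHB : ∀ u ∈ frontier (Metric.ball (0:ℂ) 1), ‖H u‖ ≤ B := by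
    intro u hu
    rw [frontier_ball _ one_ne_zero] at hu
    have hu' : ‖u‖ = 1 := by simpa using hu
    have := hB u hu'
    rw [hFS, norm_mul, norm_prod] at this
    simp only [hH]
    rw [norm_mul, norm_prod]
    simpa only [bp_sphere _ u hu'] using this
  have hd : DiffContOnCl ℂ H (Metric.ball 0 1) := by
    apply DifferentiableOn.diffContOnCl
    rw [closure_ball _ one_ne_zero]
    exact hHd.mono hUb
  have hu0 : ((-(1 - d) : ℝ) : ℂ) ∈ closure (Metric.ball (0:ℂ) 1) := by
    rw [closure_ball _ one_ne_zero]
    simp only [Metric.mem_closedBall, dist_zero_right, Complex.norm_real, Real.norm_eq_abs]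
    rw [abs_le]; constructor <;> linarith
  have hmax := Complex.norm_le_of_forall_mem_frontier_norm_le Metric.isBounded_ball hd hHB hu0
  have hprod : ∀ i ∈ Finset.range N, ‖((-(1 - d) : ℝ) : ℂ) - p i‖ ≤
      (1 - d/2) * ‖1 - (p i : ℂ) * ((-(1 - d) : ℝ) : ℂ)‖ := by
    intro i hi
    have := hp i (Finset.mem_range.1 hi)
    have e1 : ((-(1 - d) : ℝ) : ℂ) - p i = ((-(1 - d) - p i : ℝ) : ℂ) := by push_cast; ring
    have e2 : 1 - (p i : ℂ) * ((-(1 - d) : ℝ) : ℂ) = ((1 + p i * (1 - d) : ℝ) : ℂ) := by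
      push_cast; ring
    rw [e1, e2, Complex.norm_real, Complex.norm_real, Real.norm_eq_abs, Real.norm_eq_abs,
      abs_of_nonpos (by linarith), abs_of_nonneg (by nlinarith)]
    nlinarith [mul_nonneg this.1 hd0.le, mul_nonneg (sub_nonneg.2 this.2) hd0.le, mul_nonneg (mul_nonneg this.1 hd0.le) hd0.le]
  have hpp := Finset.prod_le_prod (fun i _ => norm_nonneg _) hprod
  rw [Finset.prod_mul_distrib, Finset.prod_const, Finset.card_range] at hpp
  rw [hFS, norm_mul, norm_prod]
  simp only [hH] at hmax
  rw [norm_mul, norm_prod] at hmax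
  calc _ ≤ ((1 - d/2)^N * ∏ i ∈ Finset.range N, ‖1 - (p i : ℂ) * ((-(1 - d) : ℝ) : ℂ)‖) * ‖S ((-(1 - d) : ℝ) : ℂ)‖ := by
        gcongr
    _ = ((∏ i ∈ Finset.range N, ‖1 - (p i : ℂ) * ((-(1 - d) : ℝ) : ℂ)‖) * ‖S ((-(1 - d) : ℝ) : ℂ)‖) * (1 - d/2)^N := by ring
    _ ≤ _ := by
      apply mul_le_mul_of_nonneg_right hmax
      apply pow_nonneg; linarith

noncomputable def bpNode (N : ℕ) (i : ℕ) : ℝ := ((i:ℝ) + 1) / (3 * ((N:ℝ) + 2))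

lemma bpNode_pos (N i : ℕ) : 0 < bpNode N i := by unfold bpNode; positivity

lemma bpNode_lt (N i : ℕ) (hi : i < N + 1) : bpNode N i < 1/3 := by
  unfold bpNode
  rw [div_lt_div_iff₀ (by positivity) (by norm_num)]
  have : (i:ℝ) + 1 ≤ N + 1 := by exact_mod_cast hi
  linarith

lemma bpNode_mono (N : ℕ) : StrictMono (bpNode N) := by
  intro i j h
  unfold bpNode
  have : (i:ℝ) < j := by exact_mod_cast h
  gcongr

/-- product of distances -/
lemma bp_dist (N : ℕ) (i : ℕ) (hi : i < N + 1) :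
    ∏ j ∈ (Finset.range (N+1)).erase i, |(i:ℝ) - j| = (i.factorial : ℝ) * ((N - i).factorial : ℝ) := by
  have h : (Finset.range (N+1)).erase i = Finset.range i ∪ Finset.Ico (i+1) (N+1) := by
    ext j; simp; omega
  rw [h, Finset.prod_union]
  · congr 1
    · rw [← Finset.prod_range_reflect, ← Finset.prod_range_add_one_eq_factorial]
      push_cast
      apply Finset.prod_congr rfl
      intro j hj
      rw [Finset.mem_range] at hj
      rw [abs_of_nonneg]
      · rw [Nat.sub_sub, Nat.cast_sub (by omega)]; push_cast; ring
      · rw [Nat.sub_sub, Nat.cast_sub (by omega)]; push_cast; ring_nf; positivity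
    · rw [Finset.prod_Ico_eq_prod_range, ← Finset.prod_range_add_one_eq_factorial]
      push_cast
      apply Finset.prod_congr rfl
      intro j hj
      rw [abs_of_nonpos]
      · ring
      · have : (0:ℝ) ≤ j := by positivity
        linarith
  · rw [Finset.disjoint_left]; intro j; simp; omega

lemma bp_dist_lower (N : ℕ) (hN : 1 ≤ N) (i : ℕ) (hi : i < N + 1) :
    (1 / (18 * Real.exp 1)) ^ N ≤ ∏ j ∈ (Finset.range (N+1)).erase i, |bpNode N i - bpNode N j| := by
  have h1 : ∀ j ∈ (Finset.range (N+1)).erase i, |bpNode N i - bpNode N j| =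
      (1 / (3 * ((N:ℝ) + 2))) * |(i:ℝ) - j| := by
    intro j _
    have : bpNode N i - bpNode N j = (1 / (3 * ((N:ℝ) + 2))) * ((i:ℝ) - j) := by
      unfold bpNode; field_simp; ring
    rw [this, abs_mul, abs_of_nonneg (by positivity)]
  rw [Finset.prod_congr rfl h1, Finset.prod_mul_distrib, Finset.prod_const, bp_dist N i hi,
    Finset.card_erase_of_mem (Finset.mem_range.2 hi), Finset.card_range, Nat.add_sub_cancel]
  have h2 : (N.factorial : ℝ) ≤ 2^N * ((i.factorial : ℝ) * ((N - i).factorial : ℝ)) := by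
    have := Nat.choose_mul_factorial_mul_factorial (show i ≤ N by omega)
    rw [← this]
    push_cast
    rw [mul_assoc]
    gcongr
    exact_mod_cast Nat.choose_le_two_pow N i
  have h3 : (N:ℝ)^N ≤ Real.exp 1 ^ N * N.factorial := by
    have := Real.pow_div_factorial_le_exp (N:ℝ) (by positivity) N
    rw [div_le_iff₀ (by positivity)] at this
    rw [← Real.exp_nat_mul, mul_one]
    exact this
  have hN' : (1:ℝ) ≤ N := by exact_mod_cast hN
  have h4 : (1 / (18 * Real.exp 1)) ^ N ≤ (1 / (3 * ((N:ℝ) + 2)))^N * (N^N / (2^N * Real.exp 1 ^ N)) := by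
    rw [← mul_pow, ← div_pow, ← mul_pow]
    gcongr
    rw [div_mul_div_comm, div_le_div_iff₀ (by positivity) (by positivity)]
    have := Real.exp_pos 1
    nlinarith
  refine h4.trans ?_
  gcongr
  rw [div_le_iff₀ (by positivity)]
  calc (N:ℝ)^N ≤ Real.exp 1 ^ N * N.factorial := h3
    _ ≤ Real.exp 1 ^ N * (2^N * ((i.factorial : ℝ) * ((N - i).factorial : ℝ))) := by gcongr
    _ = _ := by ring

lemma bp_interp (U : Set ℂ) (hU : IsOpen U) (hUb : Metric.closedBall (0:ℂ) 1 ⊆ U)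
    (N : ℕ) (hN : 1 ≤ N) (G : ℂ → ℂ) (hG : DifferentiableOn ℂ G U)
    (hB : ∀ u : ℂ, ‖u‖ = 1 → ‖G u‖ ≤ 1) (ε : ℝ)
    (hε : ∑ i ∈ Finset.range (N+1), ‖G (bpNode N i)‖ ≤ ε)
    (d : ℝ) (hd0 : 0 < d) (hd1 : d ≤ 1) :
    ‖G ((-(1 - d) : ℝ) : ℂ)‖ ≤ ε * (36 * Real.exp 1) ^ N
      + (1 + ε * (36 * Real.exp 1) ^ N) * (1 - d / 2) ^ (N + 1) := by
  set Lf : ℂ → ℂ := fun u => ∑ i ∈ Finset.range (N+1), G (bpNode N i) *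
    ∏ j ∈ (Finset.range (N+1)).erase i, ((u - bpNode N j) / ((bpNode N i : ℂ) - bpNode N j)) with hLf
  have hL : ∀ u : ℂ, ‖u‖ ≤ 1 → ‖Lf u‖ ≤ ε * (36 * Real.exp 1) ^ N := by
    intro u hu
    calc ‖Lf u‖ ≤ ∑ i ∈ Finset.range (N+1), ‖G (bpNode N i)‖ * (36 * Real.exp 1) ^ N := by
          refine (norm_sum_le _ _).trans (Finset.sum_le_sum fun i hi => ?_)
          rw [norm_mul]
          gcongr
          rw [Finset.prod_div_distrib, norm_div, norm_prod, norm_prod]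
          have e1 : ∏ j ∈ (Finset.range (N+1)).erase i, ‖u - bpNode N j‖ ≤ 2^N := by
            calc _ ≤ ∏ j ∈ (Finset.range (N+1)).erase i, (2:ℝ) := by
                  apply Finset.prod_le_prod (fun _ _ => norm_nonneg _)
                  intro j hj
                  have hj' := Finset.mem_range.1 (Finset.mem_of_mem_erase hj)
                  have := norm_sub_le u (bpNode N j)
                  rw [Complex.norm_real, Real.norm_eq_abs, abs_of_pos (bpNode_pos N j)] at this
                  have := bpNode_lt N j hj'
                  linarith
              _ = 2^N := by
                  rw [Finset.prod_const, Finset.card_erase_of_mem hi, Finset.card_range,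
                    Nat.add_sub_cancel]
          have e2 := bp_dist_lower N hN i (Finset.mem_range.1 hi)
          have e3 : ∏ j ∈ (Finset.range (N+1)).erase i, ‖(bpNode N i : ℂ) - bpNode N j‖ =
              ∏ j ∈ (Finset.range (N+1)).erase i, |bpNode N i - bpNode N j| := by
            apply Finset.prod_congr rfl
            intro j _
            rw [← Complex.ofReal_sub, Complex.norm_real, Real.norm_eq_abs]
          rw [e3]
          calc _ ≤ 2^N / (1 / (18 * Real.exp 1)) ^ N := by gcongr
            _ = (36 * Real.exp 1) ^ N := by
              rw [← div_pow]; congr 1; field_simp; norm_num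
      _ ≤ _ := by
          rw [← Finset.sum_mul]; gcongr
  have hLd : Differentiable ℂ Lf := by
    simp only [hLf]; fun_prop
  have hz : ∀ i < N+1, (fun u => G u - Lf u) (bpNode N i : ℂ) = 0 := by
    intro i hi
    simp only [hLf]
    rw [Finset.sum_eq_single i]
    · rw [Finset.prod_eq_one, mul_one, sub_self]
      intro j hj
      apply div_self
      rw [sub_ne_zero]
      intro h
      exact (Finset.ne_of_mem_erase hj) ((bpNode_mono N).injective (by exact_mod_cast h.symm))
    · intro k hk hki
      rw [Finset.prod_eq_zero (i := i), mul_zero]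
      · simp [hi, hki.symm]
      · simp
    · intro h; simp at h; omega
  have hb := bp_blaschke U hU hUb (N+1) (bpNode N)
    (fun i hi => ⟨(bpNode_pos N i).le, (bpNode_lt N i hi).le⟩)
    (fun i _ j _ h => (bpNode_mono N).injective h) (fun u => G u - Lf u)
    (hG.sub hLd.differentiableOn) hz (1 + ε * (36 * Real.exp 1) ^ N)
    (fun u hu => (norm_sub_le _ _).trans (add_le_add (hB u hu) (hL u hu.le))) d hd0 hd1
  have hu0 : ‖((-(1 - d) : ℝ) : ℂ)‖ ≤ 1 := by
    simp only [Complex.norm_real, Real.norm_eq_abs]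
    rw [abs_le]; constructor <;> linarith
  have h5 := hL _ hu0
  have h6 := norm_add_le (Lf ((-(1 - d) : ℝ) : ℂ)) (G ((-(1 - d) : ℝ) : ℂ) - Lf ((-(1 - d) : ℝ) : ℂ))
  rw [add_sub_cancel] at h6
  linarith

/-- pigeonhole -/
lemma bp_pigeon (n m T : ℕ) (hT : 1 ≤ T) (hc : (T+1)^m < 2^(n+1)) (w : Fin m → Fin (n+1) → ℝ)
    (hw : ∀ k j, 0 ≤ w k j) (R : ℝ) (hR : 0 < R) (hwR : ∀ k, ∑ j, w k j ≤ R) :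
    ∃ b : Fin (n+1) → ℝ, (∀ j, b j = -1 ∨ b j = 0 ∨ b j = 1) ∧ (∃ j, b j ≠ 0) ∧
      ∀ k, |∑ j, b j * w k j| ≤ R / T := by
  have hT' : (0:ℝ) < T := by exact_mod_cast hT
  let f : Finset (Fin (n+1)) → (Fin m → Fin (T+1)) := fun s k =>
    ⟨⌊T * (∑ j ∈ s, w k j) / R⌋₊, by
      rw [Nat.lt_succ_iff]
      apply Nat.floor_le_of_le
      rw [div_le_iff₀ hR]
      gcongr
      exact (Finset.sum_le_sum_of_subset_of_nonneg (Finset.subset_univ s)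
        (fun j _ _ => hw k j)).trans (hwR k)⟩
  obtain ⟨s, t, hst, hf⟩ := Fintype.exists_ne_map_eq_of_card_lt f (by simpa using hc)
  refine ⟨fun j => (if j ∈ s then 1 else 0) - (if j ∈ t then 1 else 0), ?_, ?_, ?_⟩
  · intro j; dsimp only; split_ifs <;> norm_num
  · by_contra h
    push Not at h
    apply hst
    ext j
    have := h j
    split_ifs at this with h1 h2 h2
    · simp [h1, h2]
    · norm_num at this
    · norm_num at this
    · simp [h1, h2]
  · intro k
    have e : ∑ j, ((if j ∈ s then (1:ℝ) else 0) - (if j ∈ t then 1 else 0)) * w k j =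
        (∑ j ∈ s, w k j) - ∑ j ∈ t, w k j := by
      simp [sub_mul, Finset.sum_sub_distrib]
    rw [e]
    have h := congrArg Fin.val (congrFun hf k)
    simp only [f] at h
    have n1 : 0 ≤ T * (∑ j ∈ s, w k j) / R := by
      have := Finset.sum_nonneg (fun j (_ : j ∈ s) => hw k j)
      positivity
    have n2 : 0 ≤ T * (∑ j ∈ t, w k j) / R := by
      have := Finset.sum_nonneg (fun j (_ : j ∈ t) => hw k j)
      positivity
    have a1 := Nat.floor_le n1
    have a2 := Nat.lt_floor_add_one (T * (∑ j ∈ s, w k j) / R)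
    have b1 := Nat.floor_le n2
    have b2 := Nat.lt_floor_add_one (T * (∑ j ∈ t, w k j) / R)
    rw [h] at a1 a2
    have hd : |T * (∑ j ∈ s, w k j) / R - T * (∑ j ∈ t, w k j) / R| ≤ 1 := by
      rw [abs_le]; constructor <;> linarith
    have e2 : (∑ j ∈ s, w k j) - ∑ j ∈ t, w k j =
      (T * (∑ j ∈ s, w k j) / R - T * (∑ j ∈ t, w k j) / R) * (R / T) := by field_simp
    rw [e2, abs_mul, abs_of_pos (show 0 < R / T by positivity)]
    have : 0 < R / T := by positivity
    nlinarith

/-- sign-change combinatorics -/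
lemma bp_signs (v p : ℕ → ℝ) (hp : StrictMono p) (N : ℕ) :
    (∀ i ≤ N, v i = 0) ∨ ∃ (r : ℕ) (t : ℕ → ℕ) (τ : ℝ) (S : Multiset ℝ),
      (∀ i < r, t i < t (i+1) ∧ v (t i) * v (t (i+1)) < 0) ∧ t r ≤ N ∧ 0 < τ * v (t r) ∧
      S.card = r ∧ (∀ s ∈ S, p 0 ≤ s ∧ s < p N) ∧
      ∀ i ≤ N, 0 ≤ τ * v i * (S.map (fun s => p i - s)).prod := by
  have single : ∀ N, (∀ i < N, v i = 0) → v N ≠ 0 → ∃ (r : ℕ) (t : ℕ → ℕ) (τ : ℝ) (S : Multiset ℝ),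
      (∀ i < r, t i < t (i+1) ∧ v (t i) * v (t (i+1)) < 0) ∧ t r ≤ N ∧ 0 < τ * v (t r) ∧
      S.card = r ∧ (∀ s ∈ S, p 0 ≤ s ∧ s < p N) ∧
      ∀ i ≤ N, 0 ≤ τ * v i * (S.map (fun s => p i - s)).prod := by
    intro N h0 hN
    refine ⟨0, fun _ => N, v N, 0, by simp, le_rfl, mul_self_pos.2 hN, rfl, by simp, ?_⟩
    intro i hi
    rcases hi.lt_or_eq with h | h
    · simp [h0 i h]
    · subst h; simpa using mul_self_nonneg _
  induction N with
  | zero =>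
    by_cases h : v 0 = 0
    · left; intro i hi; rw [Nat.le_zero.1 hi, h]
    · right; exact single 0 (by simp) h
  | succ N ih =>
    rcases ih with h0 | ⟨r, t, τ, S, ht, htr, hτ, hS, hSp, hsgn⟩
    · by_cases h : v (N+1) = 0
      · left; intro i hi
        rcases hi.lt_or_eq with h' | h'
        · exact h0 i (by omega)
        · rw [h', h]
      · right; exact single (N+1) (fun i hi => h0 i (by omega)) h
    · right
      have hlt : p N < p (N+1) := hp (by omega)
      have hpos : 0 < (S.map (fun s => p (N+1) - s)).prod := by
        apply Multiset.prod_pos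
        intro x hx
        obtain ⟨s, hs, rfl⟩ := Multiset.mem_map.1 hx
        have := (hSp s hs).2
        linarith
      by_cases hv : 0 ≤ τ * v (N+1)
      · refine ⟨r, t, τ, S, ht, by omega, hτ, hS, fun s hs => ⟨(hSp s hs).1, (hSp s hs).2.trans hlt⟩, ?_⟩
        intro i hi
        rcases hi.lt_or_eq with h' | h'
        · exact hsgn i (by omega)
        · subst h'; positivity
      · push Not at hv
        refine ⟨r+1, fun i => if i ≤ r then t i else N+1, -τ, (p N + p (N+1))/2 ::ₘ S, ?_, ?_, ?_, ?_, ?_, ?_⟩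
        · intro i hi
          rcases (Nat.lt_succ_iff.1 hi).lt_or_eq with h | h
          · simpa [h.le, Nat.succ_le_iff.2 h] using ht i h
          · subst h
            simp only [le_refl, if_true, show ¬ (i + 1 ≤ i) by omega, if_false]
            refine ⟨by omega, ?_⟩
            by_contra hc
            push Not at hc
            have h1 : (τ * v (t i)) * (τ * v (N+1)) < 0 := mul_neg_of_pos_of_neg hτ hv
            nlinarith [mul_nonneg (mul_self_nonneg τ) hc]
        · simp
        · simp only [show ¬ (r + 1 ≤ r) by omega, if_false]; linarith
        · simp [hS]
        · intro s hs
          rcases Multiset.mem_cons.1 hs with rfl | hs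
          · have : p 0 ≤ p N := hp.monotone (by omega)
            constructor <;> linarith
          · exact ⟨(hSp s hs).1, (hSp s hs).2.trans hlt⟩
        · intro i hi
          rw [Multiset.map_cons, Multiset.prod_cons]
          rcases hi.lt_or_eq with h' | h'
          · have h1 := hsgn i (by omega)
            have h2 : p i ≤ p N := hp.monotone (by omega)
            have h3 : 0 ≤ (p N + p (N+1))/2 - p i := by linarith
            nlinarith [mul_nonneg h1 h3]
          · subst h'
            have h3 : 0 < p (N+1) - (p N + p (N+1))/2 := by linarith
            have h4 : 0 ≤ -τ * v (N+1) := by linarith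
            positivity

/-- coefficient expansion of product -/
lemma bp_coeffs (S : Multiset ℝ) (hS : ∀ s ∈ S, 0 ≤ s) :
    ∃ γ : ℕ → ℝ, (∀ u : ℝ, (S.map (fun s => u - s)).prod = ∑ k ∈ Finset.range (S.card + 1), γ k * u^k) ∧
      ∑ k ∈ Finset.range (S.card + 1), |γ k| ≤ (S.map (fun s => 1 + s)).prod := by
  induction S using Multiset.induction with
  | empty => exact ⟨fun _ => 1, by simp, by simp⟩
  | cons s S ih =>
    obtain ⟨γ, h1, h2⟩ := ih (fun x hx => hS x (Multiset.mem_cons_of_mem hx))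
    have hs := hS s (Multiset.mem_cons_self s S)
    refine ⟨fun k => (if k = 0 then 0 else γ (k-1)) - s * (if k ≤ S.card then γ k else 0), ?_, ?_⟩
    · intro u
      rw [Multiset.map_cons, Multiset.prod_cons, Multiset.card_cons, h1]
      simp only [sub_mul, Finset.sum_sub_distrib]
      congr 1
      · rw [Finset.sum_range_succ' _ (S.card + 1)]
        simp only [Nat.add_sub_cancel, if_true, zero_mul, add_zero, Nat.succ_ne_zero, if_false]
        rw [Finset.mul_sum]
        apply Finset.sum_congr rfl; intros; ring
      · rw [Finset.sum_range_succ _ (S.card + 1)]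
        simp only [show ¬ (S.card + 1 ≤ S.card) by omega, if_false, mul_zero, zero_mul, add_zero]
        rw [Finset.mul_sum]
        apply Finset.sum_congr rfl
        intro k hk
        rw [Finset.mem_range, Nat.lt_succ_iff] at hk
        simp only [hk, if_true]; ring
    · rw [Multiset.map_cons, Multiset.prod_cons, Multiset.card_cons]
      have key : ∀ k ∈ Finset.range (S.card + 1 + 1), |(if k = 0 then 0 else γ (k-1)) - s * (if k ≤ S.card then γ k else 0)|
          ≤ (if k = 0 then 0 else |γ (k-1)|) + s * (if k ≤ S.card then |γ k| else 0) := by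
        intro k _
        refine (abs_sub _ _).trans ?_
        rw [abs_mul, abs_of_nonneg hs]
        gcongr <;> split_ifs <;> simp
      refine (Finset.sum_le_sum key).trans ?_
      rw [Finset.sum_add_distrib, Finset.sum_range_succ' _ (S.card + 1), ← Finset.mul_sum,
        Finset.sum_range_succ _ (S.card + 1)]
      simp only [Nat.add_sub_cancel, if_true, add_zero, Nat.succ_ne_zero, if_false, show ¬ (S.card + 1 ≤ S.card) by omega]
      have e : ∑ x ∈ Finset.range (S.card + 1), (if x ≤ S.card then |γ x| else 0) = ∑ x ∈ Finset.range (S.card + 1), |γ x| := by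
        apply Finset.sum_congr rfl
        intro k hk
        rw [Finset.mem_range, Nat.lt_succ_iff] at hk
        simp only [hk, if_true]
      rw [e]
      nlinarith

noncomputable def bpX (a : ℝ) (u : ℂ) : ℂ := 1 - 2 * a * (1 - u) / (1 + (1 - 3 * a) * u)

noncomputable def bpXr (a : ℝ) (u : ℝ) : ℝ := 1 - 2 * a * (1 - u) / (1 + (1 - 3 * a) * u)

lemma bpX_real (a u : ℝ) : bpX a (u : ℂ) = (bpXr a u : ℂ) := by
  unfold bpX bpXr; push_cast; rfl

lemma bpX_den (a : ℝ) (ha : 0 < a) (ha3 : a ≤ 1/3) (u : ℂ) (hu : ‖u‖ ≤ 1) :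
    1 + (1 - 3 * (a:ℂ)) * u ≠ 0 := by
  intro h
  have h1 : (1 - 3 * (a:ℂ)) * u = -1 := by linear_combination h
  have h2 : ‖(1 - 3 * (a:ℂ)) * u‖ = 1 := by rw [h1]; simp
  have h3 : (1 - 3 * (a:ℂ)) = ((1 - 3 * a : ℝ) : ℂ) := by push_cast; ring
  rw [norm_mul, h3, Complex.norm_real, Real.norm_eq_abs, abs_of_nonneg (by linarith)] at h2
  have := norm_nonneg u
  nlinarith

lemma bpX_circle (a : ℝ) (ha : 0 < a) (ha3 : a ≤ 1/3) (u : ℂ) (hu : ‖u‖ = 1) :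
    ‖bpX a u‖ ^ 2 = 1 - ‖1 - bpX a u‖ ^ 2 / 2 := by
  have hden := bpX_den a ha ha3 u hu.le
  set D : ℂ := 1 + (1 - 3 * (a:ℂ)) * u with hD
  have e1 : 1 - bpX a u = 2 * a * (1 - u) / D := by unfold bpX; ring
  have e2 : bpX a u = (D - 2 * a * (1 - u)) / D := by
    unfold bpX; rw [← hD]; field_simp
  have hu2 : u.re ^ 2 + u.im ^ 2 = 1 := by
    have := Complex.sq_norm u
    rw [hu, Complex.normSq_apply] at this
    nlinarith
  have hDn : 0 < ‖D‖ ^ 2 := by positivity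
  rw [e1, e2, norm_div, norm_div, div_pow, div_pow]
  rw [div_eq_iff hDn.ne']
  have : (1 - ‖2 * (a:ℂ) * (1 - u)‖ ^ 2 / ‖D‖ ^ 2 / 2) * ‖D‖^2 = ‖D‖^2 - ‖2 * (a:ℂ) * (1 - u)‖ ^ 2 / 2 := by
    field_simp
  rw [this, Complex.sq_norm, Complex.sq_norm, Complex.sq_norm, Complex.normSq_apply, Complex.normSq_apply, Complex.normSq_apply]
  simp [hD]
  ring_nf
  have : u.im^2 = 1 - u.re^2 := by linarith
  rw [this]; ring

lemma bpP_bound (a : ℝ) (ha : 0 < a) (ha3 : a ≤ 1/3) (M : ℝ) (n : ℕ) (β : ℕ → ℝ)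
    (hβ : ∀ j, |β j| ≤ M) (u : ℂ) (hu : ‖u‖ = 1) :
    ‖(∑ j ∈ Finset.range n, (β j : ℂ) * bpX a u ^ j) * (1 - bpX a u) ^ 2‖ ≤ 4 * M := by
  have hM : 0 ≤ M := (abs_nonneg _).trans (hβ 0)
  have hc := bpX_circle a ha ha3 u hu
  set x := bpX a u
  set r := ‖x‖ with hr
  set y := ‖1 - x‖ with hy
  have hr0 : 0 ≤ r := norm_nonneg _
  have hr1 : r ≤ 1 := by nlinarith [sq_nonneg y]
  have hy2 : y^2 ≤ 4 * (1 - r) := by nlinarith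
  have hs : ‖∑ j ∈ Finset.range n, (β j : ℂ) * x ^ j‖ ≤ M * ∑ j ∈ Finset.range n, r^j := by
    rw [Finset.mul_sum]
    refine (norm_sum_le _ _).trans (Finset.sum_le_sum fun j _ => ?_)
    rw [norm_mul, norm_pow, Complex.norm_real, Real.norm_eq_abs]
    gcongr
    exact hβ j
  have hg : (∑ j ∈ Finset.range n, r^j) * (1 - r) ≤ 1 := by
    have := geom_sum_mul r n
    have : 0 ≤ r^n := by positivity
    nlinarith
  have hs0 : 0 ≤ ∑ j ∈ Finset.range n, r^j := by positivity
  rw [norm_mul, norm_pow, ← hy]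
  calc _ ≤ (M * ∑ j ∈ Finset.range n, r^j) * (4 * (1 - r)) := by gcongr
    _ = 4 * M * ((∑ j ∈ Finset.range n, r^j) * (1 - r)) := by ring
    _ ≤ 4 * M * 1 := by gcongr
    _ = _ := by ring

noncomputable def bpg (S : Multiset ℝ) (u : ℂ) : ℂ := (S.map (fun s : ℝ => (u - s) / (1 + s))).prod

lemma bpg_diff (S : Multiset ℝ) : Differentiable ℂ (bpg S) := by
  induction S using Multiset.induction with
  | empty => unfold bpg; simp
  | cons s S ih =>
    have : bpg (s ::ₘ S) = fun u => (u - s) / (1 + s) * bpg S u := by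
      funext u; simp [bpg]
    rw [this]; fun_prop

lemma bpg_bound (S : Multiset ℝ) (hS : ∀ s ∈ S, 0 ≤ s) (u : ℂ) (hu : ‖u‖ = 1) : ‖bpg S u‖ ≤ 1 := by
  induction S using Multiset.induction with
  | empty => unfold bpg; simp
  | cons s S ih =>
    have h : bpg (s ::ₘ S) u = (u - s) / (1 + s) * bpg S u := by simp [bpg]
    have hs := hS s (Multiset.mem_cons_self s S)
    rw [h, norm_mul]
    have h1 : ‖(u - s) / (1 + s)‖ ≤ 1 := by
      have e : (1 + s : ℂ) = ((1 + s : ℝ) : ℂ) := by push_cast; ring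
      rw [norm_div, e, Complex.norm_real, Real.norm_eq_abs, abs_of_pos (by linarith), div_le_one (by linarith)]
      have := norm_sub_le u (s:ℂ)
      rw [Complex.norm_real, Real.norm_eq_abs, abs_of_nonneg hs] at this
      linarith
    exact mul_le_one₀ h1 (norm_nonneg _) (ih (fun x hx => hS x (Multiset.mem_cons_of_mem hx)))

lemma bpg_lower (S : Multiset ℝ) (hS : ∀ s ∈ S, 0 ≤ s) (d : ℝ) (hd0 : 0 < d) (hd1 : d ≤ 1) :
    (1 - d) ^ S.card ≤ ‖bpg S ((-(1 - d) : ℝ) : ℂ)‖ := by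
  induction S using Multiset.induction with
  | empty => unfold bpg; simp
  | cons s S ih =>
    have h : ∀ u, bpg (s ::ₘ S) u = (u - s) / (1 + s) * bpg S u := by simp [bpg]
    have hs := hS s (Multiset.mem_cons_self s S)
    rw [h, norm_mul, Multiset.card_cons, pow_succ']
    have h1 : 1 - d ≤ ‖(((-(1 - d) : ℝ) : ℂ) - s) / (1 + s)‖ := by
      have e : (((-(1 - d) : ℝ) : ℂ) - s) / (1 + s) = (((-(1 - d) - s) / (1 + s) : ℝ) : ℂ) := by push_cast; ring
      rw [e, Complex.norm_real, Real.norm_eq_abs, abs_div, abs_of_pos (show 0 < 1 + s by linarith), le_div_iff₀ (by linarith), abs_of_nonpos (by linarith)]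
      nlinarith
    have := ih (fun x hx => hS x (Multiset.mem_cons_of_mem hx))
    have h2 : 0 ≤ 1 - d := by linarith
    gcongr

lemma bpg_real (S : Multiset ℝ) (hS : ∀ s ∈ S, 0 ≤ s) (p : ℝ) :
    ‖bpg S p‖ = |(S.map (fun s => p - s)).prod| / (S.map (fun s => 1 + s)).prod := by
  induction S using Multiset.induction with
  | empty => unfold bpg; simp
  | cons s S ih =>
    have h : ∀ u, bpg (s ::ₘ S) u = (u - s) / (1 + s) * bpg S u := by simp [bpg]
    have hs := hS s (Multiset.mem_cons_self s S)
    rw [h, norm_mul, ih (fun x hx => hS x (Multiset.mem_cons_of_mem hx))]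
    have e : ((p : ℂ) - s) / (1 + s) = (((p - s) / (1 + s) : ℝ) : ℂ) := by push_cast; ring
    rw [e, Complex.norm_real, Real.norm_eq_abs, abs_div, abs_of_pos (show 0 < 1 + s by linarith)]
    simp only [Multiset.map_cons, Multiset.prod_cons, abs_mul]
    rw [div_mul_div_comm]

lemma bpXr_bounds (a : ℝ) (ha : 0 < a) (ha3 : a ≤ 1/3) (u : ℝ) (hu0 : 0 < u) (hu1 : u < 1/3) :
    1 - 2 * a < bpXr a u ∧ bpXr a u < 1 - a := by
  unfold bpXr
  have hD : 0 < 1 + (1 - 3 * a) * u := by nlinarith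
  constructor
  · have : 2 * a * (1 - u) / (1 + (1 - 3 * a) * u) < 2 * a := by
      rw [div_lt_iff₀ hD]
      nlinarith [mul_pos ha hu0, mul_nonneg (mul_pos ha hu0).le (show 0 ≤ 1 - 3*a by linarith)]
    linarith
  · have : a < 2 * a * (1 - u) / (1 + (1 - 3 * a) * u) := by
      rw [lt_div_iff₀ hD]
      nlinarith [mul_pos ha hu0, mul_pos ha (sub_pos.2 hu1), mul_pos (mul_pos ha ha) hu0]
    linarith

lemma bpXr_mono (a : ℝ) (ha : 0 < a) (ha3 : a ≤ 1/3) (u v : ℝ) (hu0 : 0 < u) (huv : u < v) :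
    bpXr a u < bpXr a v := by
  unfold bpXr
  have hk : 0 ≤ 1 - 3 * a := by linarith
  have hD : 0 < 1 + (1 - 3 * a) * u := by nlinarith
  have hD' : 0 < 1 + (1 - 3 * a) * v := by nlinarith
  have : 2 * a * (1 - v) / (1 + (1 - 3 * a) * v) < 2 * a * (1 - u) / (1 + (1 - 3 * a) * u) := by
    rw [div_lt_div_iff₀ hD' hD]
    nlinarith [mul_pos ha (sub_pos.2 huv), mul_nonneg (mul_pos ha (sub_pos.2 huv)).le hk]
  linarith

lemma bp_analytic (a : ℝ) (ha : 0 < a) (ha3 : a ≤ 1/3) (M : ℝ) (hM : 1 ≤ M) (n : ℕ) (β : ℕ → ℝ)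
    (hβ : ∀ j, |β j| ≤ M) (hβ0 : 1 ≤ |β 0|) (S : Multiset ℝ) (hS : ∀ s ∈ S, 0 ≤ s)
    (N : ℕ) (hN : 1 ≤ N) (ε : ℝ)
    (hε : ∑ i ∈ Finset.range (N+1), |∑ j ∈ Finset.range (n+1), β j * bpXr a (bpNode N i) ^ j| *
      |(S.map (fun s => bpNode N i - s)).prod| ≤ ε * (S.map (fun s => 1 + s)).prod) :
    (1 - a / (1 - a)) ^ S.card / (4 * M) ≤ ε * (36 * Real.exp 1) ^ N
      + (1 + ε * (36 * Real.exp 1) ^ N) * (1 - a / (1 - a) / 2) ^ (N + 1) := by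
  have hW : 0 < (S.map (fun s => 1 + s)).prod := by
    apply Multiset.prod_pos
    intro x hx
    obtain ⟨s, hs, rfl⟩ := Multiset.mem_map.1 hx
    have := hS s hs
    linarith
  set U : Set ℂ := {u | 1 + (1 - 3 * (a:ℂ)) * u ≠ 0} with hU
  have hUo : IsOpen U := isOpen_ne_fun (by fun_prop) (by fun_prop)
  have hUb : Metric.closedBall (0:ℂ) 1 ⊆ U := fun u hu =>
    bpX_den a ha ha3 u (by simpa using hu)
  have hXd : DifferentiableOn ℂ (bpX a) U := by
    unfold bpX
    refine DifferentiableOn.sub (by fun_prop) (DifferentiableOn.div (by fun_prop) (by fun_prop) ?_)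
    intro u hu; exact hu
  set G : ℂ → ℂ := fun u => ((∑ j ∈ Finset.range (n+1), (β j : ℂ) * bpX a u ^ j) * (1 - bpX a u) ^ 2)
    * bpg S u / (4 * M : ℝ) with hG
  have hGd : DifferentiableOn ℂ G U := by
    have := (bpg_diff S).differentiableOn (s := U)
    simp only [hG]
    fun_prop
  have h4M : ‖((4 * M : ℝ) : ℂ)‖ = 4 * M := by
    rw [Complex.norm_real, Real.norm_eq_abs, abs_of_pos (by linarith)]
  have hGB : ∀ u : ℂ, ‖u‖ = 1 → ‖G u‖ ≤ 1 := by
    intro u hu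
    simp only [hG]
    rw [norm_div, norm_mul, h4M, div_le_one (by linarith)]
    have h1 := bpP_bound a ha ha3 M (n+1) β hβ u hu
    have h2 := bpg_bound S hS u hu
    calc _ ≤ 4 * M * 1 := by gcongr
      _ = _ := by ring
  have hGε : ∑ i ∈ Finset.range (N+1), ‖G (bpNode N i)‖ ≤ ε := by
    rw [← div_le_iff₀ hW, Finset.sum_div] at hε
    refine le_trans (Finset.sum_le_sum fun i hi => ?_) hε
    have hi' := Finset.mem_range.1 hi
    simp only [hG]
    rw [norm_div, norm_mul, h4M, bpg_real S hS, norm_mul, bpX_real]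
    have hb := bpXr_bounds a ha ha3 _ (bpNode_pos N i) (bpNode_lt N i hi')
    set x := bpXr a (bpNode N i)
    have e1 : ‖∑ j ∈ Finset.range (n+1), (β j : ℂ) * (x:ℂ) ^ j‖ = |∑ j ∈ Finset.range (n+1), β j * x ^ j| := by
      rw [← Real.norm_eq_abs, ← Complex.norm_real]; push_cast; rfl
    have e2 : ‖(1 - (x:ℂ))^2‖ ≤ 1 := by
      have : (1 - (x:ℂ))^2 = (((1-x)^2 : ℝ) : ℂ) := by push_cast; ring
      rw [this, Complex.norm_real, Real.norm_eq_abs, abs_of_nonneg (by positivity)]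
      nlinarith
    rw [e1, mul_div_assoc]
    set A := |∑ j ∈ Finset.range (n+1), β j * x ^ j|
    set B := |(S.map (fun s => bpNode N i - s)).prod|
    have hA : 0 ≤ A := abs_nonneg _
    have hB : 0 ≤ B := abs_nonneg _
    have hq : B / (S.map (fun s => 1 + s)).prod / (4 * M) ≤ B / (S.map (fun s => 1 + s)).prod :=
      div_le_self (by positivity) (by linarith)
    calc _ ≤ A * 1 * (B / (S.map (fun s => 1 + s)).prod) := by gcongr
      _ = _ := by ring
  have hd0 : 0 < a / (1 - a) := div_pos ha (by linarith)
  have hd1 : a / (1 - a) ≤ 1 := by rw [div_le_one (by linarith)]; linarith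
  have hmain := bp_interp U hUo hUb N hN G hGd hGB ε hGε _ hd0 hd1
  refine le_trans ?_ hmain
  have hx0 : bpX a ((-(1 - a / (1 - a)) : ℝ) : ℂ) = 0 := by
    rw [bpX_real]
    norm_cast
    unfold bpXr
    have h1 : (1 - a) ≠ 0 := by linarith
    have h2 : 1 + (1 - 3 * a) * -(1 - a / (1 - a)) = 2 * a * (1 - -(1 - a / (1 - a))) := by
      field_simp; ring
    have h3 : 1 - -(1 - a / (1 - a)) ≠ 0 := by linarith
    rw [h2, div_self (by positivity), sub_self]
  simp only [hG]
  rw [hx0, norm_div, norm_mul, h4M]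
  gcongr
  have e : (∑ j ∈ Finset.range (n+1), (β j : ℂ) * 0 ^ j) * (1 - 0) ^ 2 = β 0 := by
    rw [Finset.sum_range_succ']; simp
  rw [e, Complex.norm_real, Real.norm_eq_abs]
  have h1 := bpg_lower S hS _ hd0 hd1
  have h2 := norm_nonneg (bpg S ((-(1 - a / (1 - a)) : ℝ) : ℂ))
  nlinarith

lemma bp_one_sub_ge (t : ℝ) (h1 : t < 1) : Real.exp (-(t / (1 - t))) ≤ 1 - t := by
  have h2 : 0 < 1 - t := by linarith
  have h := Real.add_one_le_exp (t / (1 - t))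
  have e : t / (1 - t) + 1 = (1 - t)⁻¹ := by field_simp; ring
  rw [e] at h
  rw [Real.exp_neg]
  exact inv_le_of_inv_le₀ h2 h

lemma bp_exp4 : (36:ℝ) ≤ Real.exp 4 := by
  have h := Real.exp_one_gt_d9
  have : Real.exp 4 = Real.exp 1 ^ 4 := by rw [← Real.exp_nat_mul]; norm_num
  rw [this]
  calc (36:ℝ) ≤ 2.7 ^ 4 := by norm_num
    _ ≤ _ := by gcongr; linarith

lemma bp_numeric (a L X M ε : ℝ) (r q N : ℕ) (ha : 0 < a) (ha3 : a ≤ 1/3) (hL : 1 ≤ L)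
    (hX : a * X = L) (hM : 4 * M = Real.exp L) (hrq : r ≤ q) (hq : (q:ℝ) * a ≤ 1/200)
    (hN1 : 12 * X ≤ N) (hN2 : (N:ℝ) ≤ 13 * X) (hε : ε ≤ Real.exp (-72 * X))
    (h : (1 - a / (1 - a)) ^ r / (4 * M) ≤ ε * (36 * Real.exp 1) ^ N
      + (1 + ε * (36 * Real.exp 1) ^ N) * (1 - a / (1 - a) / 2) ^ (N + 1)) : False := by
  have hXpos : 0 < X := by
    by_contra hc
    push Not at hc
    nlinarith
  have hXL : 3 * L ≤ X := by nlinarith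
  have h1a : 0 < 1 - a := by linarith
  set d := a / (1 - a) with hd
  have hda : a ≤ d := by rw [hd, le_div_iff₀ h1a]; nlinarith
  have hd32 : d ≤ 3/2 * a := by rw [hd, div_le_iff₀ h1a]; nlinarith
  have hd2 : d ≤ 1/2 := by linarith
  have hK : (36 * Real.exp 1) ^ N ≤ Real.exp (65 * X) := by
    calc (36 * Real.exp 1) ^ N ≤ (Real.exp 4 * Real.exp 1) ^ N := by gcongr; exact bp_exp4
      _ = Real.exp (N * 5) := by rw [← Real.exp_add, ← Real.exp_nat_mul]; norm_num
      _ ≤ _ := by apply Real.exp_le_exp.2; linarith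
  have hεK : ε * (36 * Real.exp 1) ^ N ≤ Real.exp (-6 * L) := by
    calc ε * (36 * Real.exp 1) ^ N ≤ Real.exp (-72 * X) * Real.exp (65 * X) := by gcongr
      _ = Real.exp (-7 * X) := by rw [← Real.exp_add]; ring_nf
      _ ≤ _ := by apply Real.exp_le_exp.2; linarith
  have he1 : Real.exp (-6 * L) ≤ 1 := by rw [Real.exp_le_one_iff]; linarith
  have hρ : (1 - d / 2) ^ (N + 1) ≤ Real.exp (-6 * L) := by
    calc (1 - d / 2) ^ (N + 1) ≤ (1 - d/2) ^ N := by
          apply pow_le_pow_of_le_one <;> linarith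
      _ ≤ (Real.exp (-(d/2)))^N := by
          gcongr
          · linarith
          · exact Real.one_sub_le_exp_neg _
      _ = Real.exp (-(N * (d/2))) := by rw [← Real.exp_nat_mul]; ring_nf
      _ ≤ _ := by
          apply Real.exp_le_exp.2
          have : 12 * X * (a/2) ≤ N * (d/2) := by gcongr
          nlinarith
  have hρ0 : 0 ≤ (1 - d / 2) ^ (N + 1) := by apply pow_nonneg; linarith
  have hR : ε * (36 * Real.exp 1) ^ N + (1 + ε * (36 * Real.exp 1) ^ N) * (1 - d / 2) ^ (N + 1)
      ≤ 3 * Real.exp (-6 * L) := by nlinarith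
  have hl : Real.exp (-2 * L) ≤ (1 - d) ^ r / (4 * M) := by
    have h1 : Real.exp (-(3 * a)) ≤ 1 - d := by
      refine le_trans (Real.exp_le_exp.2 ?_) (bp_one_sub_ge d (by linarith))
      have : d / (1 - d) ≤ 3 * a := by rw [div_le_iff₀ (by linarith)]; nlinarith
      linarith
    have h2 : Real.exp (-L) ≤ (1 - d) ^ r := by
      calc Real.exp (-L) ≤ Real.exp (r * (-(3*a))) := by
            apply Real.exp_le_exp.2
            have : (r:ℝ) ≤ q := by exact_mod_cast hrq
            nlinarith
        _ = (Real.exp (-(3 * a)))^r := by rw [Real.exp_nat_mul]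
        _ ≤ _ := by gcongr
    rw [hM, le_div_iff₀ (Real.exp_pos _), ← Real.exp_add]
    refine le_trans (le_of_eq ?_) h2
    ring_nf
  have hfin : 3 * Real.exp (-6 * L) < Real.exp (-2 * L) := by
    have e : Real.exp (-2 * L) = Real.exp (4 * L) * Real.exp (-6 * L) := by
      rw [← Real.exp_add]; ring_nf
    rw [e]
    have := Real.add_one_le_exp (4 * L)
    have := Real.exp_pos (-6 * L)
    nlinarith
  linarith

lemma bp_shift (n : ℕ) (c : Fin (n+1) → ℝ) (hc : ∃ j, c j ≠ 0) (M : ℝ) (hM0 : 0 ≤ M)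
    (h1 : ∀ j, c j ≠ 0 → 1 ≤ |c j|) (hM : ∀ j, |c j| ≤ M) :
    ∃ (k : ℕ) (β : ℕ → ℝ), k ≤ n ∧ (∀ j, |β j| ≤ M) ∧ 1 ≤ |β 0| ∧
      ∀ x : ℝ, ∑ j : Fin (n+1), c j * x ^ (j:ℕ) = x ^ k * ∑ j ∈ Finset.range (n+1), β j * x ^ j := by
  classical
  set β0 : ℕ → ℝ := fun j => if h : j < n + 1 then c ⟨j, h⟩ else 0 with hβ0
  have hex : ∃ k, β0 k ≠ 0 := by
    obtain ⟨j, hj⟩ := hc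
    exact ⟨j, by simp only [hβ0]; rw [dif_pos j.2]; exact hj⟩
  have hlarge : ∀ j, n + 1 ≤ j → β0 j = 0 := by
    intro j hj
    simp only [hβ0]; rw [dif_neg (by omega)]
  have hk0 := Nat.find_spec hex
  have hkmin : ∀ j < Nat.find hex, β0 j = 0 := fun j hj => by
    have := Nat.find_min hex hj
    simpa using this
  set k := Nat.find hex
  have hkn : k < n + 1 := by
    by_contra h
    exact hk0 (hlarge k (by omega))
  refine ⟨k, fun j => β0 (k + j), by omega, ?_, ?_, ?_⟩
  · intro j
    simp only [hβ0]
    split_ifs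
    · exact hM _
    · simpa using hM0
  · have e : β0 k = c ⟨k, hkn⟩ := by simp only [hβ0]; rw [dif_pos hkn]
    simp only [add_zero]
    rw [e] at hk0 ⊢
    exact h1 _ hk0
  · intro x
    have e1 : ∑ j : Fin (n+1), c j * x ^ (j:ℕ) = ∑ j ∈ Finset.range (n+1), β0 j * x ^ j := by
      rw [Finset.sum_range]
      apply Finset.sum_congr rfl
      intro j _
      simp only [hβ0]; rw [dif_pos j.2]
    have e2 := Finset.sum_range_add (fun j => β0 j * x ^ j) k (n+1)
    have e3 := Finset.sum_range_add (fun j => β0 j * x ^ j) (n+1) k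
    rw [Finset.sum_eq_zero (s := Finset.range k) (fun j hj => by
      rw [hkmin j (Finset.mem_range.1 hj), zero_mul]), zero_add] at e2
    rw [Finset.sum_eq_zero (s := Finset.range k) (fun j hj => by
      rw [hlarge _ (by omega), zero_mul]), add_zero] at e3
    rw [e1, ← e3, add_comm (n+1) k, e2, Finset.mul_sum]
    apply Finset.sum_congr rfl
    intro j _
    ring

lemma bp_contra (n q N : ℕ) (a L X M : ℝ) (ha : 0 < a) (ha3 : a ≤ 1/3) (hL : 1 ≤ L)
    (hX : a * X = L) (hXn : X = a * n) (hM1 : 1 ≤ M) (hM : 4 * M = Real.exp L)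
    (hq : (q:ℝ) * a ≤ 1/200)
    (hN1 : 12 * X ≤ N) (hN2 : (N:ℝ) ≤ 13 * X) (c : Fin (n+1) → ℝ) (hc : ∃ j, c j ≠ 0)
    (h1 : ∀ j, c j ≠ 0 → 1 ≤ |c j|) (hcM : ∀ j, |c j| ≤ M)
    (v : ℕ → ℝ) (hv : ∀ i, v i = ∑ j : Fin (n+1), c j * bpXr a (bpNode N i) ^ (j:ℕ))
    (hsmall : ∀ k < q, |∑ i ∈ Finset.range (N+1), v i * bpNode N i ^ k| ≤ Real.exp (-78 * X))
    (S : Multiset ℝ) (hS : ∀ s ∈ S, 0 ≤ s) (hSq : S.card < q)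
    (hsum : ∑ i ∈ Finset.range (N+1), |v i| * |(S.map (fun s => bpNode N i - s)).prod| ≤
      |∑ i ∈ Finset.range (N+1), v i * (S.map (fun s => bpNode N i - s)).prod|) : False := by
  have hXpos : 0 < X := by
    by_contra hc
    push Not at hc
    nlinarith
  have hN : 1 ≤ N := by
    have : (0:ℝ) < N := by linarith
    exact_mod_cast this
  obtain ⟨k, β, hkn, hβM, hβ0, hβ⟩ := bp_shift n c hc M (by linarith) h1 hcM
  obtain ⟨γ, hγ, hγ1⟩ := bp_coeffs S hS
  set W := (S.map (fun s => 1 + s)).prod with hW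
  have hb : |∑ i ∈ Finset.range (N+1), v i * (S.map (fun s => bpNode N i - s)).prod| ≤
      W * Real.exp (-78 * X) := by
    have e : ∑ i ∈ Finset.range (N+1), v i * (S.map (fun s => bpNode N i - s)).prod =
        ∑ k ∈ Finset.range (S.card + 1), γ k * ∑ i ∈ Finset.range (N+1), v i * bpNode N i ^ k := by
      simp only [hγ, Finset.mul_sum]
      rw [Finset.sum_comm]
      apply Finset.sum_congr rfl; intro k _
      apply Finset.sum_congr rfl; intro i _
      ring
    rw [e]
    calc _ ≤ ∑ k ∈ Finset.range (S.card + 1), |γ k| * Real.exp (-78 * X) := by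
          refine (Finset.abs_sum_le_sum_abs _ _).trans (Finset.sum_le_sum fun k hk => ?_)
          rw [abs_mul]
          gcongr
          exact hsmall k (by have := Finset.mem_range.1 hk; omega)
      _ ≤ _ := by rw [← Finset.sum_mul]; gcongr
  refine bp_numeric a L X M (Real.exp (-72 * X)) S.card q N ha ha3 hL hX hM hSq.le hq hN1 hN2 le_rfl
    (bp_analytic a ha ha3 M hM1 n β hβM hβ0 S hS N hN _ ?_)
  have hterm : ∀ i ∈ Finset.range (N+1), |∑ j ∈ Finset.range (n+1), β j * bpXr a (bpNode N i) ^ j| *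
      |(S.map (fun s => bpNode N i - s)).prod| ≤
      Real.exp (6 * X) * (|v i| * |(S.map (fun s => bpNode N i - s)).prod|) := by
    intro i hi
    have hx := (bpXr_bounds a ha ha3 _ (bpNode_pos N i) (bpNode_lt N i (Finset.mem_range.1 hi)))
    rw [hv i, hβ, abs_mul]
    set x := bpXr a (bpNode N i)
    have h12 : Real.exp (-(6 * a)) ≤ 1 - 2 * a := by
      refine le_trans (Real.exp_le_exp.2 ?_) (bp_one_sub_ge (2*a) (by linarith))
      have : 2 * a / (1 - 2 * a) ≤ 6 * a := by rw [div_le_iff₀ (by linarith)]; nlinarith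
      linarith
    have hxk : Real.exp (-(6 * X)) ≤ |x ^ k| := by
      have hx0 : 0 < x := by linarith
      rw [abs_of_pos (by positivity)]
      calc Real.exp (-(6 * X)) = Real.exp (-(6 * a)) ^ n := by
            rw [← Real.exp_nat_mul, hXn]; ring_nf
        _ ≤ x ^ n := by gcongr; linarith
        _ ≤ x ^ k := pow_le_pow_of_le_one hx0.le (by linarith) hkn
    have : 1 ≤ Real.exp (6 * X) * |x ^ k| := by
      calc (1:ℝ) = Real.exp (6 * X) * Real.exp (-(6 * X)) := by rw [← Real.exp_add]; simp
        _ ≤ _ := by gcongr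
    have h0 : 0 ≤ |∑ j ∈ Finset.range (n+1), β j * x ^ j| * |(S.map (fun s => bpNode N i - s)).prod| := by positivity
    calc _ = 1 * (|∑ j ∈ Finset.range (n+1), β j * x ^ j| * |(S.map (fun s => bpNode N i - s)).prod|) := by ring
      _ ≤ (Real.exp (6 * X) * |x ^ k|) * (|∑ j ∈ Finset.range (n+1), β j * x ^ j| * |(S.map (fun s => bpNode N i - s)).prod|) := by gcongr
      _ = _ := by ring
  refine (Finset.sum_le_sum hterm).trans ?_
  rw [← Finset.mul_sum]
  calc _ ≤ Real.exp (6 * X) * (W * Real.exp (-78 * X)) := by gcongr; exact hsum.trans hb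
    _ = (Real.exp (6 * X) * Real.exp (-78 * X)) * W := by ring
    _ = _ := by rw [← Real.exp_add, show 6 * X + -78 * X = -72 * X by ring]

set_option maxHeartbeats 2000000 in
/-- Extension of the Bloch–Pólya theorem: for coefficients `a_j ∈ [1,M]` one can choose
signs `b_j ∈ {-1,0,1}` so that `P(x) = ∑ b_j a_j x^j` has at least
`c (n / log 4M)^(1/2) - 1` distinct sign changes in `(1-2a, 1-a)`,
where `a = (log 4M / n)^(1/2)`. -/
theorem bloch_polya_extension :
    ∃ c : ℝ, 0 < c ∧
      ∀ n : ℕ, 1 ≤ n →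
        ∀ M : ℝ, 1 ≤ M → M ≤ (1 / 4) * Real.exp ((n : ℝ) / 9) →
          ∀ A : Fin (n + 1) → ℝ, (∀ j, A j ∈ Set.Icc (1 : ℝ) M) →
            ∃ b : Fin (n + 1) → ℝ, (∀ j, b j = -1 ∨ b j = 0 ∨ b j = 1) ∧
              ∃ q : ℕ, c * Real.sqrt ((n : ℝ) / Real.log (4 * M)) - 1 ≤ (q : ℝ) ∧
                ∃ t : Fin (q + 1) → ℝ, StrictMono t ∧
                  (∀ i, t i ∈ Set.Ioo
                      (1 - 2 * Real.sqrt (Real.log (4 * M) / (n : ℝ)))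
                      (1 - Real.sqrt (Real.log (4 * M) / (n : ℝ)))) ∧
                  ∀ i : Fin q,
                    (∑ j : Fin (n + 1), b j * A j * (t i.castSucc) ^ (j : ℕ)) *
                      (∑ j : Fin (n + 1), b j * A j * (t i.succ) ^ (j : ℕ)) < 0 := by
  refine ⟨1/200, by norm_num, ?_⟩
  intro n hn M hM1 hM2 A hA
  have hn0 : (0:ℝ) < n := by exact_mod_cast hn
  set L := Real.log (4 * M) with hLdef
  have hM : 4 * M = Real.exp L := by rw [hLdef, Real.exp_log (by linarith)]
  have hL : 1 ≤ L := by
    rw [hLdef, Real.le_log_iff_exp_le (by linarith)]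
    have := Real.exp_one_lt_d9
    linarith
  have hLn : L ≤ n / 9 := by
    rw [hLdef, Real.log_le_iff_le_exp (by linarith)]; linarith
  set a := Real.sqrt (L / n) with hadef
  have ha : 0 < a := Real.sqrt_pos.2 (by positivity)
  have ha2 : a * a = L / n := Real.mul_self_sqrt (by positivity)
  have ha3 : a ≤ 1/3 := by
    rw [hadef, Real.sqrt_le_left (by norm_num), div_le_iff₀ hn0]
    linarith
  have hinv : Real.sqrt (n / L) = 1 / a := by
    rw [hadef, ← inv_div, Real.sqrt_inv, one_div]
  rw [hinv]
  set q := ⌈1/200 * (1/a) - 1⌉₊ with hq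
  have hq1 : 1/200 * (1/a) - 1 ≤ (q:ℝ) := Nat.le_ceil _
  by_cases hq0 : q = 0
  · refine ⟨fun _ => 0, by simp, 0, by simpa [hq0] using hq1, fun _ => 1 - 3/2 * a, ?_, ?_, fun i => i.elim0⟩
    · intro i j h
      have := i.2; have := j.2; have : (i:ℕ) < j := h
      omega
    · intro i; constructor <;> linarith
  have hqlt : (q:ℝ) < 1/200 * (1/a) := by
    have hp : 0 < 1/200 * (1/a) - 1 := by
      by_contra h
      exact hq0 (Nat.ceil_eq_zero.2 (not_lt.1 h))
    have := Nat.ceil_lt_add_one hp.le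
    linarith
  have hqa : (q:ℝ) * a < 1/200 := by
    have : 1/200 * (1/a) = (1/200) / a := by ring
    rwa [this, lt_div_iff₀ ha] at hqlt
  set X := a * n with hXdef
  have hX : a * X = L := by rw [hXdef, ← mul_assoc, ha2]; field_simp
  have hXL : 3 * L ≤ X := by
    have : 0 < X := by positivity
    nlinarith
  set N := ⌈12 * X⌉₊ with hNdef
  have hN1 : 12 * X ≤ N := Nat.le_ceil _
  have hN2 : (N:ℝ) ≤ 13 * X := by
    have := Nat.ceil_lt_add_one (show 0 ≤ 12 * X by linarith)
    linarith
  set T := ⌈Real.exp (95 * X)⌉₊ with hTdef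
  have hT1 : Real.exp (95 * X) ≤ T := Nat.le_ceil _
  have hT0 : 1 ≤ T := Nat.one_le_iff_ne_zero.2 (by
    intro h; rw [h] at hT1; have := Real.exp_pos (95 * X); push_cast at hT1; linarith)
  have hT2 : (T:ℝ) + 1 ≤ Real.exp (96 * X) := by
    have h1 := Nat.ceil_lt_add_one (Real.exp_pos (95 * X)).le
    have e : Real.exp (96 * X) = Real.exp (95 * X) * Real.exp X := by rw [← Real.exp_add]; ring_nf
    have h2 := Real.add_one_le_exp X
    have h3 := Real.add_one_le_exp (95 * X)
    rw [e]
    nlinarith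
  have hcard : (T+1)^q < 2^(n+1) := by
    have : ((T:ℝ)+1)^q < 2^(n+1) := by
      calc ((T:ℝ)+1)^q ≤ Real.exp (96 * X) ^ q := by gcongr
        _ = Real.exp (96 * n * (q * a)) := by rw [← Real.exp_nat_mul, hXdef]; ring_nf
        _ ≤ Real.exp (n * (1/2)) := by
            apply Real.exp_le_exp.2
            nlinarith
        _ = Real.exp (1/2) ^ n := by rw [Real.exp_nat_mul]
        _ ≤ 2 ^ n := by
            gcongr
            have : (1/2:ℝ) ≤ Real.log 2 := by have := Real.log_two_gt_d9; linarith
            calc Real.exp (1/2) ≤ Real.exp (Real.log 2) := Real.exp_le_exp.2 this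
              _ = 2 := Real.exp_log (by norm_num)
        _ < 2^(n+1) := by
            apply pow_lt_pow_right₀ <;> first | norm_num | omega
    exact_mod_cast this
  have hnode : ∀ i < N + 1, 0 < bpXr a (bpNode N i) ∧ bpXr a (bpNode N i) ≤ 1 := by
    intro i hi
    have := bpXr_bounds a ha ha3 _ (bpNode_pos N i) (bpNode_lt N i hi)
    constructor <;> linarith
  set R : ℝ := (N + 1) * M * (n + 1) with hR
  have hR0 : 0 < R := by positivity
  obtain ⟨b, hb, hbne, hbs⟩ := bp_pigeon n q T hT0 hcard
    (fun k j => ∑ i ∈ Finset.range (N+1), A j * bpXr a (bpNode N i) ^ (j:ℕ) * bpNode N i ^ (k:ℕ))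
    (fun k j => Finset.sum_nonneg fun i hi => by
      have h1 := (hA j).1
      have h2 := hnode i (Finset.mem_range.1 hi)
      have h3 := bpNode_pos N i
      have h4 := h2.1
      have h5 : 0 ≤ A j := by linarith
      positivity) R hR0 (fun k => by
      calc _ ≤ ∑ j : Fin (n+1), ∑ i ∈ Finset.range (N+1), M := by
            apply Finset.sum_le_sum; intro j _
            apply Finset.sum_le_sum; intro i hi
            have h2 := hnode i (Finset.mem_range.1 hi)
            have h3 := bpNode_pos N i
            have h4 := bpNode_lt N i (Finset.mem_range.1 hi)
            have h5 : bpXr a (bpNode N i) ^ (j:ℕ) ≤ 1 := pow_le_one₀ h2.1.le h2.2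
            have h6 : bpNode N i ^ (k:ℕ) ≤ 1 := pow_le_one₀ h3.le (by linarith)
            have h7 := h2.1
            calc _ ≤ M * 1 * 1 := by
                  gcongr
                  exact (hA j).2
              _ = M := by ring
        _ = R := by simp [hR]; ring
        _ ≤ R := le_rfl)
  have hRT : R / T ≤ Real.exp (-78 * X) := by
    have hT' : (0:ℝ) < T := by exact_mod_cast hT0
    rw [div_le_iff₀ hT']
    have r1 : (N:ℝ) + 1 ≤ Real.exp (14 * X) := by
      have := Real.add_one_le_exp (14 * X); linarith
    have r2 : M ≤ Real.exp X := by
      have : Real.exp L ≤ Real.exp X := Real.exp_le_exp.2 (by linarith)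
      linarith
    have r3 : (n:ℝ) + 1 ≤ Real.exp (2 * X) := by
      have h1 : (n:ℝ) ≤ X * X := by
        have : X * X = L * n := by rw [← hX]; simp only [hXdef]; ring
        nlinarith
      have h2 := Real.add_one_le_exp X
      have e : Real.exp (2 * X) = Real.exp X * Real.exp X := by rw [← Real.exp_add]; ring_nf
      rw [e]
      have h3 : (X+1)*(X+1) ≤ Real.exp X * Real.exp X := by gcongr
      linarith
    calc R ≤ Real.exp (14 * X) * Real.exp X * Real.exp (2 * X) := by
          rw [hR]; gcongr
      _ = Real.exp (-78 * X) * Real.exp (95 * X) := by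
          rw [← Real.exp_add, ← Real.exp_add, ← Real.exp_add]; ring_nf
      _ ≤ _ := by gcongr
  refine ⟨b, hb, q, hq1, ?_⟩
  set v : ℕ → ℝ := fun i => ∑ j : Fin (n+1), b j * A j * bpXr a (bpNode N i) ^ (j:ℕ) with hv
  have hsmall : ∀ k < q, |∑ i ∈ Finset.range (N+1), v i * bpNode N i ^ k| ≤ Real.exp (-78 * X) := by
    intro k hk
    have h := (hbs ⟨k, hk⟩).trans hRT
    refine le_trans (le_of_eq ?_) h
    congr 1
    simp only [hv, Finset.mul_sum, Finset.sum_mul]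
    rw [Finset.sum_comm]
    apply Finset.sum_congr rfl; intro j _
    apply Finset.sum_congr rfl; intro i _
    ring
  have hc : ∃ j, b j * A j ≠ 0 := by
    obtain ⟨j, hj⟩ := hbne
    exact ⟨j, mul_ne_zero hj (by have := (hA j).1; linarith)⟩
  have hc1 : ∀ j, b j * A j ≠ 0 → 1 ≤ |b j * A j| := by
    intro j hj
    have h1 := (hA j).1
    rw [abs_mul, abs_of_pos (show 0 < A j by linarith)]
    rcases hb j with h | h | h <;> rw [h] at hj ⊢
    · simpa using h1
    · simp at hj
    · simpa using h1
  have hcM : ∀ j, |b j * A j| ≤ M := by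
    intro j
    have h1 := hA j
    rw [abs_mul, abs_of_pos (show 0 < A j by linarith [h1.1])]
    rcases hb j with h | h | h <;> rw [h]
    · simpa using h1.2
    · simp; linarith
    · simpa using h1.2
  have contra := bp_contra n q N a L X M ha ha3 hL hX hXdef hM1 hM hqa.le hN1 hN2
    (fun j => b j * A j) hc hc1 hcM v (fun i => rfl) hsmall
  rcases bp_signs v (bpNode N) (bpNode_mono N) N with h0 | ⟨r, t, τ, S, ht, htr, hτ, hS, hSp, hsgn⟩
  · exfalso
    refine contra 0 (by simp) (by simpa using Nat.pos_of_ne_zero hq0) ?_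
    rw [Finset.sum_eq_zero]
    · exact abs_nonneg _
    · intro i hi
      rw [h0 i (by have := Finset.mem_range.1 hi; omega)]; simp
  · by_cases hrq : r < q
    · exfalso
      refine contra S (fun s hs => (bpNode_pos N 0).le.trans (hSp s hs).1) (by omega) ?_
      have hτ0 : 0 < |τ| := by
        rw [abs_pos]; rintro rfl; simp at hτ
      refine le_of_mul_le_mul_left ?_ hτ0
      rw [← abs_mul, Finset.mul_sum, Finset.mul_sum]
      refine le_trans (le_of_eq ?_) (le_abs_self _)
      apply Finset.sum_congr rfl
      intro i hi
      have := hsgn i (by have := Finset.mem_range.1 hi; omega)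
      rw [← abs_mul, ← abs_mul, ← mul_assoc, abs_of_nonneg this]
    · push Not at hrq
      have hmono : ∀ s, s ≤ r → t (r - s) ≤ N := by
        intro s
        induction s with
        | zero => intro _; simpa using htr
        | succ s ih =>
          intro hs
          have h1 := (ht (r - (s+1)) (by omega)).1
          rw [show r - (s+1) + 1 = r - s by omega] at h1
          have := ih (by omega)
          omega
      have hle : ∀ i ≤ r, t i ≤ N := by
        intro i hi
        have := hmono (r - i) (by omega)
        rwa [show r - (r - i) = i by omega] at this
      refine ⟨fun i => bpXr a (bpNode N (t i)), ?_, ?_, ?_⟩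
      · rw [Fin.strictMono_iff_lt_succ]
        intro i
        exact bpXr_mono a ha ha3 _ _ (bpNode_pos N _)
          (bpNode_mono N (ht i (by have := i.2; omega)).1)
      · intro i
        have := hle i (by have := i.2; omega)
        exact bpXr_bounds a ha ha3 _ (bpNode_pos N _) (bpNode_lt N _ (by omega))
      · intro i
        exact (ht i (by have := i.2; omega)).2
end

section
/- Let a ∈ (0, 1/3] and I_a := (1−2a, 1−a). Let n ≥ 0 be an integer, M ≥ 1, and let P be a polynomial of the form P(x) = Σ_{j=0}^{n} b_j a_j x^j with a_j ∈ [1, M], b_j ∈ {−1, 0, 1} for all j, and b_0 ∈ {−1, 1}. Then ∫_{I_a} log^−|P(x)| dx ≤ (9π/√2)·log(4M), where log^− y := max{0, −log y}. -/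
open MeasureTheory Set Filter Topology

noncomputable def slitS (ρ : ℝ) (z : ℂ) : ℂ :=
  Complex.exp (Complex.log ((ρ:ℂ)^2 + (1 - (ρ:ℂ)^2) * ((1 - z)/(1 + z))^2) / 2)

noncomputable def slitF (ρ : ℝ) (z : ℂ) : ℂ := (1 - slitS ρ z) / (1 + 2 * slitS ρ z)

lemma slit_bound (s : ℂ) (hs : 0 < s.re) :
    ‖(1 - s)/(1 + 2*s)‖ < 1 ∧
    ‖1 - (1 - s)/(1 + 2*s)‖^2 ≤ 6 * (1 - ‖(1 - s)/(1 + 2*s)‖) := by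
  have hne : (1 + 2*s) ≠ 0 := by
    intro h
    have := congrArg Complex.re h
    simp at this
    linarith
  have h1 : 1 - (1 - s)/(1 + 2*s) = 3*s/(1+2*s) := by
    rw [eq_div_iff hne, sub_mul, div_mul_cancel₀ _ hne]; ring
  have hn : 0 < ‖1 + 2*s‖ := norm_pos_iff.mpr hne
  rw [h1]
  simp only [norm_div, div_pow]
  set p := ‖1 - s‖ with hp
  set q := ‖1 + 2*s‖ with hq
  have e1 : p^2 = (1 - s.re)^2 + s.im^2 := by
    rw [hp, Complex.sq_norm, Complex.normSq_apply]; simp; ring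
  have e2 : q^2 = (1 + 2*s.re)^2 + 4*s.im^2 := by
    rw [hq, Complex.sq_norm, Complex.normSq_apply]; simp; ring
  have e3 : ‖3*s‖^2 = 9 * (s.re^2 + s.im^2) := by
    rw [Complex.sq_norm, Complex.normSq_apply]; simp; ring
  have hp0 : 0 ≤ p := norm_nonneg _
  have hlt : p < q := by
    apply lt_of_pow_lt_pow_left₀ 2 hn.le
    rw [e1, e2]; nlinarith [sq_nonneg s.im, sq_nonneg s.re]
  refine ⟨by rw [div_lt_one hn]; exact hlt, ?_⟩
  rw [e3, div_le_iff₀ (by positivity)]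
  have : 6 * (1 - p/q) * q^2 = 6 * (q - p) * q := by field_simp
  rw [this]
  nlinarith [sq_nonneg (q - p)]

lemma mobius_re (z : ℂ) (hz : ‖z‖ < 1) : 1 + z ≠ 0 ∧ 0 < ((1 - z)/(1 + z)).re := by
  have hne : 1 + z ≠ 0 := by
    intro h
    have : z = -1 := by linear_combination h
    rw [this] at hz; simp at hz
  refine ⟨hne, ?_⟩
  have h2 : Complex.normSq z < 1 := by
    rw [← Complex.sq_norm]; nlinarith [norm_nonneg z]
  rw [Complex.normSq_apply] at h2
  have hp := Complex.normSq_pos.mpr hne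
  rw [Complex.div_re, ← add_div]
  apply div_pos _ hp
  simp
  nlinarith

lemma slit_mem (ρ : ℝ) (hρ1 : ρ^2 < 1) (z : ℂ) (hz : ‖z‖ < 1) :
    ((ρ:ℂ)^2 + (1 - (ρ:ℂ)^2) * ((1 - z)/(1 + z))^2) ∈ Complex.slitPlane := by
  have h := (mobius_re z hz).2
  set m := (1 - z)/(1+z)
  have e : ((ρ:ℂ)^2 + (1 - (ρ:ℂ)^2) * m^2) = ((ρ^2 + (1-ρ^2)*(m.re^2 - m.im^2) : ℝ) : ℂ) +
      ((1 - ρ^2) * (2*m.re*m.im) : ℝ) * Complex.I := by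
    conv_lhs => rw [← Complex.re_add_im m]
    push_cast
    linear_combination (1 - (ρ:ℂ)^2) * (m.im:ℂ)^2 * Complex.I_sq
  rw [e, Complex.mem_slitPlane_iff]
  by_cases hi : m.im = 0
  · left
    simp only [hi]
    simp [-Complex.ofReal_add, -Complex.ofReal_mul]
    nlinarith [mul_pos (sub_pos.mpr hρ1) (pow_pos h 2), sq_nonneg ρ]
  · right
    simp [-Complex.ofReal_add, -Complex.ofReal_mul]
    refine ⟨by nlinarith, h.ne', hi⟩

lemma exp_half_log_re (u : ℂ) (hu : u ∈ Complex.slitPlane) : 0 < (Complex.exp (Complex.log u / 2)).re := by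
  rw [Complex.exp_re]
  apply mul_pos (Real.exp_pos _)
  have him : (Complex.log u / 2).im = u.arg / 2 := by
    rw [show Complex.log u / 2 = Complex.log u / ((2:ℝ):ℂ) by norm_num, Complex.div_ofReal_im, Complex.log_im]
  rw [him]
  have h1 := Complex.neg_pi_lt_arg u
  have h2 := Complex.arg_le_pi u
  have h3 := (Complex.mem_slitPlane_iff_arg.mp hu).1
  have h4 : u.arg < Real.pi := lt_of_le_of_ne h2 h3
  exact Real.cos_pos_of_mem_Ioo ⟨by linarith, by linarith⟩

lemma one_add_ne (s : ℂ) (hs : 0 < s.re) : (1 + 2*s) ≠ 0 := by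
  intro h
  have := congrArg Complex.re h
  simp at this
  linarith

/-- analyticity at any point where everything is fine -/
lemma slitF_analytic (ρ : ℝ) (z : ℂ) (hz : 1 + z ≠ 0)
    (hu : ((ρ:ℂ)^2 + (1 - (ρ:ℂ)^2) * ((1 - z)/(1 + z))^2) ∈ Complex.slitPlane) :
    AnalyticAt ℂ (slitF ρ) z := by
  have hs : AnalyticAt ℂ (slitS ρ) z := by
    unfold slitS
    have h1 : AnalyticAt ℂ (fun z : ℂ => (ρ:ℂ)^2 + (1 - (ρ:ℂ)^2) * ((1 - z)/(1 + z))^2) z := by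
      have : AnalyticAt ℂ (fun z : ℂ => (1 - z)/(1 + z)) z :=
        (analyticAt_const.sub analyticAt_id).div (analyticAt_const.add analyticAt_id) hz
      exact analyticAt_const.add (analyticAt_const.mul (this.pow 2))
    exact ((h1.clog hu).div_const).cexp
  unfold slitF
  refine (analyticAt_const.sub hs).div (analyticAt_const.add (analyticAt_const.mul hs)) ?_
  exact one_add_ne _ (exp_half_log_re _ hu)

lemma slitF_zero (ρ : ℝ) : slitF ρ 0 = 0 := by
  simp [slitF, slitS]

lemma slitF_measurable (ρ : ℝ) : Measurable (slitF ρ) := by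
  unfold slitF slitS
  fun_prop

lemma mob_circle (t T : ℝ) (h : Real.cos t = (1 - T^2)/(1 + T^2)) :
    1 + circleMap 0 1 t ≠ 0 ∧
      ((1 - circleMap 0 1 t)/(1 + circleMap 0 1 t))^2 = -(T:ℂ)^2 := by
  have hpos : 0 < 1 + T^2 := by positivity
  set z := circleMap 0 1 t with hz
  have hz' : z = Complex.cos t + Complex.sin t * Complex.I := by
    rw [hz, circleMap]; simp [Complex.exp_mul_I]
  have hz2 : z^2 + 1 = 2 * Complex.cos t * z := by
    rw [hz']
    linear_combination (Complex.sin_sq_add_cos_sq (t:ℂ)) * (-1) + (Complex.sin t)^2 * Complex.I_sq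
  have hc : Complex.cos t * (1 + (T:ℂ)^2) = 1 - (T:ℂ)^2 := by
    have : Real.cos t * (1 + T^2) = 1 - T^2 := by rw [h]; field_simp
    exact_mod_cast this
  have hT : (1 + (T:ℂ)^2) ≠ 0 := by exact_mod_cast hpos.ne'
  have hne : 1 + z ≠ 0 := by
    intro h0
    have h1 : z = -1 := by linear_combination h0
    rw [h1] at hz2
    have : (4:ℂ) = 0 := by linear_combination (1+(T:ℂ)^2) * hz2 + (-2) * hc
    norm_num at this
  refine ⟨hne, ?_⟩
  rw [div_pow, div_eq_iff (pow_ne_zero 2 hne)]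
  apply mul_left_cancel₀ hT
  linear_combination (1+(T:ℂ)^2)^2 * hz2 + 2 * z * (1+(T:ℂ)^2) * hc

lemma jensen_le (g : ℂ → ℂ) (r K : ℝ) (hr : 0 < r)
    (hg : AnalyticOnNhd ℂ g (Metric.closedBall 0 |r|)) (h0 : 1 ≤ ‖g 0‖) (hK : 1 ≤ K)
    (hb : ∀ z ∈ Metric.closedBall (0:ℂ) |r|, ‖g z‖ ≤ K) :
    ∫⁻ t in Ioc 0 (2 * Real.pi), ENNReal.ofReal (Real.log K - Real.log ‖g (circleMap 0 r t)‖) ≤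
      ENNReal.ofReal (2 * Real.pi * Real.log K) := by
  have hj := AnalyticOnNhd.circleAverage_log_norm hr.ne' hg (by rw [← norm_pos_iff]; linarith)
  have hsum : 0 ≤ ∑ᶠ u, MeromorphicOn.divisor g (Metric.closedBall 0 |r|) u * Real.log (r * ‖0 - u‖⁻¹) := by
    apply finsum_nonneg
    intro u
    by_cases hu : u ∈ Metric.closedBall (0:ℂ) |r|
    · apply mul_nonneg
      · exact_mod_cast (MeromorphicOn.AnalyticOnNhd.divisor_nonneg hg) u
      · by_cases h : u = 0
        · simp [h]
        · apply Real.log_nonneg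
          rw [zero_sub, norm_neg, ← div_eq_mul_inv, one_le_div (norm_pos_iff.mpr h)]
          simpa [abs_of_pos hr] using hu
    · rw [Function.locallyFinsuppWithin.apply_eq_zero_of_notMem _ hu]; simp
  have hci : CircleIntegrable (fun z => Real.log ‖g z‖) 0 r := by
    apply MeromorphicOn.circleIntegrable_log_norm
    rw [← abs_of_pos hr] at hg ⊢
    exact fun z hz => (hg z (Metric.sphere_subset_closedBall (by simpa using hz))).meromorphicAt
  have hav : 0 ≤ Real.circleAverage (fun z => Real.log ‖g z‖) 0 r := by
    rw [hj]; exact add_nonneg hsum (Real.log_nonneg h0)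
  have hpi := Real.pi_pos
  rw [Real.circleAverage_def, smul_eq_mul] at hav
  have hint : 0 ≤ ∫ t in (0)..(2*Real.pi), Real.log ‖g (circleMap 0 r t)‖ := by
    by_contra hcon
    push Not at hcon
    have : 0 < (2*Real.pi)⁻¹ := by positivity
    nlinarith
  have hci' : IntervalIntegrable (fun t => Real.log ‖g (circleMap 0 r t)‖) volume 0 (2*Real.pi) := hci
  have hI : IntegrableOn (fun t => Real.log K - Real.log ‖g (circleMap 0 r t)‖) (Ioc 0 (2*Real.pi)) :=
    (intervalIntegrable_iff_integrableOn_Ioc_of_le (by positivity)).mp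
      ((intervalIntegrable_const).sub hci')
  rw [← ofReal_integral_eq_lintegral_ofReal hI]
  · apply ENNReal.ofReal_le_ofReal
    rw [← intervalIntegral.integral_of_le (by positivity), intervalIntegral.integral_sub intervalIntegrable_const hci']
    simp
    linarith
  · refine Eventually.of_forall fun t => ?_
    simp only [Pi.zero_apply]
    by_cases h : ‖g (circleMap 0 r t)‖ = 0
    · rw [h]; simpa using Real.log_nonneg hK
    · have := Real.log_le_log (lt_of_le_of_ne (norm_nonneg _) (Ne.symm h))
        (hb _ (circleMap_mem_closedBall 0 (abs_nonneg r) t |> fun _ => by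
          simp [Metric.mem_closedBall, dist_eq_norm]))
      linarith

noncomputable def thT (ρ x : ℝ) : ℝ := Real.sqrt ((ρ^2 - ((1-x)/(1+2*x))^2)/(1-ρ^2))
noncomputable def thF (ρ x : ℝ) : ℝ := 2 * Real.arctan (thT ρ x)

lemma th_basic (a x : ℝ) (ha : 0 < a) (ha3 : a ≤ 1/3) (hx : x ∈ Ioo (1-2*a) (1-a)) (ρ : ℝ)
    (hρ : ρ = 2*a/(3-4*a)) : 0 < ρ ∧ ρ ≤ 2/5 ∧ 0 < (1-x)/(1+2*x) ∧ (1-x)/(1+2*x) < ρ ∧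
      ρ ≤ 14/5 * ((1-x)/(1+2*x)) := by
  obtain ⟨h1, h2⟩ := hx
  have h4 : 0 < 3 - 4*a := by linarith
  have hx0 : 0 < 1 + 2*x := by linarith
  subst hρ
  refine ⟨by positivity, ?_, div_pos (by linarith) hx0, ?_, ?_⟩
  · rw [div_le_iff₀ h4]; linarith
  · rw [div_lt_div_iff₀ hx0 h4]; nlinarith
  · rw [← mul_div_assoc, div_le_div_iff₀ h4 hx0]; nlinarith

lemma th_T_sq (ρ s : ℝ) (h0 : 0 < s) (h1 : s < ρ) (h2 : ρ ≤ 2/5) :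
    0 < (ρ^2 - s^2)/(1-ρ^2) := by
  apply div_pos <;> nlinarith

lemma th_deriv (a x : ℝ) (ha : 0 < a) (ha3 : a ≤ 1/3) (hx : x ∈ Ioo (1-2*a) (1-a)) (ρ : ℝ)
    (hρ : ρ = 2*a/(3-4*a)) : ∃ D, HasDerivAt (thF ρ) D x ∧ 2/9 ≤ D := by
  obtain ⟨p1, p2, p3, p4, p5⟩ := th_basic a x ha ha3 hx ρ hρ
  obtain ⟨h1, h2⟩ := hx
  have hx0 : 0 < 1 + 2*x := by linarith
  have hT2 := th_T_sq ρ _ p3 p4 p2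
  have hτ : 0 < 1 - ρ^2 := by nlinarith
  have hd1 : HasDerivAt (fun x : ℝ => (1-x)/(1+2*x)) (-3/(1+2*x)^2) x := by
    have := ((hasDerivAt_id x).const_sub 1).div (((hasDerivAt_id x).const_mul 2).const_add 1) hx0.ne'
    refine this.congr_deriv ?_
    simp only [id]; ring
  have hd2 := (((hd1.pow 2).const_sub (ρ^2)).div_const (1-ρ^2)).sqrt hT2.ne'
  have hd3 := hd2.arctan.const_mul 2
  refine ⟨_, hd3, ?_⟩
  simp only [Pi.pow_apply]
  set s := (1-x)/(1+2*x) with hs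
  set w := 1 + 2*x with hw
  have hsq : Real.sqrt ((ρ^2 - s^2)/(1-ρ^2)) ^ 2 = (ρ^2 - s^2)/(1-ρ^2) := Real.sq_sqrt hT2.le
  have hTp : 0 < Real.sqrt ((ρ^2 - s^2)/(1-ρ^2)) := Real.sqrt_pos.mpr hT2
  have hTle : Real.sqrt ((ρ^2 - s^2)/(1-ρ^2)) ≤ 3 * s := by
    apply Real.sqrt_le_iff.mpr
    refine ⟨by positivity, ?_⟩
    rw [div_le_iff₀ hτ]
    have : ρ^2 ≤ (14/5*s)^2 := by gcongr
    have : ρ^2 ≤ 4/25 := by nlinarith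
    nlinarith [sq_nonneg s]
  rw [hsq]
  set T := Real.sqrt ((ρ^2 - s^2)/(1-ρ^2)) with hT
  have e1 : 1 + (ρ^2 - s^2)/(1-ρ^2) = (1 - s^2)/(1-ρ^2) := by field_simp; ring
  rw [e1]
  have hs1 : 0 < 1 - s^2 := by nlinarith
  have e2 : 2 * (1 / ((1 - s^2)/(1-ρ^2)) * (-(((2:ℕ):ℝ) * s^(2-1) * (-3/w^2)) / (1-ρ^2) / (2*T)))
     = 6 * s / ((1-s^2) * T * w^2) := by
    field_simp
    norm_num; ring
  rw [e2, le_div_iff₀ (by positivity)]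
  have hw3 : w^2 ≤ 9 := by nlinarith
  have : (1 - s^2) * T * w^2 ≤ 1 * (3*s) * 9 := by
    gcongr
    nlinarith [sq_nonneg s]
  linarith

lemma th_value (a x : ℝ) (ha : 0 < a) (ha3 : a ≤ 1/3) (hx : x ∈ Ioo (1-2*a) (1-a)) (ρ : ℝ)
    (hρ : ρ = 2*a/(3-4*a)) (t : ℝ) (ht : Real.cos t = Real.cos (thF ρ x)) :
    AnalyticAt ℂ (slitF ρ) (circleMap 0 1 t) ∧ slitF ρ (circleMap 0 1 t) = x := by
  obtain ⟨p1, p2, p3, p4, p5⟩ := th_basic a x ha ha3 hx ρ hρ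
  have hx0 : 0 < 1 + 2*x := by linarith [hx.1]
  have hT2 := th_T_sq ρ _ p3 p4 p2
  have hτ : 0 < 1 - ρ^2 := by nlinarith
  set s := (1-x)/(1+2*x) with hs
  have hsq : thT ρ x ^ 2 = (ρ^2 - s^2)/(1-ρ^2) := Real.sq_sqrt hT2.le
  have hcos : Real.cos t = (1 - thT ρ x^2)/(1 + thT ρ x^2) := by
    rw [ht, thF, Real.cos_two_mul, Real.cos_sq_arctan]
    field_simp; ring
  obtain ⟨q1, q2⟩ := mob_circle t _ hcos
  have hu : ((ρ:ℂ)^2 + (1 - (ρ:ℂ)^2) * ((1 - circleMap 0 1 t)/(1 + circleMap 0 1 t))^2) = ((s^2 : ℝ) : ℂ) := by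
    rw [q2]
    have : ρ^2 + (1-ρ^2) * (-(thT ρ x)^2) = s^2 := by
      rw [hsq]; field_simp; ring
    rw [← this]; push_cast; ring
  have hmem : ((s^2 : ℝ) : ℂ) ∈ Complex.slitPlane := by
    rw [Complex.ofReal_mem_slitPlane]; positivity
  refine ⟨slitF_analytic ρ _ q1 (by rw [hu]; exact hmem), ?_⟩
  have hS : slitS ρ (circleMap 0 1 t) = (s:ℂ) := by
    rw [slitS, hu, ← Complex.ofReal_log (by positivity), Real.log_pow]
    rw [show (((2:ℕ):ℝ) * Real.log s : ℝ) = 2 * Real.log s by norm_num]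
    push_cast
    rw [mul_div_cancel_left₀ _ (two_ne_zero), ← Complex.ofReal_exp, Real.exp_log p3]
  rw [slitF, hS]
  have : (1 - s)/(1+2*s) = x := by
    have h3 : 1 + 2*s = 3/(1+2*x) := by rw [hs]; field_simp; ring
    have h5 : s * (1+2*x) = 1 - x := by rw [hs]; exact div_mul_cancel₀ _ hx0.ne'
    have h6 : 1 + 2*s ≠ 0 := by positivity
    rw [div_eq_iff h6]; linarith
  exact_mod_cast congrArg (fun y : ℝ => (y:ℂ)) this

lemma th_range (a x : ℝ) (ha : 0 < a) (ha3 : a ≤ 1/3) (hx : x ∈ Ioo (1-2*a) (1-a)) (ρ : ℝ)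
    (hρ : ρ = 2*a/(3-4*a)) : thF ρ x ∈ Ioo 0 Real.pi := by
  obtain ⟨p1, p2, p3, p4, p5⟩ := th_basic a x ha ha3 hx ρ hρ
  have hT : 0 < thT ρ x := Real.sqrt_pos.mpr (th_T_sq ρ _ p3 p4 p2)
  have h1 := Real.arctan_lt_pi_div_two (thT ρ x)
  have h2 : 0 < Real.arctan (thT ρ x) := Real.arctan_pos.mpr hT
  exact ⟨by unfold thF; linarith, by unfold thF; linarith⟩

lemma th_measurable (ρ : ℝ) : Measurable (thF ρ) := by
  unfold thF thT; fun_prop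

lemma cov (a : ℝ) (ha : 0 < a) (ha3 : a ≤ 1/3) (ρ : ℝ)
    (hρ : ρ = 2*a/(3-4*a)) (F : ℝ → ENNReal) (hF : Measurable F) :
    ENNReal.ofReal (2/9) * ∫⁻ x in Ioo (1-2*a) (1-a), (F (thF ρ x) + F (2*Real.pi - thF ρ x)) ≤
      ∫⁻ t in Ioc 0 (2*Real.pi), F t := by
  choose! D hD hD2 using fun x hx => th_deriv a x ha ha3 hx ρ hρ
  set I := Ioo (1-2*a) (1-a) with hI
  have hmono : StrictMonoOn (thF ρ) I := by
    apply strictMonoOn_of_deriv_pos (convex_Ioo _ _)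
    · exact fun x hx => (hD x hx).continuousAt.continuousWithinAt
    · intro x hx
      rw [interior_Ioo] at hx
      rw [(hD x hx).deriv]; linarith [hD2 x hx]
  have c1 := lintegral_image_eq_lintegral_abs_deriv_mul (s := I) measurableSet_Ioo
    (fun x hx => (hD x hx).hasDerivWithinAt) hmono.injOn F
  have c2 := lintegral_image_eq_lintegral_abs_deriv_mul (s := I) (f := fun x => 2*Real.pi - thF ρ x)
    measurableSet_Ioo (fun x hx => ((hD x hx).const_sub (2*Real.pi)).hasDerivWithinAt)
    (fun x hx y hy h => hmono.injOn hx hy (by simpa using h)) F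
  have hm := th_measurable ρ
  have hF1 : Measurable (fun x => F (thF ρ x)) := hF.comp hm
  have hF2 : Measurable (fun x => F (2*Real.pi - thF ρ x)) := hF.comp (measurable_const.sub hm)
  rw [lintegral_add_left hF1, mul_add]
  have hpi := Real.pi_pos
  have d1 : ENNReal.ofReal (2/9) * ∫⁻ x in I, F (thF ρ x) ≤ ∫⁻ t in Ioo 0 Real.pi, F t := by
    calc _ ≤ ∫⁻ x in I, ENNReal.ofReal (|D x|) * F (thF ρ x) := by
            rw [← lintegral_const_mul _ hF1]
            apply setLIntegral_mono' measurableSet_Ioo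
            intro x hx
            gcongr
            exact (hD2 x hx).trans (le_abs_self _)
      _ = _ := c1.symm
      _ ≤ _ := lintegral_mono_set (by
            rintro _ ⟨x, hx, rfl⟩; exact th_range a x ha ha3 hx ρ hρ)
  have d2 : ENNReal.ofReal (2/9) * ∫⁻ x in I, F (2*Real.pi - thF ρ x) ≤
      ∫⁻ t in Ioo Real.pi (2*Real.pi), F t := by
    calc _ ≤ ∫⁻ x in I, ENNReal.ofReal (|-D x|) * F (2*Real.pi - thF ρ x) := by
            rw [← lintegral_const_mul _ hF2]
            apply setLIntegral_mono' measurableSet_Ioo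
            intro x hx
            gcongr
            rw [abs_neg]
            exact (hD2 x hx).trans (le_abs_self _)
      _ = _ := c2.symm
      _ ≤ _ := lintegral_mono_set (by
            rintro _ ⟨x, hx, rfl⟩
            have := th_range a x ha ha3 hx ρ hρ
            exact ⟨by linarith [this.2], by linarith [this.1]⟩)
  refine (add_le_add d1 d2).trans ?_
  rw [← lintegral_union measurableSet_Ioo]
  · apply lintegral_mono_set
    rintro t (ht | ht)
    · exact ⟨ht.1, by linarith [ht.2]⟩
    · exact ⟨by linarith [ht.1], ht.2.le⟩
  · rw [Set.disjoint_left]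
    intro t h1 h2
    linarith [h1.2, h2.1]

/-- abstract bound -/
lemma slit_main (a : ℝ) (ha : 0 < a) (ha3 : a ≤ 1/3) (H : ℂ → ℂ) (hH : AnalyticOnNhd ℂ H univ)
    (K : ℝ) (hK : 1 ≤ K) (h0 : 1 ≤ ‖H 0‖)
    (hb : ∀ w : ℂ, ‖w‖ < 1 → ‖1 - w‖^2 ≤ 6 * (1 - ‖w‖) → ‖H w‖ ≤ K)
    (hz : ∀ᵐ x : ℝ, H x ≠ 0) :
    ∫⁻ x in Ioo (1-2*a) (1-a), ENNReal.ofReal (Real.log K - Real.log ‖H x‖) ≤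
      ENNReal.ofReal (9/2 * Real.pi * Real.log K) := by
  set ρ := 2*a/(3-4*a) with hρ
  have hρ0 : 0 < ρ := div_pos (by linarith) (by linarith)
  have hρ1 : ρ^2 < 1 := by
    have : ρ ≤ 2/5 := by rw [hρ, div_le_iff₀ (by linarith)]; linarith
    nlinarith
  set r : ℕ → ℝ := fun n => 1 - 1/((n:ℝ)+2) with hr
  have hr0 : ∀ n, 0 < r n := fun n => by
    have : 1/((n:ℝ)+2) < 1 := by rw [div_lt_one (by positivity)]; linarith [Nat.cast_nonneg (α := ℝ) n]
    simp only [hr]; linarith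
  have hr1 : ∀ n, r n < 1 := fun n => by
    have : 0 < 1/((n:ℝ)+2) := by positivity
    simp only [hr]; linarith
  have hrt : Tendsto r atTop (𝓝 1) := by
    have : Tendsto (fun n : ℕ => 1/((n:ℝ)+2)) atTop (𝓝 0) := by
      have := (tendsto_one_div_add_atTop_nhds_zero_nat (𝕜 := ℝ)).comp (tendsto_add_atTop_nat 1)
      refine this.congr fun n => ?_
      simp; ring
    simpa [hr] using this.const_sub 1
  set g : ℂ → ℂ := fun z => H (slitF ρ z) with hg
  have hHc : Continuous H := continuous_iff_continuousAt.mpr fun z => (hH z trivial).continuousAt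
  have hgm : Measurable g := hHc.measurable.comp (slitF_measurable ρ)
  let F : ℕ → ℝ → ENNReal := fun n t => ENNReal.ofReal (Real.log K - Real.log ‖g (circleMap 0 (r n) t)‖)
  have hFm : ∀ n, Measurable (F n) := fun n => by
    have : Measurable (fun t => g (circleMap 0 (r n) t)) := hgm.comp (continuous_circleMap 0 (r n)).measurable
    exact ENNReal.measurable_ofReal.comp (measurable_const.sub (Real.measurable_log.comp this.norm))
  have hA : ∀ n, ∫⁻ t in Ioc 0 (2*Real.pi), F n t ≤ ENNReal.ofReal (2*Real.pi*Real.log K) := by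
    intro n
    have hball : ∀ z ∈ Metric.closedBall (0:ℂ) |r n|, ‖z‖ < 1 := by
      intro z hz
      rw [mem_closedBall_zero_iff, abs_of_pos (hr0 n)] at hz
      linarith [hr1 n]
    apply jensen_le g (r n) K (hr0 n)
    · intro z hz
      have h1 := hball z hz
      exact (hH _ trivial).comp (slitF_analytic ρ z (mobius_re z h1).1 (slit_mem ρ hρ1 z h1))
    · simp only [hg, slitF_zero]; exact h0
    · exact hK
    · intro z hz
      have h1 := hball z hz
      have h2 := slit_bound (slitS ρ z) (exp_half_log_re _ (slit_mem ρ hρ1 z h1))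
      exact hb _ h2.1 h2.2
  have hB := fun n => (cov a ha ha3 ρ hρ (F n) (hFm n)).trans (hA n)
  have hm := th_measurable ρ
  set I := Ioo (1-2*a) (1-a) with hI
  have hlim : ∀ x ∈ I, H x ≠ 0 → ∀ t, Real.cos t = Real.cos (thF ρ x) →
      Tendsto (fun n => F n t) atTop (𝓝 (ENNReal.ofReal (Real.log K - Real.log ‖H x‖))) := by
    intro x hx hne t ht
    obtain ⟨v1, v2⟩ := th_value a x ha ha3 hx ρ hρ t ht
    have t1 : Tendsto (fun n => circleMap 0 (r n) t) atTop (𝓝 (circleMap 0 1 t)) := by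
      have : Continuous (fun s : ℝ => circleMap 0 s t) := by unfold circleMap; fun_prop
      exact (this.tendsto 1).comp hrt
    have t2 : Tendsto (fun n => g (circleMap 0 (r n) t)) atTop (𝓝 (H x)) := by
      have := (hHc.continuousAt.comp v1.continuousAt : ContinuousAt (H ∘ slitF ρ) (circleMap 0 1 t))
      have := this.tendsto.comp t1
      simp only [Function.comp_apply, v2] at this
      exact this
    have t3 := (t2.norm.log (norm_ne_zero_iff.mpr hne)).const_sub (Real.log K)
    exact (ENNReal.continuous_ofReal.tendsto _).comp t3
  clear_value F
  have hfat := lintegral_liminf_le (μ := volume.restrict I) (u := atTop)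
    (f := fun n x => F n (thF ρ x) + F n (2*Real.pi - thF ρ x))
    (fun n => ((hFm n).comp hm).add ((hFm n).comp (measurable_const.sub hm)))
  have heq : ∫⁻ x in I, liminf (fun n => F n (thF ρ x) + F n (2*Real.pi - thF ρ x)) atTop =
      ∫⁻ x in I, 2 * ENNReal.ofReal (Real.log K - Real.log ‖H x‖) := by
    apply setLIntegral_congr_fun_ae measurableSet_Ioo
    filter_upwards [hz] with x hne hx
    have l1 := hlim x hx hne _ rfl
    have l2 := hlim x hx hne (2*Real.pi - thF ρ x) (Real.cos_two_pi_sub _)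
    have l3 := (l1.add l2).liminf_eq
    exact l3.trans (two_mul _).symm
  rw [heq, lintegral_const_mul' _ _ (by norm_num)] at hfat
  have hC : ∀ n, ∫⁻ x in I, (F n (thF ρ x) + F n (2*Real.pi - thF ρ x)) ≤
      ENNReal.ofReal (9 * Real.pi * Real.log K) := by
    intro n
    have h := hB n
    rw [mul_comm, ← ENNReal.le_div_iff_mul_le (by simp) (by simp),
      ← ENNReal.ofReal_div_of_pos (by norm_num)] at h
    convert h using 2
    ring
  have hD : liminf (fun n => ∫⁻ x in I, (F n (thF ρ x) + F n (2*Real.pi - thF ρ x))) atTop ≤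
      ENNReal.ofReal (9 * Real.pi * Real.log K) :=
    (liminf_le_liminf (Eventually.of_forall hC)).trans (by simp)
  have hE := hfat.trans hD
  rw [mul_comm, ← ENNReal.le_div_iff_mul_le (by simp) (by simp)] at hE
  refine hE.trans (le_of_eq ?_)
  rw [show (2:ENNReal) = ENNReal.ofReal 2 by simp, ← ENNReal.ofReal_div_of_pos (by norm_num)]
  congr 1; ring

theorem log_minus_integral_le (a : ℝ) (ha : a ∈ Set.Ioc (0 : ℝ) (1 / 3))
    (n : ℕ) (M : ℝ) (hM : 1 ≤ M)
    (A b : Fin (n + 1) → ℝ)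
    (hA : ∀ j, A j ∈ Set.Icc (1 : ℝ) M)
    (hb : ∀ j, b j = -1 ∨ b j = 0 ∨ b j = 1)
    (hb0 : b 0 = -1 ∨ b 0 = 1) :
    ∫ x in (1 - 2 * a)..(1 - a),
        max 0 (-(Real.log |∑ j : Fin (n + 1), b j * A j * x ^ (j : ℕ)|)) ≤
      (9 * Real.pi / Real.sqrt 2) * Real.log (4 * M) := by
  obtain ⟨ha0, ha3⟩ := ha
  set p : Polynomial ℝ := ∑ j : Fin (n+1), Polynomial.C (b j * A j) * Polynomial.X ^ (j:ℕ) with hp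
  have hpe : ∀ x : ℝ, p.eval x = ∑ j : Fin (n + 1), b j * A j * x ^ (j : ℕ) := by
    intro x; simp [hp, Polynomial.eval_finsetSum]
  let P : ℂ → ℂ := fun w => ∑ j : Fin (n+1), ((b j * A j : ℝ) : ℂ) * w ^ (j:ℕ)
  have hPe : ∀ x : ℝ, P x = ((p.eval x : ℝ) : ℂ) := by
    intro x; rw [hpe]; simp [P]
  have hcoef : ∀ j, |b j * A j| ≤ M := by
    intro j
    obtain ⟨h1, h2⟩ := hA j
    rw [abs_mul, abs_of_pos (by linarith : 0 < A j)]
    rcases hb j with h | h | h <;> rw [h] <;> simp <;> linarith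
  have hp0 : 1 ≤ |p.eval 0| := by
    have : p.eval 0 = b 0 * A 0 := by
      rw [hpe, Fin.sum_univ_succ]; simp
    rw [this, abs_mul, abs_of_pos (by linarith [(hA 0).1] : 0 < A 0)]
    rcases hb0 with h | h <;> rw [h] <;> simp <;> exact (hA 0).1
  have hPb : ∀ w : ℂ, ‖w‖ < 1 → ‖P w‖ * (1 - ‖w‖) ≤ M := by
    intro w hw
    have h1 : ‖P w‖ ≤ M * ∑ j ∈ Finset.range (n+1), ‖w‖^j := by
      rw [← Fin.sum_univ_eq_sum_range (fun j => ‖w‖^j), Finset.mul_sum]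
      refine (norm_sum_le _ _).trans (Finset.sum_le_sum fun j _ => ?_)
      rw [norm_mul, norm_pow, Complex.norm_real, Real.norm_eq_abs]
      gcongr
      exact hcoef j
    have h2 := geom_sum_mul_neg ‖w‖ (n+1)
    calc ‖P w‖ * (1 - ‖w‖) ≤ (M * ∑ j ∈ Finset.range (n+1), ‖w‖^j) * (1 - ‖w‖) :=
          mul_le_mul_of_nonneg_right h1 (by linarith)
      _ = M * (1 - ‖w‖^(n+1)) := by rw [mul_assoc, h2]
      _ ≤ M := by nlinarith [pow_nonneg (norm_nonneg w) (n+1)]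
  set H : ℂ → ℂ := fun w => P w * (1 - w)^2 with hH
  have hHe : ∀ x : ℝ, H x = (((p * (1 - Polynomial.X)^2).eval x : ℝ) : ℂ) := by
    intro x; simp [hH, hPe]
  have hq : p * (1 - Polynomial.X)^2 ≠ 0 := by
    intro h
    have := congrArg (Polynomial.eval 0) h
    simp at this
    rw [this] at hp0; simp at hp0
    linarith
  have key := slit_main a ha0 ha3 H (fun z _ => by
      have : Differentiable ℂ H := by simp only [hH, P]; fun_prop
      exact this.analyticAt z) (6*M) (by linarith) (by
      have := hHe 0
      simp only [Complex.ofReal_zero] at this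
      rw [this, Complex.norm_real, Real.norm_eq_abs]; simpa using hp0)
    (by
      intro w hw h6
      simp only [hH]
      rw [norm_mul, norm_pow]
      nlinarith [hPb w hw, mul_le_mul_of_nonneg_left h6 (norm_nonneg (P w))])
    (by
      have hf := Polynomial.finite_setOfPred_isRoot hq
      have := hf.measure_zero volume
      rw [ae_iff]
      refine measure_mono_null ?_ this
      intro x hx
      simp only [mem_ofPred_eq, not_not] at hx
      rw [hHe] at hx
      exact_mod_cast hx)
  have hlog4 : 0 ≤ Real.log (4*M) := Real.log_nonneg (by linarith)
  have hlog6 : 0 ≤ Real.log (6*M) := Real.log_nonneg (by linarith)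
  have hpi := Real.pi_pos
  have hcmp : 9/2 * Real.pi * Real.log (6*M) ≤ (9 * Real.pi / Real.sqrt 2) * Real.log (4 * M) := by
    have h1 : 5 * Real.log (6*M) ≤ 7 * Real.log (4*M) := by
      have : Real.log ((6*M)^5) ≤ Real.log ((4*M)^7) := by
        apply Real.log_le_log (by positivity)
        have : M^5 ≤ M^7 := pow_le_pow_right₀ hM (by norm_num)
        have : 0 < M^5 := by positivity
        rw [mul_pow, mul_pow]; norm_num; linarith
      rw [Real.log_pow, Real.log_pow] at this
      exact_mod_cast this
    have h2 : (7/5 : ℝ) ≤ Real.sqrt 2 := Real.le_sqrt_of_sq_le (by norm_num)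
    have h3 : 9 * Real.pi / Real.sqrt 2 = 9/2 * Real.pi * Real.sqrt 2 := by
      rw [div_eq_iff (by positivity), mul_assoc, Real.mul_self_sqrt (by norm_num)]; ring
    rw [h3, mul_assoc _ (Real.sqrt 2)]
    apply mul_le_mul_of_nonneg_left _ (by positivity)
    nlinarith
  refine le_trans ?_ hcmp
  rw [intervalIntegral.integral_of_le (by linarith), integral_Ioc_eq_integral_Ioo]
  have hnn : ∀ x : ℝ, 0 ≤ max 0 (-(Real.log |∑ j : Fin (n + 1), b j * A j * x ^ (j : ℕ)|)) :=
    fun x => le_max_left _ _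
  rw [integral_eq_lintegral_of_nonneg_ae (Eventually.of_forall hnn)]
  · apply ENNReal.toReal_le_of_le_ofReal (by positivity)
    refine le_trans ?_ key
    apply setLIntegral_mono' measurableSet_Ioo
    intro x hx
    apply ENNReal.ofReal_le_ofReal
    rw [hHe, Complex.norm_real, Real.norm_eq_abs, ← hpe]
    simp only [Polynomial.eval_mul, Polynomial.eval_pow, Polynomial.eval_sub, Polynomial.eval_one, Polynomial.eval_X, abs_mul]
    have hx1 : 0 < 1 - x := by linarith [hx.2]
    have hx2 : 1 - x ≤ 1 := by linarith [hx.1]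
    by_cases h0 : p.eval x = 0
    · simp [h0, hlog6]
    have hlp : 0 < |p.eval x| := abs_pos.mpr h0
    rw [Real.log_mul hlp.ne' (by positivity), abs_of_pos (by positivity : 0 < (1-x)^2)]
    have hl2 : Real.log ((1-x)^2) ≤ 0 := Real.log_nonpos (by positivity) (by nlinarith)
    apply max_le
    · have hb1 := hPb x (by rw [Complex.norm_real, Real.norm_eq_abs, abs_of_pos (by linarith [hx.1])]; linarith)
      rw [hPe, Complex.norm_real, Complex.norm_real, Real.norm_eq_abs, Real.norm_eq_abs,
        abs_of_pos (by linarith [hx.1] : 0 < x)] at hb1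
      rw [← Real.log_mul hlp.ne' (by positivity), sub_nonneg]
      apply Real.log_le_log (by positivity)
      nlinarith [mul_pos hlp hx1]
    · linarith
  · have : Continuous (fun x : ℝ => ∑ j : Fin (n + 1), b j * A j * x ^ (j : ℕ)) := by fun_prop
    have h2 : Measurable (fun x : ℝ => max 0 (-(Real.log |∑ j : Fin (n + 1), b j * A j * x ^ (j : ℕ)|))) :=
      measurable_const.max (Real.measurable_log.comp this.abs.measurable).neg
    exact h2.aestronglyMeasurable
end

section
/- Let a ∈ (0, 1/3] and I_a := (1−2a, 1−a). Let n ≥ 0 be an integer, M ≥ 1, and let P be a polynomial of the form P(x) = Σ_{j=0}^{n} b_j a_j x^j with a_j ∈ [1, M], b_j ∈ {−1, 0, 1} for all j, and b_0 ∈ {−1, 1}. Then the geometric mean of |P| on I_a satisfies ‖P‖_{L_0(I_a)} := exp( (1/a) ∫_{1−2a}^{1−a} log|P(x)| dx ) ≥ exp( −c_1 log(4M)/a ), where c_1 := 9π/√2. -/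
open MeasureTheory Set Filter Topology

lemma gm_jensen (h : ℂ → ℂ) (K : ℝ) (hK : 1 ≤ K)
    (hd : DifferentiableOn ℂ h (Metric.ball 0 1))
    (hbd : ∀ w ∈ Metric.ball (0:ℂ) 1, ‖h w‖ ≤ K) (h0 : 1 ≤ ‖h 0‖)
    (r : ℝ) (hr0 : 0 < r) (hr1 : r < 1) :
    ∫⁻ θ in Ioc 0 (2 * Real.pi), ENNReal.ofReal (Real.log K - Real.log ‖h (circleMap 0 r θ)‖)
      ≤ ENNReal.ofReal (2 * Real.pi * Real.log K) := by
  have hpi := Real.pi_pos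
  have hsub : Metric.closedBall (0:ℂ) |r| ⊆ Metric.ball 0 1 := by
    rw [abs_of_pos hr0]; exact Metric.closedBall_subset_ball hr1
  have hana : AnalyticOnNhd ℂ h (Metric.closedBall 0 |r|) :=
    (hd.analyticOnNhd Metric.isOpen_ball).mono hsub
  have hJ := hana.circleAverage_log_norm hr0.ne' (by intro h'; simp [h'] at h0; linarith)
  have hsum : 0 ≤ ∑ᶠ u, (MeromorphicOn.divisor h (Metric.closedBall 0 |r|) u : ℝ)
      * Real.log (r * ‖0 - u‖⁻¹) := by
    apply finsum_nonneg
    intro u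
    by_cases hu : u ∈ Metric.closedBall (0:ℂ) |r|
    · apply mul_nonneg
      · have := MeromorphicOn.AnalyticOnNhd.divisor_nonneg hana u
        exact_mod_cast this
      · by_cases hu0 : u = 0
        · simp [hu0]
        · have hu' : ‖u‖ ≤ r := by simpa [abs_of_pos hr0] using hu
          have : 0 < ‖u‖ := norm_pos_iff.mpr hu0
          apply Real.log_nonneg
          rw [zero_sub, norm_neg, ← div_eq_mul_inv, le_div_iff₀ this]; linarith
    · simp [hu]
  have hint : CircleIntegrable (fun z => Real.log ‖h z‖) 0 r :=
    (hana.mono Metric.sphere_subset_closedBall).meromorphicOn.circleIntegrable_log_norm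
  have hge : 0 ≤ ∫ θ in (0:ℝ)..2 * Real.pi, Real.log ‖h (circleMap 0 r θ)‖ := by
    have : 0 ≤ Real.circleAverage (fun z => Real.log ‖h z‖) 0 r := by
      rw [hJ]; exact add_nonneg hsum (Real.log_nonneg h0)
    rw [Real.circleAverage_def, smul_eq_mul] at this
    exact nonneg_of_mul_nonneg_right this (by positivity)
  have hint2 : IntervalIntegrable (fun θ => Real.log ‖h (circleMap 0 r θ)‖) volume 0 (2*Real.pi) := hint
  have hint3 : IntervalIntegrable (fun θ => Real.log K - Real.log ‖h (circleMap 0 r θ)‖) volume 0 (2*Real.pi) :=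
    (intervalIntegrable_const).sub hint2
  rw [← ofReal_integral_eq_lintegral_ofReal]
  · apply ENNReal.ofReal_le_ofReal
    rw [← intervalIntegral.integral_of_le (by positivity), intervalIntegral.integral_sub intervalIntegrable_const hint2]
    simp; linarith
  · exact (intervalIntegrable_iff_integrableOn_Ioc_of_le (by positivity)).1 hint3
  · refine Eventually.of_forall fun θ => ?_
    have hb := hbd (circleMap 0 r θ) (by simp [abs_of_pos hr0, hr1])
    simp only [Pi.zero_apply, sub_nonneg]
    rcases (norm_nonneg (h (circleMap 0 r θ))).eq_or_lt with h1 | h1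
    · rw [← h1, Real.log_zero]; exact Real.log_nonneg hK
    · exact Real.log_le_log h1 hb

lemma gm_fatou (h : ℂ → ℂ) (hm : Measurable h) (K : ℝ) (hK : 1 ≤ K)
    (hd : DifferentiableOn ℂ h (Metric.ball 0 1))
    (hbd : ∀ w ∈ Metric.ball (0:ℂ) 1, ‖h w‖ ≤ K) (h0 : 1 ≤ ‖h 0‖)
    (p q : ℝ) (t t' : ℝ → ℝ) (htm : Measurable t) (g : ℝ → ℂ)
    (ht : ∀ x ∈ Ioo p q, HasDerivAt t (t' x) x)
    (ht' : ∀ x ∈ Ioo p q, 1 / 6 ≤ t' x)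
    (htr : ∀ x ∈ Ioo p q, t x ∈ Ioo 0 Real.pi)
    (hc1 : ∀ x ∈ Ioo p q, Tendsto h (𝓝 (circleMap 0 1 (t x))) (𝓝 (g x)))
    (hc2 : ∀ x ∈ Ioo p q, Tendsto h (𝓝 (circleMap 0 1 (2 * Real.pi - t x))) (𝓝 (g x)))
    (hg : ∀ᵐ x ∂(volume.restrict (Ioo p q)), g x ≠ 0) :
    ∫⁻ x in Ioo p q, ENNReal.ofReal (Real.log K - Real.log ‖g x‖)
      ≤ ENNReal.ofReal (6 * Real.pi * Real.log K) := by
  have hpi := Real.pi_pos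
  have hlK := Real.log_nonneg hK
  set F : ℝ → ℝ → ENNReal := fun r θ =>
    ENNReal.ofReal (Real.log K - Real.log ‖h (circleMap 0 r θ)‖) with hF
  have hmono : StrictMonoOn t (Ioo p q) := by
    apply strictMonoOn_of_deriv_pos (convex_Ioo p q)
    · exact fun x hx => (ht x hx).continuousAt.continuousWithinAt
    · intro x hx
      rw [interior_Ioo] at hx
      rw [(ht x hx).deriv]; linarith [ht' x hx]
  have hFm : ∀ r, Measurable (F r) := by
    intro r
    have : Measurable (fun θ => circleMap 0 r θ) := (continuous_circleMap 0 r).measurable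
    exact (measurable_const.sub (Real.measurable_log.comp (hm.comp this).norm)).ennreal_ofReal
  have hmeasI : MeasurableSet (Ioo p q) := measurableSet_Ioo
  have key : ∀ r, 0 < r → r < 1 →
      ∫⁻ x in Ioo p q, (F r (t x) + F r (2 * Real.pi - t x))
        ≤ 6 * ENNReal.ofReal (2 * Real.pi * Real.log K) := by
    intro r hr0 hr1
    have hj := gm_jensen h K hK hd hbd h0 r hr0 hr1
    have e1 := lintegral_image_eq_lintegral_abs_deriv_mul hmeasI
      (fun x hx => (ht x hx).hasDerivWithinAt) hmono.injOn (F r)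
    have e2 := lintegral_image_eq_lintegral_abs_deriv_mul (f := fun x => 2 * Real.pi - t x) hmeasI
      (fun x hx => ((ht x hx).const_sub (2 * Real.pi)).hasDerivWithinAt)
      (fun x hx y hy hxy => hmono.injOn hx hy (by simp only at hxy; linarith)) (F r)
    have hle : ∀ u : ℝ → ℝ, (∀ x ∈ Ioo p q, 1 / 6 ≤ |u x|) → ∀ v : ℝ → ENNReal, Measurable v →
        ∫⁻ x in Ioo p q, v x ≤ 6 * ∫⁻ x in Ioo p q, ENNReal.ofReal |u x| * v x := by
      intro u hu v hv
      have : ∫⁻ x in Ioo p q, ENNReal.ofReal (1/6) * v x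
          ≤ ∫⁻ x in Ioo p q, ENNReal.ofReal |u x| * v x := by
        apply setLIntegral_mono' hmeasI
        intro x hx
        gcongr
        exact hu x hx
      rw [lintegral_const_mul _ hv] at this
      calc ∫⁻ x in Ioo p q, v x = 6 * (ENNReal.ofReal (1/6) * ∫⁻ x in Ioo p q, v x) := by
            rw [← mul_assoc]
            have : (6:ENNReal) * ENNReal.ofReal (1/6) = 1 := by
              rw [show (6:ENNReal) = ENNReal.ofReal 6 by simp, ← ENNReal.ofReal_mul (by norm_num)]
              norm_num
            rw [this, one_mul]
        _ ≤ _ := by gcongr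
    have hm2 : Measurable (fun x => 2 * Real.pi - t x) := measurable_const.sub htm
    have l1 := hle t' (fun x hx => (ht' x hx).trans (le_abs_self _)) (fun x => F r (t x)) ((hFm r).comp htm)
    have l2 := hle (fun x => - t' x) (fun x hx => by
      rw [abs_neg]; exact (ht' x hx).trans (le_abs_self _)) (fun x => F r (2 * Real.pi - t x))
      ((hFm r).comp hm2)
    rw [← e1] at l1
    rw [← e2] at l2
    rw [lintegral_add_left (f := fun x => F r (t x)) ((hFm r).comp htm)]
    refine (add_le_add l1 l2).trans ?_
    rw [← mul_add]
    gcongr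
    rw [← lintegral_union]
    · refine le_trans (lintegral_mono_set ?_) hj
      rintro y (⟨x, hx, rfl⟩ | ⟨x, hx, rfl⟩)
      · have := htr x hx
        exact ⟨this.1, by linarith [this.2]⟩
      · have := htr x hx
        exact ⟨by simp only; linarith [this.2], by simp only; linarith [this.1]⟩
    · have hinj : InjOn (fun x => 2 * Real.pi - t x) (Ioo p q) :=
        (fun x hx y hy hxy => hmono.injOn hx hy (by simp only at hxy; linarith))
      apply MeasureTheory.measurable_image_of_fderivWithin hmeasI
        (fun x hx => ((ht x hx).const_sub (2 * Real.pi)).hasDerivWithinAt.hasFDerivWithinAt) hinj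
    · rw [Set.disjoint_left]
      rintro y ⟨x, hx, rfl⟩ ⟨x', hx', h2⟩
      have := htr x hx
      have := htr x' hx'
      simp only [mem_Ioo] at *
      linarith
  set ρ : ℕ → ℝ := fun k => 1 - 1 / ((k:ℝ) + 2) with hρ
  have hρ0 : ∀ k, 0 < ρ k := by
    intro k
    have : 1 / ((k:ℝ) + 2) < 1 := by rw [div_lt_one (by positivity)]; have : (0:ℝ) ≤ k := by positivity
                                     linarith
    simp only [hρ]; linarith
  have hρ1 : ∀ k, ρ k < 1 := by
    intro k
    have : 0 < 1 / ((k:ℝ) + 2) := by positivity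
    simp only [hρ]; linarith
  have hρt : Tendsto ρ atTop (𝓝 1) := by
    have : Tendsto (fun k : ℕ => 1 / ((k:ℝ) + 2)) atTop (𝓝 0) := by
      apply tendsto_const_nhds.div_atTop
      exact tendsto_atTop_add_const_right _ _ tendsto_natCast_atTop_atTop
    have h3 := (tendsto_const_nhds (x := (1:ℝ))).sub this
    rw [sub_zero] at h3
    exact h3
  have hm2 : Measurable (fun x => 2 * Real.pi - t x) := measurable_const.sub htm
  have hlim : ∀ θ, ∀ z : ℂ, z ≠ 0 → Tendsto h (𝓝 (circleMap 0 1 θ)) (𝓝 z) →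
      Tendsto (fun k => F (ρ k) θ) atTop (𝓝 (ENNReal.ofReal (Real.log K - Real.log ‖z‖))) := by
    intro θ z hz hh
    have hc : Tendsto (fun k => circleMap 0 (ρ k) θ) atTop (𝓝 (circleMap 0 1 θ)) := by
      have : Continuous (fun r : ℝ => circleMap 0 r θ) := by unfold circleMap; fun_prop
      exact (this.tendsto 1).comp hρt
    apply ENNReal.tendsto_ofReal
    apply tendsto_const_nhds.sub
    apply Tendsto.log _ (norm_ne_zero_iff.mpr hz)
    exact (hh.comp hc).norm
  have hfat := lintegral_liminf_le (μ := volume.restrict (Ioo p q)) (u := atTop)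
    (f := fun k x => F (ρ k) (t x) + F (ρ k) (2 * Real.pi - t x))
    (fun k => ((hFm _).comp htm).add ((hFm _).comp hm2))
  have hup : liminf (fun k => ∫⁻ x in Ioo p q, (F (ρ k) (t x) + F (ρ k) (2 * Real.pi - t x))) atTop
      ≤ 6 * ENNReal.ofReal (2 * Real.pi * Real.log K) := by
    refine liminf_le_of_le (by isBoundedDefault) ?_
    intro b hb
    obtain ⟨k, hk⟩ := hb.exists
    exact hk.trans (key _ (hρ0 k) (hρ1 k))
  have hlow : 2 * ∫⁻ x in Ioo p q, ENNReal.ofReal (Real.log K - Real.log ‖g x‖)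
      ≤ 6 * ENNReal.ofReal (2 * Real.pi * Real.log K) := by
    rw [← lintegral_const_mul' _ _ (by simp)]
    refine le_trans (lintegral_mono_ae ?_) (hfat.trans hup)
    filter_upwards [hg, ae_restrict_mem hmeasI] with x hx hxI
    have := (hlim _ _ hx (hc1 x hxI)).add (hlim _ _ hx (hc2 x hxI))
    rw [this.liminf_eq, two_mul]
  have h12 : (6:ENNReal) * ENNReal.ofReal (2 * Real.pi * Real.log K)
      = 2 * ENNReal.ofReal (6 * Real.pi * Real.log K) := by
    rw [show (6:ENNReal) = ENNReal.ofReal 6 by simp, show (2:ENNReal) = ENNReal.ofReal 2 by simp,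
      ← ENNReal.ofReal_mul (by norm_num), ← ENNReal.ofReal_mul (by norm_num)]
    congr 1; ring
  rw [h12] at hlow
  exact (ENNReal.mul_le_mul_iff_right (by simp) (by simp)).1 hlow

noncomputable def gmSq (z : ℂ) : ℂ := Complex.exp (Complex.log z / 2)

noncomputable def gmS (e T : ℝ) (w : ℂ) : ℂ :=
  gmSq ((e:ℂ) ^ 2 + ((T:ℂ) * ((1 - w) / (1 + w))) ^ 2)

noncomputable def gmPhi (e T : ℝ) (w : ℂ) : ℂ :=
  (1 - gmS e T w) / (1 + 3 * gmS e T w)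

lemma gmSq_re (z : ℂ) (hz : z ∈ Complex.slitPlane) : 0 < (gmSq z).re := by
  unfold gmSq
  rw [Complex.exp_re]
  apply mul_pos (Real.exp_pos _)
  have h1 : (Complex.log z / 2).im = z.arg / 2 := by
    rw [show (2:ℂ) = ((2:ℝ):ℂ) by norm_num, Complex.div_ofReal_im, Complex.log_im]
  rw [h1]
  have h2 := Complex.neg_pi_lt_arg z
  have h3 : z.arg < Real.pi := lt_of_le_of_ne (Complex.arg_le_pi z) (Complex.mem_slitPlane_iff_arg.1 hz).1
  apply Real.cos_pos_of_mem_Ioo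
  constructor <;> linarith

lemma gmSq_ofReal (s : ℝ) (hs : 0 < s) : gmSq ((s:ℂ) ^ 2) = s := by
  unfold gmSq
  rw [← Complex.ofReal_pow, ← Complex.ofReal_log (by positivity), Real.log_pow]
  push_cast
  rw [mul_div_cancel_left₀ _ (by norm_num), ← Complex.ofReal_exp, Real.exp_log hs]

lemma gm_slit (e : ℝ) (T : ℂ) (hT : 0 < T.re) : (e:ℂ) ^ 2 + T ^ 2 ∈ Complex.slitPlane := by
  rw [Complex.mem_slitPlane_iff]
  simp only [pow_two, Complex.add_re, Complex.mul_re, Complex.add_im, Complex.mul_im,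
    Complex.ofReal_re, Complex.ofReal_im]
  by_cases h : T.im = 0
  · left; rw [h]; nlinarith [mul_pos hT hT, mul_self_nonneg e]
  · right
    have : T.re * T.im ≠ 0 := mul_ne_zero hT.ne' h
    intro h'; apply this; linarith

lemma gm_cayley (w : ℂ) (hw : ‖w‖ < 1) : 1 + w ≠ 0 ∧ 0 < ((1 - w) / (1 + w)).re := by
  have hne : 1 + w ≠ 0 := by
    intro h
    have : w = -1 := by linear_combination h
    rw [this] at hw; simp at hw
  refine ⟨hne, ?_⟩
  have hn : 0 < Complex.normSq (1 + w) := Complex.normSq_pos.mpr hne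
  have hw2 : w.re ^ 2 + w.im ^ 2 < 1 := by
    have := Complex.sq_norm w
    rw [Complex.normSq_apply] at this
    nlinarith [norm_nonneg w]
  rw [Complex.div_re, ← add_div]
  apply div_pos _ hn
  simp
  nlinarith

lemma gmS_re (e T : ℝ) (hT : 0 < T) (w : ℂ) (hw : ‖w‖ < 1) : 0 < (gmS e T w).re := by
  apply gmSq_re
  apply gm_slit
  rw [Complex.re_ofReal_mul]
  exact mul_pos hT (gm_cayley w hw).2

lemma gm_den (S : ℂ) (hS : 0 < S.re) : 1 + 3 * S ≠ 0 := by
  intro h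
  have := congrArg Complex.re h
  simp at this
  linarith

lemma gmS_diff (e T : ℝ) (w : ℂ) (hw : 1 + w ≠ 0)
    (hs : (e:ℂ) ^ 2 + ((T:ℂ) * ((1 - w) / (1 + w))) ^ 2 ∈ Complex.slitPlane) :
    DifferentiableAt ℂ (gmPhi e T) w := by
  have h1 : DifferentiableAt ℂ (gmS e T) w := by
    unfold gmS gmSq
    apply DifferentiableAt.cexp
    apply DifferentiableAt.div_const
    refine DifferentiableAt.clog (f := fun x : ℂ => (e:ℂ) ^ 2 + ((T:ℂ) * ((1 - x) / (1 + x))) ^ 2) ?_ hs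
    fun_prop (disch := assumption)
  unfold gmPhi
  apply DifferentiableAt.div
  · fun_prop
  · fun_prop
  · exact gm_den _ (gmSq_re _ hs)

lemma gmPhi_bound (S : ℂ) (hS : 0 < S.re) :
    ‖(1 - S) / (1 + 3 * S)‖ < 1 ∧
    ‖1 - (1 - S) / (1 + 3 * S)‖ ^ 2 ≤ 4 * (1 - ‖(1 - S) / (1 + 3 * S)‖) := by
  have hd := gm_den S hS
  have hn : 0 < ‖1 + 3 * S‖ := norm_pos_iff.mpr hd
  have e1 : 1 - (1 - S) / (1 + 3 * S) = 4 * S / (1 + 3 * S) := by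
    rw [eq_div_iff hd, sub_mul, div_mul_cancel₀ _ hd]; ring
  rw [e1]
  have a1 : ‖1 + 3 * S‖ ^ 2 = (1 + 3 * S.re) ^ 2 + 9 * S.im ^ 2 := by
    rw [Complex.sq_norm, Complex.normSq_apply]; simp; ring
  have a2 : ‖1 - S‖ ^ 2 = (1 - S.re) ^ 2 + S.im ^ 2 := by
    rw [Complex.sq_norm, Complex.normSq_apply]; simp; ring
  have a3 : ‖4 * S‖ ^ 2 = 16 * (S.re ^ 2 + S.im ^ 2) := by
    rw [Complex.sq_norm, Complex.normSq_apply]; simp; ring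
  set z := ‖(1 - S) / (1 + 3 * S)‖ with hz
  have hz0 : 0 ≤ z := norm_nonneg _
  have hz2 : z ^ 2 * ‖1 + 3 * S‖ ^ 2 = ‖1 - S‖ ^ 2 := by
    rw [hz, norm_div, div_pow, div_mul_cancel₀ _ (by positivity)]
  have hn2 : 0 < ‖1 + 3 * S‖ ^ 2 := by positivity
  have hzlt : z < 1 := by
    by_contra hcon
    push Not at hcon
    have : 1 ≤ z ^ 2 := by nlinarith
    nlinarith [sq_nonneg S.im, mul_pos hS hS]
  refine ⟨hzlt, ?_⟩
  have : ‖4 * S / (1 + 3 * S)‖ ^ 2 ≤ 2 * (1 - z ^ 2) := by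
    rw [norm_div, div_pow, div_le_iff₀ hn2]
    nlinarith
  nlinarith

lemma gm_circle (u : ℝ) : 1 + circleMap 0 1 (2 * Real.arctan u) ≠ 0 ∧
    (1 - circleMap 0 1 (2 * Real.arctan u)) / (1 + circleMap 0 1 (2 * Real.arctan u))
      = -(Complex.I * u) := by
  set w := circleMap 0 1 (2 * Real.arctan u) with hw
  have hc : 0 < Real.cos (Real.arctan u) := Real.cos_arctan_pos u
  have hs : Real.sin (Real.arctan u) = u * Real.cos (Real.arctan u) := by
    have := Real.tan_arctan u
    rw [Real.tan_eq_sin_div_cos, div_eq_iff hc.ne'] at this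
    exact this
  set c := Real.cos (Real.arctan u)
  have hcs : c ^ 2 * (1 + u ^ 2) = 1 := by
    have := Real.sin_sq_add_cos_sq (Real.arctan u)
    rw [hs] at this; linarith
  have hw' : w = ((c:ℂ) + (u * c : ℂ) * Complex.I) ^ 2 := by
    rw [hw, circleMap]
    have : Complex.exp ((2 * Real.arctan u : ℝ) * Complex.I) = (Complex.exp ((Real.arctan u : ℝ) * Complex.I)) ^ 2 := by
      rw [← Complex.exp_nat_mul]; push_cast; ring_nf
    rw [this, Complex.exp_mul_I, ← Complex.ofReal_cos, ← Complex.ofReal_sin, hs, Complex.ofReal_mul,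
      zero_add, Complex.ofReal_one, one_mul]
  have hcsC : (c:ℂ) ^ 2 * (1 + (u:ℂ) ^ 2) = 1 := by exact_mod_cast hcs
  have key : w * (1 - Complex.I * u) = 1 + Complex.I * u := by
    rw [hw']
    linear_combination (1 + Complex.I * u) * hcsC + (- c^2*u^3*Complex.I - c^2*u^2) * Complex.I_sq
  have hne : 1 + w ≠ 0 := by
    intro h
    have : w = -1 := by linear_combination h
    rw [this] at key
    have : (2:ℂ) = 0 := by linear_combination -key
    norm_num at this
  refine ⟨hne, ?_⟩
  rw [div_eq_iff hne]
  linear_combination -key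

lemma gmPhi_tendsto (e T s u : ℝ) (hs : 0 < s) (hu : e ^ 2 - (T * u) ^ 2 = s ^ 2) :
    Tendsto (gmPhi e T) (𝓝 (circleMap 0 1 (2 * Real.arctan u)))
      (𝓝 (((1 - s) / (1 + 3 * s) : ℝ) : ℂ)) := by
  obtain ⟨h1, h2⟩ := gm_circle u
  have h3 : (e:ℂ) ^ 2 + ((T:ℂ) * ((1 - circleMap 0 1 (2 * Real.arctan u)) /
      (1 + circleMap 0 1 (2 * Real.arctan u)))) ^ 2 = (s:ℂ) ^ 2 := by
    rw [h2]
    have : (e:ℂ) ^ 2 - (T * u) ^ 2 = s ^ 2 := by exact_mod_cast hu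
    linear_combination this + T ^ 2 * u ^ 2 * Complex.I_sq
  have h4 := (gmS_diff e T _ h1 (by
    rw [h3, ← Complex.ofReal_pow, Complex.ofReal_mem_slitPlane]; positivity)).continuousAt.tendsto
  convert h4 using 2
  unfold gmPhi gmS
  rw [h3, gmSq_ofReal s hs]
  push_cast; rfl

lemma gmPhi_measurable (e T : ℝ) : Measurable (gmPhi e T) := by
  unfold gmPhi gmS gmSq
  fun_prop

lemma gm_poly_bound (n : ℕ) (M : ℝ) (c : Fin (n + 1) → ℝ) (hM : 0 ≤ M) (hc : ∀ j, |c j| ≤ M)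
    (z : ℂ) (hz : ‖z‖ < 1) :
    ‖∑ j : Fin (n + 1), (c j : ℂ) * z ^ (j : ℕ)‖ ≤ M / (1 - ‖z‖) := by
  calc ‖∑ j : Fin (n + 1), (c j : ℂ) * z ^ (j : ℕ)‖
      ≤ ∑ j : Fin (n + 1), M * ‖z‖ ^ (j : ℕ) := by
        refine (norm_sum_le _ _).trans (Finset.sum_le_sum fun j _ => ?_)
        rw [norm_mul, norm_pow, Complex.norm_real]
        exact mul_le_mul_of_nonneg_right (hc j) (by positivity)
    _ = M * ∑ j ∈ Finset.range (n + 1), ‖z‖ ^ j := by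
        rw [← Finset.mul_sum, Fin.sum_univ_eq_sum_range (fun j => ‖z‖ ^ j)]
    _ ≤ M * (1 - ‖z‖)⁻¹ := by
        gcongr
        rw [← tsum_geometric_of_lt_one (norm_nonneg z) hz]
        exact (summable_geometric_of_lt_one (norm_nonneg z) hz).sum_le_tsum _ (fun i _ => by positivity)
    _ = _ := by rw [div_eq_mul_inv]

lemma gm_main (a : ℝ) (ha0 : 0 < a) (ha1 : a ≤ 1 / 3) (n : ℕ) (M : ℝ) (hM : 1 ≤ M)
    (c : Fin (n + 1) → ℝ) (hc : ∀ j, |c j| ≤ M) (hc0 : 1 ≤ |c 0|) :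
    ∫⁻ x in Ioo (1 - 2 * a) (1 - a), ENNReal.ofReal (Real.log (4 * M)
        - Real.log |∑ j : Fin (n + 1), c j * x ^ (j : ℕ)|)
      ≤ ENNReal.ofReal (6 * Real.pi * Real.log (4 * M)) := by
  set e : ℝ := a / (2 - 3 * a) with he
  have hden : 0 < 2 - 3 * a := by linarith
  have he0 : 0 < e := div_pos ha0 hden
  have he1 : e ≤ 1 / 3 := by rw [he, div_le_iff₀ hden]; linarith
  have hT1 : 0 < 1 - e ^ 2 := by nlinarith
  set T : ℝ := Real.sqrt (1 - e ^ 2) with hT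
  have hT0 : 0 < T := Real.sqrt_pos.mpr hT1
  have hTsq : T ^ 2 = 1 - e ^ 2 := Real.sq_sqrt hT1.le
  set Pc : ℂ → ℂ := fun z => ∑ j : Fin (n + 1), (c j : ℂ) * z ^ (j : ℕ) with hPc
  set Pr : ℝ → ℝ := fun x => ∑ j : Fin (n + 1), c j * x ^ (j : ℕ) with hPr
  have hPcr : ∀ x : ℝ, Pc x = (Pr x : ℂ) := by intro x; simp [hPc, hPr]
  set G : ℂ → ℂ := fun z => Pc z * (1 - z) ^ 2 with hG
  have hGd : Differentiable ℂ G := by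
    simp only [hG, hPc]; fun_prop
  set h : ℂ → ℂ := fun w => G (gmPhi e T w) with hh
  have hm : Measurable h := hGd.continuous.measurable.comp (gmPhi_measurable e T)
  have hd : DifferentiableOn ℂ h (Metric.ball 0 1) := by
    intro w hw
    have hw' : ‖w‖ < 1 := by simpa using hw
    have h1 := gm_cayley w hw'
    have h2 : DifferentiableAt ℂ (gmPhi e T) w := by
      apply gmS_diff e T w h1.1
      apply gm_slit
      rw [Complex.re_ofReal_mul]
      exact mul_pos hT0 h1.2
    exact ((hGd _).comp w h2).differentiableWithinAt
  have hbd : ∀ w ∈ Metric.ball (0:ℂ) 1, ‖h w‖ ≤ 4 * M := by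
    intro w hw
    have hw' : ‖w‖ < 1 := by simpa using hw
    obtain ⟨b1, b2⟩ := gmPhi_bound (gmS e T w) (gmS_re e T hT0 w hw')
    change ‖gmPhi e T w‖ < 1 at b1
    change ‖1 - gmPhi e T w‖ ^ 2 ≤ 4 * (1 - ‖gmPhi e T w‖) at b2
    have b3 := gm_poly_bound n M c (by linarith) hc _ b1
    simp only [hh, hG, norm_mul, norm_pow]
    have : 0 < 1 - ‖gmPhi e T w‖ := by linarith
    calc ‖Pc (gmPhi e T w)‖ * ‖1 - gmPhi e T w‖ ^ 2
        ≤ M / (1 - ‖gmPhi e T w‖) * (4 * (1 - ‖gmPhi e T w‖)) := by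
          apply mul_le_mul b3 b2 (by positivity)
          exact div_nonneg (by linarith) this.le
      _ = 4 * M := by field_simp
  have h0 : 1 ≤ ‖h 0‖ := by
    have e1 : gmPhi e T 0 = 0 := by
      have : gmS e T 0 = 1 := by
        unfold gmS
        have : (e:ℂ) ^ 2 + ((T:ℂ) * ((1 - 0) / (1 + 0))) ^ 2 = ((1:ℝ):ℂ) ^ 2 := by
          have : (T:ℂ) ^ 2 = 1 - (e:ℂ) ^ 2 := by exact_mod_cast hTsq
          simp [this]
        rw [this, gmSq_ofReal 1 one_pos]; simp
      simp [gmPhi, this]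
    have e2 : h 0 = (c 0 : ℂ) := by
      simp only [hh, hG, e1, hPc]
      rw [Fin.sum_univ_succ]
      simp
    rw [e2, Complex.norm_real]; exact hc0
  set S : ℝ → ℝ := fun x => (1 - x) / (1 + 3 * x) with hS
  set τ : ℝ → ℝ := fun x => Real.sqrt (e ^ 2 - S x ^ 2) with hτ
  have hden3 : ∀ x ∈ Ioo (1 - 2 * a) (1 - a), 0 < 1 + 3 * x := by
    intro x hx; linarith [hx.1]
  have hSp : ∀ x ∈ Ioo (1 - 2 * a) (1 - a), 0 < S x := by
    intro x hx
    exact div_pos (by linarith [hx.2]) (hden3 x hx)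
  have hSe : ∀ x ∈ Ioo (1 - 2 * a) (1 - a), S x < e := by
    intro x hx
    simp only [hS, he]
    rw [div_lt_div_iff₀ (hden3 x hx) hden]
    nlinarith [hx.1]
  have hS3 : ∀ x ∈ Ioo (1 - 2 * a) (1 - a), e ≤ 3 * S x := by
    intro x hx
    simp only [hS, he]
    rw [← mul_div_assoc, div_le_div_iff₀ hden (hden3 x hx)]
    nlinarith [hx.2]
  have hτp : ∀ x ∈ Ioo (1 - 2 * a) (1 - a), 0 < e ^ 2 - S x ^ 2 := by
    intro x hx
    nlinarith [hSp x hx, hSe x hx]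
  have hτ0 : ∀ x ∈ Ioo (1 - 2 * a) (1 - a), 0 < τ x := fun x hx => Real.sqrt_pos.mpr (hτp x hx)
  have hτs : ∀ x ∈ Ioo (1 - 2 * a) (1 - a), τ x ^ 2 = e ^ 2 - S x ^ 2 :=
    fun x hx => Real.sq_sqrt (hτp x hx).le
  set t : ℝ → ℝ := fun x => 2 * Real.arctan (τ x / T) with ht
  have htm : Measurable t := by
    simp only [ht, hτ, hS]; fun_prop
  set t' : ℝ → ℝ := fun x => 2 * (1 / (1 + (τ x / T) ^ 2) *
    ((-(2 * S x * (-4 / (1 + 3 * x) ^ 2))) / (2 * τ x) / T)) with ht'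
  have hder : ∀ x ∈ Ioo (1 - 2 * a) (1 - a), HasDerivAt t (t' x) x := by
    intro x hx
    have d1 : HasDerivAt S (-4 / (1 + 3 * x) ^ 2) x := by
      have n1 : HasDerivAt (fun x : ℝ => 1 - x) (-1) x := by
        simpa using (hasDerivAt_id x).const_sub 1
      have n2 : HasDerivAt (fun x : ℝ => 1 + 3 * x) 3 x := by
        simpa using ((hasDerivAt_id x).const_mul 3).const_add 1
      have := n1.div n2 (hden3 x hx).ne'
      exact this.congr_deriv (by congr 1; ring)
    have d2 : HasDerivAt (fun x => e ^ 2 - S x ^ 2) (-(2 * S x * (-4 / (1 + 3 * x) ^ 2))) x := by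
      have := (d1.pow 2).const_sub (e ^ 2)
      exact this.congr_deriv (by simp)
    have d3 := d2.sqrt (hτp x hx).ne'
    exact (d3.div_const T).arctan.const_mul 2
  have hder6 : ∀ x ∈ Ioo (1 - 2 * a) (1 - a), 1 / 6 ≤ t' x := by
    intro x hx
    have q1 := hden3 x hx
    have q2 := hSp x hx
    have q3 := hτ0 x hx
    have q4 := hτs x hx
    have q5 : 0 < 1 - S x ^ 2 := by nlinarith [hSe x hx]
    have q6 : 1 + (τ x / T) ^ 2 = (1 - S x ^ 2) / T ^ 2 := by
      rw [div_pow, q4, eq_div_iff (by positivity), add_mul, div_mul_cancel₀ _ (by positivity), hTsq]; ring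
    have q7 : t' x = 8 * T * S x / ((1 - S x ^ 2) * (1 + 3 * x) ^ 2 * τ x) := by
      simp only [ht']
      rw [q6]
      field_simp
      ring
    have q8 : τ x ≤ 3 * T * S x := by
      apply le_of_sq_le_sq _ (by positivity)
      rw [q4, mul_pow, mul_pow, hTsq]
      nlinarith [hS3 x hx, mul_pos q2 q2, mul_nonneg (sub_nonneg.mpr he1) (mul_pos q2 q2).le,
        mul_self_nonneg (S x * e)]
    have q9 : (1 + 3 * x) ^ 2 ≤ 16 := by nlinarith [hx.2]
    have q10 : (1 - S x ^ 2) * (1 + 3 * x) ^ 2 ≤ 16 := by nlinarith [sq_nonneg (S x), sq_nonneg (1 + 3 * x)]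
    rw [q7, le_div_iff₀ (by positivity)]
    nlinarith
  have htr : ∀ x ∈ Ioo (1 - 2 * a) (1 - a), t x ∈ Ioo 0 Real.pi := by
    intro x hx
    have : 0 < Real.arctan (τ x / T) := Real.arctan_pos.mpr (div_pos (hτ0 x hx) hT0)
    have h2 := Real.arctan_lt_pi_div_two (τ x / T)
    constructor
    · simp only [ht]; linarith
    · simp only [ht]; linarith
  have hSx : ∀ x ∈ Ioo (1 - 2 * a) (1 - a), (1 - S x) / (1 + 3 * S x) = x := by
    intro x hx
    have q1 := hden3 x hx
    have q2 := hSp x hx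
    rw [div_eq_iff (by positivity)]
    have q3 : S x * (1 + 3 * x) = 1 - x := div_mul_cancel₀ _ q1.ne'
    linear_combination -q3
  have hlim : ∀ x ∈ Ioo (1 - 2 * a) (1 - a), ∀ u : ℝ, (T * u) ^ 2 = τ x ^ 2 →
      Tendsto h (𝓝 (circleMap 0 1 (2 * Real.arctan u))) (𝓝 (G x)) := by
    intro x hx u hu
    have := gmPhi_tendsto e T (S x) u (hSp x hx) (by rw [hu, hτs x hx]; ring)
    rw [hSx x hx] at this
    exact (hGd.continuous.tendsto _).comp this
  have hc1 : ∀ x ∈ Ioo (1 - 2 * a) (1 - a), Tendsto h (𝓝 (circleMap 0 1 (t x))) (𝓝 (G x)) := by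
    intro x hx
    apply hlim x hx
    rw [mul_div_cancel₀ _ hT0.ne']
  have hc2 : ∀ x ∈ Ioo (1 - 2 * a) (1 - a),
      Tendsto h (𝓝 (circleMap 0 1 (2 * Real.pi - t x))) (𝓝 (G x)) := by
    intro x hx
    have := hlim x hx (-(τ x / T)) (by rw [mul_neg, mul_div_cancel₀ _ hT0.ne']; ring)
    have e3 : circleMap 0 1 (2 * Real.pi - t x) = circleMap 0 1 (2 * Real.arctan (-(τ x / T))) := by
      rw [Real.arctan_neg, ← periodic_circleMap 0 1 (2 * -Real.arctan (τ x / T))]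
      congr 1
      simp only [ht]; ring
    rw [e3]; exact this
  have hzero : {x : ℝ | Pr x = 0}.Finite := by
    set p : Polynomial ℝ := ∑ j : Fin (n + 1), Polynomial.C (c j) * Polynomial.X ^ (j : ℕ) with hp
    have hpe : ∀ x, p.eval x = Pr x := by
      intro x; simp [hp, hPr, Polynomial.eval_finsetSum]
    have hp0 : p ≠ 0 := by
      intro h'
      have := hpe 0
      rw [h'] at this
      simp only [hPr] at this
      rw [Fin.sum_univ_succ] at this
      simp at this
      rw [← this] at hc0
      norm_num at hc0
    refine (p.roots.toFinset.finite_toSet).subset ?_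
    intro x hx
    simp only [Finset.mem_coe, Multiset.mem_toFinset]
    rw [Polynomial.mem_roots hp0, Polynomial.IsRoot, hpe]; exact hx
  have hGx : ∀ x : ℝ, G x = ((Pr x * (1 - x) ^ 2 : ℝ) : ℂ) := by
    intro x; simp only [hG, hPcr]; push_cast; rfl
  have hg : ∀ᵐ x : ℝ ∂((volume : Measure ℝ).restrict (Ioo (1 - 2 * a) (1 - a))), G ((x : ℝ) : ℂ) ≠ 0 := by
    have h1 : ∀ᵐ x : ℝ, Pr x ≠ 0 := by
      rw [ae_iff]; simpa using hzero.measure_zero volume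
    filter_upwards [ae_restrict_of_ae h1, ae_restrict_mem measurableSet_Ioo] with x hx hxI
    rw [hGx]
    have : 1 - x ≠ 0 := by have := hxI.2; intro h'; linarith
    exact_mod_cast mul_ne_zero hx (pow_ne_zero 2 this)
  have main := gm_fatou h hm (4 * M) (by linarith) hd hbd h0 (1 - 2 * a) (1 - a) t t' htm
    (fun x => G x) hder hder6 htr hc1 hc2 hg
  refine le_trans (setLIntegral_mono' measurableSet_Ioo fun x hx => ?_) main
  apply ENNReal.ofReal_le_ofReal
  rw [hGx, Complex.norm_real, Real.norm_eq_abs]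
  change Real.log (4 * M) - Real.log |Pr x| ≤ _
  by_cases hP : Pr x = 0
  · simp [hP]
  · have hx1 : 0 < 1 - x := by linarith [hx.2]
    have hx2 : 1 - x ≤ 1 := by linarith [hx.1]
    have : |Pr x * (1 - x) ^ 2| ≤ |Pr x| := by
      rw [abs_mul, abs_of_pos (pow_pos hx1 2)]
      exact mul_le_of_le_one_right (abs_nonneg _) (pow_le_one₀ hx1.le hx2)
    have := Real.log_le_log (abs_pos.mpr (mul_ne_zero hP (pow_pos hx1 2).ne')) this
    linarith

/-- Geometric-mean lower bound: `‖P‖_{L_0(I_a)} ≥ exp(-c₁ log(4M)/a)` with `c₁ = 9π/√2`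
for `P(x) = ∑_{j=0}^n b_j a_j x^j` with `a_j ∈ [1,M]`, `b_j ∈ {-1,0,1}`, `b_0 ∈ {-1,1}`. -/
theorem geometric_mean_lower_bound (a : ℝ) (ha : a ∈ Set.Ioc (0 : ℝ) (1 / 3))
    (n : ℕ) (M : ℝ) (hM : 1 ≤ M)
    (A b : Fin (n + 1) → ℝ)
    (hA : ∀ j, A j ∈ Set.Icc (1 : ℝ) M)
    (hb : ∀ j, b j = -1 ∨ b j = 0 ∨ b j = 1)
    (hb0 : b 0 = -1 ∨ b 0 = 1) :
    Real.exp ((1 / a) * ∫ x in (1 - 2 * a)..(1 - a),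
        Real.log |∑ j : Fin (n + 1), b j * A j * x ^ (j : ℕ)|) ≥
      Real.exp (-(9 * Real.pi / Real.sqrt 2) * Real.log (4 * M) / a) := by
  obtain ⟨ha0, ha1⟩ := ha
  have hpi := Real.pi_pos
  have hL : 0 ≤ Real.log (4 * M) := Real.log_nonneg (by linarith)
  have hmain := gm_main a ha0 ha1 n M hM (fun j => b j * A j)
    (fun j => by
      have := hA j
      rw [abs_mul, abs_of_pos (by linarith [this.1] : 0 < A j)]
      rcases hb j with h | h | h <;> rw [h] <;> norm_num <;> linarith [this.1, this.2])
    (by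
      have := hA 0
      rw [abs_mul, abs_of_pos (by linarith [this.1] : 0 < A 0)]
      rcases hb0 with h | h <;> rw [h] <;> norm_num <;> linarith [this.1])
  set f : ℝ → ℝ := fun x => Real.log |∑ j : Fin (n + 1), b j * A j * x ^ (j : ℕ)| with hf
  have hsq : 6 ≤ 9 / Real.sqrt 2 := by
    rw [le_div_iff₀ (by positivity)]
    have : Real.sqrt 2 ≤ 3 / 2 := by
      rw [Real.sqrt_le_left (by norm_num)]; norm_num
    linarith
  have hle : 1 - 2 * a ≤ 1 - a := by linarith
  have key : -(6 * Real.pi * Real.log (4 * M)) ≤ ∫ x in (1 - 2 * a)..(1 - a), f x := by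
    by_cases hint : IntervalIntegrable f volume (1 - 2 * a) (1 - a)
    · have hio : IntegrableOn f (Ioo (1 - 2 * a) (1 - a)) :=
        ((intervalIntegrable_iff_integrableOn_Ioc_of_le hle).1 hint).mono_set Ioo_subset_Ioc_self
      have hico : IntegrableOn (fun _ : ℝ => Real.log (4 * M)) (Ioo (1 - 2 * a) (1 - a)) :=
        integrableOn_const (by simp)
      have hio2 : IntegrableOn (fun x => Real.log (4 * M) - f x) (Ioo (1 - 2 * a) (1 - a)) :=
        hico.sub hio
      have h1 : ∫ x in Ioo (1 - 2 * a) (1 - a), (Real.log (4 * M) - f x)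
          ≤ 6 * Real.pi * Real.log (4 * M) := by
        rw [integral_eq_lintegral_pos_part_sub_lintegral_neg_part hio2]
        have : (∫⁻ x in Ioo (1 - 2 * a) (1 - a), ENNReal.ofReal (Real.log (4 * M) - f x)).toReal
            ≤ 6 * Real.pi * Real.log (4 * M) :=
          ENNReal.toReal_le_of_le_ofReal (by positivity) hmain
        have h2 : 0 ≤ (∫⁻ x in Ioo (1 - 2 * a) (1 - a),
          ENNReal.ofReal (-(Real.log (4 * M) - f x))).toReal := ENNReal.toReal_nonneg
        linarith
      rw [integral_sub hico hio] at h1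
      rw [intervalIntegral.integral_of_le hle, integral_Ioc_eq_integral_Ioo]
      have h3 : 0 ≤ ∫ x in Ioo (1 - 2 * a) (1 - a), Real.log (4 * M) :=
        integral_nonneg fun _ => hL
      linarith
    · rw [intervalIntegral.integral_undef hint]
      have : 0 ≤ 6 * Real.pi * Real.log (4 * M) := by positivity
      linarith
  apply Real.exp_le_exp.mpr
  rw [one_div, inv_mul_eq_div]
  apply div_le_div_of_nonneg_right _ ha0.le
  refine le_trans ?_ key
  have : 6 * (Real.pi * Real.log (4 * M)) ≤ 9 / Real.sqrt 2 * (Real.pi * Real.log (4 * M)) :=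
    mul_le_mul_of_nonneg_right hsq (by positivity)
  have e4 : -(9 * Real.pi / Real.sqrt 2) * Real.log (4 * M)
      = -(9 / Real.sqrt 2 * (Real.pi * Real.log (4 * M))) := by ring
  rw [e4]; linarith
end

section
/- Let a ∈ (0, 1/3] and I_a := (1−2a, 1−a). Let n ≥ 0 and 0 ≤ k ≤ n be integers, M ≥ 1, and let P be a polynomial of the form P(x) = Σ_{j=k}^{n} b_j a_j x^j with a_j ∈ [1, M], b_j ∈ {−1, 0, 1} for all j, and b_k ∈ {−1, 1}. Then the geometric mean of |P| on I_a satisfies ‖P‖_{L_0(I_a)} := exp( (1/a) ∫_{1−2a}^{1−a} log|P(x)| dx ) ≥ (1−2a)^k · exp( −c_1 log(4M)/a ), where c_1 := 9π/√2. -/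
open Complex Metric Set in
lemma gm_harnack (f : ℂ → ℂ) (hd : DifferentiableOn ℂ f (ball 0 1))
    (hne : ∀ z ∈ ball (0:ℂ) 1, f z ≠ 0) (hle : ∀ z ∈ ball (0:ℂ) 1, ‖f z‖ ≤ 1)
    (z : ℂ) (hz : z ∈ ball (0:ℂ) 1) :
    ((1 + ‖z‖) / (1 - ‖z‖)) * Real.log ‖f 0‖ ≤ Real.log ‖f z‖ := by
  have h0 : (0:ℂ) ∈ ball (0:ℂ) 1 := by simp
  have hex : IsExactOn (fun z => deriv f z / f z) (ball 0 1) := by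
    apply DifferentiableOn.isExactOn_ball
    exact (hd.deriv isOpen_ball).div hd hne
  obtain ⟨g, hg0, hg⟩ := hex.with_val_at 0 0
  have hconst : ∀ w ∈ ball (0:ℂ) 1, f w * exp (-g w) = f 0 := by
    intro w hw
    have hD : ∀ x ∈ ball (0:ℂ) 1, HasDerivAt (fun w => f w * exp (-g w)) 0 x := by
      intro x hx
      have h1 := (hd.differentiableAt (isOpen_ball.mem_nhds hx)).hasDerivAt
      have h2 := ((hg x hx).neg).cexp
      refine (h1.mul h2).congr_deriv ?_
      have h3 : f x * (deriv f x / f x) = deriv f x := mul_div_cancel₀ _ (hne x hx)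
      linear_combination (-exp (-g x)) * h3
    have := IsOpen.is_const_of_deriv_eq_zero (f := fun w => f w * exp (-g w)) isOpen_ball
      (convex_ball (0:ℂ) 1).isPreconnected
      (fun x hx => (hD x hx).differentiableAt.differentiableWithinAt)
      (fun x hx => (hD x hx).deriv) hw h0
    simpa [hg0] using this
  have hlog : ∀ w ∈ ball (0:ℂ) 1, Real.log ‖f w‖ = Real.log ‖f 0‖ + (g w).re := by
    intro w hw
    have h1 : f w = f 0 * exp (g w) := by
      rw [← hconst w hw, mul_assoc, ← exp_add]; simp
    rw [h1, norm_mul, Real.log_mul (by simpa using hne 0 h0) (by simp), norm_exp, Real.log_exp]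
  set c := -Real.log ‖f 0‖ with hc
  have hc0 : 0 ≤ c := by
    have := Real.log_nonpos (norm_nonneg _) (hle 0 h0); linarith
  have hz1 : ‖z‖ < 1 := by simpa using hz
  have key : ∀ M : ℝ, c < M → ‖g z‖ ≤ 2 * M * ‖z‖ / (1 - ‖z‖) := by
    intro M hM
    apply borelCaratheodory_zero (by linarith)
      (fun x hx => (hg x hx).differentiableAt.differentiableWithinAt) _ one_pos hz hg0
    intro w hw
    have := Real.log_nonpos (norm_nonneg _) (hle w hw)
    rw [hlog w hw] at this
    show (g w).re ≤ M
    linarith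
  have key2 : ‖g z‖ ≤ 2 * c * ‖z‖ / (1 - ‖z‖) := by
    have ht : Filter.Tendsto (fun M : ℝ => 2 * M * ‖z‖ / (1 - ‖z‖)) (nhdsWithin c (Ioi c))
        (nhds (2 * c * ‖z‖ / (1 - ‖z‖))) := by
      apply tendsto_nhdsWithin_of_tendsto_nhds
      apply Continuous.tendsto (f := fun M : ℝ => 2 * M * ‖z‖ / (1 - ‖z‖))
      fun_prop
    exact ge_of_tendsto ht (by filter_upwards [self_mem_nhdsWithin] with M hM using key M hM)
  rw [hlog z hz]
  have h3 := (abs_le.1 (abs_re_le_norm (g z))).1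
  have h4 : (1 + ‖z‖) / (1 - ‖z‖) = 1 + 2 * ‖z‖ / (1 - ‖z‖) := by
    have : 1 - ‖z‖ ≠ 0 := by linarith
    field_simp; ring
  have h5 : Real.log ‖f 0‖ = -c := by simp [hc]
  rw [h4, h5]
  have : 2 * c * ‖z‖ / (1 - ‖z‖) = 2 * ‖z‖ / (1 - ‖z‖) * c := by ring
  linarith

open Real MeasureTheory in
lemma gm_posLog (p q T x0 : ℝ) (hpq : p ≤ q) (hT : 0 < T) :
    IntervalIntegrable (fun x => log⁺ ‖T / (x - x0)‖) volume p q ∧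
    ∫ x in p..q, log⁺ ‖T / (x - x0)‖ ≤ 2 * T := by
  have hI : ∀ u v : ℝ, IntervalIntegrable (fun x => log⁺ ‖T / (x - x0)‖) volume u v := by
    intro u v
    apply MeromorphicOn.intervalIntegrable_posLog_norm
    intro x _
    fun_prop
  refine ⟨hI p q, ?_⟩
  have h1 : ∫ x in p..q, log⁺ ‖T / (x - x0)‖ ≤
      ∫ x in (min p (x0 - T))..(max q (x0 + T)), log⁺ ‖T / (x - x0)‖ := by
    apply intervalIntegral.integral_mono_interval (min_le_left _ _) hpq (le_max_left _ _) _ (hI _ _)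
    exact Filter.Eventually.of_forall fun x => posLog_nonneg
  have hz : ∀ x, T ≤ |x - x0| → log⁺ ‖T / (x - x0)‖ = 0 := by
    intro x hx
    rw [posLog_eq_zero_iff, norm_div, abs_of_nonneg (norm_nonneg _ |> fun h => div_nonneg h (norm_nonneg _))]
    rw [Real.norm_eq_abs, Real.norm_eq_abs, abs_of_pos hT]
    exact div_le_one_of_le₀ hx (abs_nonneg _)
  have h2 : ∫ x in (min p (x0 - T))..(x0 - T), log⁺ ‖T / (x - x0)‖ = 0 := by
    rw [intervalIntegral.integral_congr (g := fun _ => 0)]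
    · simp
    · intro x hx
      rw [Set.uIcc_of_le (min_le_right _ _)] at hx
      apply hz
      rw [abs_of_nonpos (by linarith [hx.2])]; linarith [hx.2]
  have h3 : ∫ x in (x0 + T)..(max q (x0 + T)), log⁺ ‖T / (x - x0)‖ = 0 := by
    rw [intervalIntegral.integral_congr (g := fun _ => 0)]
    · simp
    · intro x hx
      rw [Set.uIcc_of_le (le_max_right _ _)] at hx
      apply hz
      rw [abs_of_nonneg (by linarith [hx.1])]; linarith [hx.1]
  have h4 : ∫ x in (x0 - T)..(x0 + T), log⁺ ‖T / (x - x0)‖ = 2 * T := by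
    have : ∫ x in (x0 - T)..(x0 + T), log⁺ ‖T / (x - x0)‖ =
        ∫ x in (x0 - T)..(x0 + T), (log T - log (x - x0)) := by
      apply intervalIntegral.integral_congr_ae
      have : ∀ᵐ x : ℝ, x ≠ x0 := by simp [ae_iff]
      filter_upwards [this] with x hx hx2
      rw [Set.uIoc_of_le (by linarith)] at hx2
      have hs : x - x0 ≠ 0 := sub_ne_zero.2 hx
      have habs : |x - x0| ≤ T := abs_le.2 ⟨by linarith [hx2.1], by linarith [hx2.2]⟩
      rw [posLog_eq_log, norm_div, log_div (by simpa using hT.ne') (by simpa using hs)]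
      · simp
      · rw [norm_div, abs_of_nonneg (div_nonneg (norm_nonneg _) (norm_nonneg _)), Real.norm_eq_abs,
          Real.norm_eq_abs, abs_of_pos hT, one_le_div (by positivity)]
        exact habs
    rw [this, intervalIntegral.integral_comp_sub_right (fun s => log T - log s),
      intervalIntegral.integral_sub (by simp) intervalIntegral.intervalIntegrable_log', integral_log]
    simp
    ring
  have h5 := intervalIntegral.integral_add_adjacent_intervals
    (hI (min p (x0 - T)) (x0 - T)) (hI (x0 - T) (max q (x0 + T)))
  have h6 := intervalIntegral.integral_add_adjacent_intervals
    (hI (x0 - T) (x0 + T)) (hI (x0 + T) (max q (x0 + T)))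
  linarith

lemma gm_analytic (x : ℝ) : AnalyticAt ℝ (fun x : ℝ => (((3 * x - 1) / 2 : ℝ) : ℂ)) x := by
  have h : AnalyticAt ℝ (fun x : ℝ => (3 * x - 1) / 2) x := by fun_prop
  exact (Complex.ofRealCLM.analyticAt _).comp h

open Complex ComplexConjugate in
lemma gm_log_eq (ζ : ℂ) (t : ℝ) (h : (t : ℂ) ≠ ζ) :
    Real.log ‖(1 - conj ζ * t) / (t - ζ)‖ =
      1 / 2 * Real.log (1 + (1 - t ^ 2) * (1 - ‖ζ‖ ^ 2) / ‖(t : ℂ) - ζ‖ ^ 2) := by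
  have h0 : ‖(t : ℂ) - ζ‖ ≠ 0 := by simpa [sub_eq_zero] using h
  have h1 : 1 + (1 - t ^ 2) * (1 - ‖ζ‖ ^ 2) / ‖(t : ℂ) - ζ‖ ^ 2 =
      ‖(1 - conj ζ * t) / (t - ζ)‖ ^ 2 := by
    rw [norm_div, div_pow, eq_div_iff (by positivity), add_mul, div_mul_cancel₀ _ (by positivity)]
    simp only [Complex.sq_norm, normSq_apply]
    simp
    ring
  rw [h1, Real.log_pow]
  push_cast
  ring

open Complex ComplexConjugate in
lemma gm_log_low (ζ : ℂ) (hζ : ‖ζ‖ < 1) (h : ((-1 / 2 : ℝ) : ℂ) ≠ ζ) :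
    (1 - ‖ζ‖ ^ 2) / 6 ≤ Real.log ‖(1 - conj ζ * ((-1 / 2 : ℝ) : ℂ)) / (((-1 / 2 : ℝ) : ℂ) - ζ)‖ := by
  rw [gm_log_eq ζ _ h]
  have h0 : 0 < ‖((-1 / 2 : ℝ) : ℂ) - ζ‖ := norm_pos_iff.2 (sub_ne_zero.2 h)
  have hv : 0 < 1 - ‖ζ‖ ^ 2 := by nlinarith [norm_nonneg ζ]
  have hb : ‖((-1 / 2 : ℝ) : ℂ) - ζ‖ ≤ 1 / 2 + ‖ζ‖ := by
    refine (norm_sub_le _ _).trans ?_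
    rw [Complex.norm_real]; norm_num
  set d := ‖((-1 / 2 : ℝ) : ℂ) - ζ‖
  set v := 1 - ‖ζ‖ ^ 2 with hvd
  have hu : 0 < (1 - (-1 / 2 : ℝ) ^ 2) * v / d ^ 2 := by
    apply div_pos _ (by positivity); nlinarith
  have h2 := Real.one_sub_inv_le_log_of_pos (x := 1 + (1 - (-1 / 2 : ℝ) ^ 2) * v / d ^ 2)
    (by linarith)
  have h3 : 1 - (1 + (1 - (-1 / 2 : ℝ) ^ 2) * v / d ^ 2)⁻¹ = (3 / 4 * v) / (d ^ 2 + 3 / 4 * v) := by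
    have : d ^ 2 + 3 / 4 * v ≠ 0 := by positivity
    have h4 : 1 + (1 - (-1 / 2 : ℝ) ^ 2) * v / d ^ 2 = (d ^ 2 + 3 / 4 * v) / d ^ 2 := by
      field_simp; ring
    rw [h4, inv_div]; field_simp; ring
  have h5 : v / 3 ≤ (3 / 4 * v) / (d ^ 2 + 3 / 4 * v) := by
    rw [le_div_iff₀ (by positivity)]
    have : d ^ 2 + 3 / 4 * v ≤ 9 / 4 := by nlinarith [norm_nonneg ζ]
    nlinarith
  linarith

lemma gm_bern (κ l : ℝ) (hκ : 0 ≤ κ) (hl : 1 ≤ l) :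
    Real.log (1 + l * κ) ≤ l * Real.log (1 + κ) := by
  rw [← Real.log_rpow (by linarith)]
  apply Real.log_le_log (by positivity)
  exact one_add_mul_self_le_rpow_one_add (by linarith) hl

open Real in
lemma gm_pt (a s : ℝ) (ha : 0 < a) (hs : s ≠ 0) :
    1 / 2 * log (1 + 2 * a ^ 2 / s ^ 2) ≤ log 3 + log⁺ ‖(a / 2) / s‖ := by
  have hs2 : 0 < s ^ 2 := by positivity
  by_cases h : |s| ≤ a / 2
  · have h1 : 1 + 2 * a ^ 2 / s ^ 2 ≤ (3 * ‖(a / 2) / s‖) ^ 2 := by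
      rw [mul_pow, Real.norm_eq_abs, sq_abs, div_pow]
      have : s ^ 2 ≤ (a / 2) ^ 2 := sq_le_sq' (by linarith [neg_abs_le s]) (by linarith [le_abs_self s])
      rw [← sub_nonneg]
      have e : 3 ^ 2 * ((a / 2) ^ 2 / s ^ 2) - (1 + 2 * a ^ 2 / s ^ 2) = ((a / 2) ^ 2 - s ^ 2) / s ^ 2 := by
        field_simp; ring
      rw [e]
      exact div_nonneg (by linarith) hs2.le
    have h2 := log_le_log (by positivity) h1
    rw [log_pow, log_mul (by norm_num) (by simp; exact ⟨ha.ne', hs⟩)] at h2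
    have h3 : log ‖(a / 2) / s‖ ≤ log⁺ ‖(a / 2) / s‖ := by
      rw [posLog_def]; exact le_max_right _ _
    push_cast at h2
    linarith
  · push Not at h
    have h1 : 1 + 2 * a ^ 2 / s ^ 2 ≤ 3 ^ 2 := by
      have : (a / 2) ^ 2 ≤ s ^ 2 := by
        rw [← sq_abs s]; gcongr
      rw [← sub_nonneg]
      have e : 3 ^ 2 - (1 + 2 * a ^ 2 / s ^ 2) = 8 * (s ^ 2 - (a / 2) ^ 2) / s ^ 2 := by
        field_simp; ring
      rw [e]
      exact div_nonneg (by linarith) hs2.le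
    have h2 := log_le_log (by positivity) h1
    rw [log_pow] at h2
    have h3 : 0 ≤ log⁺ ‖(a / 2) / s‖ := posLog_nonneg
    push_cast at h2
    linarith

lemma gm_log3 : Real.log 3 ≤ 1.11 := by
  have h := Real.log_le_sub_one_of_pos (x := 3 / Real.exp 1) (by positivity)
  rw [Real.log_div (by norm_num) (Real.exp_pos _).ne', Real.log_exp] at h
  have h1 := Real.exp_one_gt_d9
  have : 3 / Real.exp 1 ≤ 1.11 := by
    rw [div_le_iff₀ (Real.exp_pos _)]; nlinarith
  linarith

open Complex ComplexConjugate MeasureTheory in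
lemma gm_green (a : ℝ) (ha : 0 < a) (ha3 : a ≤ 1 / 3) (ζ : ℂ) (hζ : ‖ζ‖ < 1) :
    IntervalIntegrable (fun x : ℝ => Real.log ‖(1 - conj ζ * (((3 * x - 1) / 2 : ℝ) : ℂ)) /
      ((((3 * x - 1) / 2 : ℝ) : ℂ) - ζ)‖) volume (1 - 2 * a) (1 - a) ∧
    ∫ x in (1 - 2 * a)..(1 - a), Real.log ‖(1 - conj ζ * (((3 * x - 1) / 2 : ℝ) : ℂ)) /
      ((((3 * x - 1) / 2 : ℝ) : ℂ) - ζ)‖ ≤ 3 * (1 - ‖ζ‖ ^ 2) := by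
  have hI : IntervalIntegrable (fun x : ℝ => Real.log ‖(1 - conj ζ * (((3 * x - 1) / 2 : ℝ) : ℂ)) /
      ((((3 * x - 1) / 2 : ℝ) : ℂ) - ζ)‖) volume (1 - 2 * a) (1 - a) := by
    apply MeromorphicOn.intervalIntegrable_log_norm
    intro x _
    have : AnalyticAt ℝ (fun x : ℝ => (((3 * x - 1) / 2 : ℝ) : ℂ)) x :=
      gm_analytic x
    exact ((analyticAt_const.sub (analyticAt_const.mul this)).meromorphicAt).div
      (this.sub analyticAt_const).meromorphicAt
  refine ⟨hI, ?_⟩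
  have hab : 1 - 2 * a ≤ 1 - a := by linarith
  have hv : 0 < 1 - ‖ζ‖ ^ 2 := by nlinarith [norm_nonneg ζ]
  set v := 1 - ‖ζ‖ ^ 2 with hvd
  by_cases hcase : v ≤ 3 * a / 4
  · have hb : ∀ x ∈ Set.Icc (1 - 2 * a) (1 - a), Real.log ‖(1 - conj ζ * (((3 * x - 1) / 2 : ℝ) : ℂ)) /
      ((((3 * x - 1) / 2 : ℝ) : ℂ) - ζ)‖ ≤ 8 * v / (3 * a) := by
      intro x hx
      set t : ℝ := (3 * x - 1) / 2 with ht
      have ht0 : 0 ≤ t := by linarith [hx.1]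
      have ht1 : 3 * a / 2 ≤ 1 - t := by linarith [hx.2]
      have hd : (1 - t) / 2 ≤ ‖(t : ℂ) - ζ‖ := by
        have h1 := norm_sub_norm_le ζ (t : ℂ)
        rw [Complex.norm_real, Real.norm_eq_abs, abs_of_nonneg ht0, norm_sub_rev] at h1
        nlinarith [norm_nonneg ζ]
      have hne : (t : ℂ) ≠ ζ := by
        intro h
        rw [h, sub_self, norm_zero] at hd
        linarith
      rw [gm_log_eq ζ t hne]
      have hdpos : 0 < ‖(t : ℂ) - ζ‖ := by linarith
      have hu : (1 - t ^ 2) * v / ‖(t : ℂ) - ζ‖ ^ 2 ≤ 8 * v / (1 - t) := by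
        rw [div_le_div_iff₀ (by positivity) (by linarith)]
        have h2 : ((1 - t) / 2) ^ 2 ≤ ‖(t : ℂ) - ζ‖ ^ 2 := by gcongr; linarith
        have h3 : (1 - t ^ 2) * (1 - t) ≤ 8 * ((1 - t) / 2) ^ 2 := by nlinarith
        nlinarith
      have hu0 : 0 ≤ (1 - t ^ 2) * v / ‖(t : ℂ) - ζ‖ ^ 2 := by
        apply div_nonneg (mul_nonneg _ hv.le) (by positivity); nlinarith
      have hl := Real.log_le_sub_one_of_pos (x := 1 + (1 - t ^ 2) * v / ‖(t : ℂ) - ζ‖ ^ 2) (by linarith)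
      have h5 : 8 * v / (1 - t) ≤ 2 * (8 * v / (3 * a)) := by
        rw [div_le_iff₀ (by linarith)]
        have : 2 * (8 * v / (3 * a)) * (3 * a / 2) = 8 * v := by field_simp
        have h6 : 0 ≤ 2 * (8 * v / (3 * a)) := by positivity
        nlinarith
      linarith
    have := intervalIntegral.integral_mono_on hab hI (by simp) hb
    rw [intervalIntegral.integral_const, smul_eq_mul] at this
    have e : (1 - a - (1 - 2 * a)) * (8 * v / (3 * a)) = 8 / 3 * v := by field_simp; ring
    linarith
  · push Not at hcase
    set x0 : ℝ := (2 * ζ.re + 1) / 3 with hx0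
    obtain ⟨hpI, hp⟩ := gm_posLog (1 - 2 * a) (1 - a) (a / 2) x0 hab (by linarith)
    set l : ℝ := v / (3 * a / 4) with hl
    have hl1 : 1 ≤ l := by rw [hl, one_le_div (by positivity)]; exact hcase.le
    have hmono : ∫ x in (1 - 2 * a)..(1 - a), Real.log ‖(1 - conj ζ * (((3 * x - 1) / 2 : ℝ) : ℂ)) /
      ((((3 * x - 1) / 2 : ℝ) : ℂ) - ζ)‖ ≤ ∫ x in (1 - 2 * a)..(1 - a),
        l * (Real.log 3 + Real.posLog ‖(a / 2) / (x - x0)‖) := by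
      apply intervalIntegral.integral_mono_ae_restrict hab hI
        ((IntervalIntegrable.add (by simp) hpI).const_mul l)
      have : ∀ᵐ x : ℝ ∂(volume.restrict (Set.Icc (1 - 2 * a) (1 - a))), x ≠ x0 :=
        ae_restrict_of_ae (by simp [ae_iff])
      filter_upwards [this, ae_restrict_mem measurableSet_Icc] with x hx hxI
      set t : ℝ := (3 * x - 1) / 2 with ht
      have ht0 : 0 ≤ t := by linarith [hxI.1]
      have ht1 : 1 - t ≤ 3 * a := by linarith [hxI.1]
      have ht2 : 0 < 1 - t := by linarith [hxI.2]
      have hs : x - x0 ≠ 0 := sub_ne_zero.2 hx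
      have hre : ((t : ℂ) - ζ).re = 3 / 2 * (x - x0) := by
        simp [hx0, ht]; ring
      have hd : 9 / 4 * (x - x0) ^ 2 ≤ ‖(t : ℂ) - ζ‖ ^ 2 := by
        have := Complex.abs_re_le_norm ((t : ℂ) - ζ)
        rw [hre] at this
        have h2 := pow_le_pow_left₀ (abs_nonneg _) this 2
        rw [sq_abs] at h2
        linarith
      have hs2 : 0 < (x - x0) ^ 2 := by positivity
      have hne : (t : ℂ) ≠ ζ := by
        intro h
        rw [h, sub_self, norm_zero] at hd
        linarith
      rw [gm_log_eq ζ t hne]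
      have hu0 : 0 ≤ (1 - t ^ 2) * v / ‖(t : ℂ) - ζ‖ ^ 2 := by
        apply div_nonneg (mul_nonneg _ hv.le) (by positivity); nlinarith
      have hu : (1 - t ^ 2) * v / ‖(t : ℂ) - ζ‖ ^ 2 ≤ l * (2 * a ^ 2 / (x - x0) ^ 2) := by
        have e : l * (2 * a ^ 2 / (x - x0) ^ 2) = (6 * a) * v / (9 / 4 * (x - x0) ^ 2) := by
          rw [hl]; field_simp; ring
        rw [e]
        have : 1 - t ^ 2 ≤ 6 * a := by nlinarith
        gcongr
      have h1 := Real.log_le_log (by linarith) (add_le_add_right hu 1)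
      have h2 := gm_bern (2 * a ^ 2 / (x - x0) ^ 2) l (by positivity) hl1
      have h3 := gm_pt a (x - x0) ha hs
      have h4 := mul_le_mul_of_nonneg_left h3 (by linarith : 0 ≤ l)
      linarith
    rw [intervalIntegral.integral_const_mul, intervalIntegral.integral_add (by simp) hpI,
      intervalIntegral.integral_const, smul_eq_mul] at hmono
    refine hmono.trans ?_
    have h3 := gm_log3
    have : (1 - a - (1 - 2 * a)) * Real.log 3 +
        ∫ x in (1 - 2 * a)..(1 - a), Real.posLog ‖(a / 2) / (x - x0)‖ ≤ 2.11 * a := by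
      nlinarith
    refine (mul_le_mul_of_nonneg_left this (by linarith)).trans ?_
    have : l * (2.11 * a) = 2.11 * 4 / 3 * v := by rw [hl]; field_simp
    rw [this]; linarith

lemma gm_int (p : Polynomial ℂ) (u v : ℝ) :
    IntervalIntegrable (fun x : ℝ => Real.log ‖p.eval (((3 * x - 1) / 2 : ℝ) : ℂ)‖)
      MeasureTheory.volume u v := by
  apply MeromorphicOn.intervalIntegrable_log_norm
  intro x _
  have := (gm_analytic x).aeval_polynomial p
  simp only [Polynomial.coe_aeval_eq_eval] at this
  exact this.meromorphicAt

open Complex Metric in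
lemma gm_base (p : Polynomial ℂ) (hp : ∀ w : ℂ, ‖w‖ ≤ 1 → ‖p.eval w‖ ≤ 1)
    (hz : ∀ w : ℂ, ‖w‖ < 1 → p.eval w ≠ 0) (t : ℝ) (ht0 : 0 ≤ t) (ht1 : t < 1) :
    6 / (1 - t) * Real.log ‖p.eval ((-1 / 2 : ℝ) : ℂ)‖ ≤ Real.log ‖p.eval (t : ℂ)‖ := by
  have h2u : ∀ u : ℂ, ‖u‖ < 1 → 2 - u ≠ 0 := by
    intro u hu h
    have : u = 2 := by linear_combination -h
    rw [this] at hu; norm_num at hu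
  have hm : ∀ u : ℂ, ‖u‖ < 1 → ‖(2 * u - 1) / (2 - u)‖ < 1 := by
    intro u hu
    have hpos := norm_pos_iff.2 (h2u u hu)
    rw [norm_div, div_lt_one hpos]
    apply lt_of_pow_lt_pow_left₀ 2 hpos.le
    have h1 : ‖u‖ ^ 2 < 1 := by nlinarith [norm_nonneg u]
    simp only [Complex.sq_norm, normSq_apply] at h1 ⊢
    simp
    nlinarith
  have hu0 : (0:ℝ) ≤ (2 * t + 1) / (2 + t) := by positivity
  have hu1 : (2 * t + 1) / (2 + t) < 1 := by rw [div_lt_one (by linarith)]; linarith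
  have hn : ‖(((2 * t + 1) / (2 + t) : ℝ) : ℂ)‖ = (2 * t + 1) / (2 + t) := by
    rw [Complex.norm_real, Real.norm_eq_abs, abs_of_nonneg hu0]
  have H := gm_harnack (fun u => p.eval ((2 * u - 1) / (2 - u)))
    (by
      intro u hu
      have : ‖u‖ < 1 := by simpa using hu
      have h1 : DifferentiableAt ℂ (fun u : ℂ => (2 * u - 1) / (2 - u)) u :=
        DifferentiableAt.div (by fun_prop) (by fun_prop) (h2u u this)
      exact (p.differentiable.differentiableAt.comp u h1).differentiableWithinAt)
    (fun u hu => hz _ (hm u (by simpa using hu)))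
    (fun u hu => hp _ (hm u (by simpa using hu)).le)
    (((2 * t + 1) / (2 + t) : ℝ) : ℂ) (by rw [mem_ball_zero_iff, hn]; exact hu1)
  have e1 : (2 * (0:ℂ) - 1) / (2 - 0) = ((-1 / 2 : ℝ) : ℂ) := by push_cast; norm_num
  have e2 : (2 * (((2 * t + 1) / (2 + t) : ℝ) : ℂ) - 1) / (2 - (((2 * t + 1) / (2 + t) : ℝ) : ℂ)) = (t : ℂ) := by
    have : (2 * ((2 * t + 1) / (2 + t)) - 1) / (2 - (2 * t + 1) / (2 + t)) = t := by
      have h3 : 2 + t ≠ 0 := by linarith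
      have h4 : 2 - (2 * t + 1) / (2 + t) = 3 / (2 + t) := by field_simp; ring
      rw [h4]; field_simp; ring
    exact_mod_cast this
  simp only [e1, e2, hn] at H
  refine le_trans ?_ H
  apply mul_le_mul_of_nonpos_right _ (Real.log_nonpos (norm_nonneg _) (hp _ (by
    rw [Complex.norm_real]; norm_num)))
  have h4 : (1 + (2 * t + 1) / (2 + t)) / (1 - (2 * t + 1) / (2 + t)) = 3 * (1 + t) / (1 - t) := by
    have h3 : 2 + t ≠ 0 := by linarith
    have h5 : 1 - t ≠ 0 := by linarith
    have h6 : 1 - (2 * t + 1) / (2 + t) = (1 - t) / (2 + t) := by field_simp; ring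
    rw [h6]; field_simp; ring
  rw [h4]
  have : 0 < 1 - t := by linarith
  gcongr
  linarith

open Complex Metric ComplexConjugate Polynomial in
lemma gm_main_s3 (a : ℝ) (ha : 0 < a) (ha3 : a ≤ 1 / 3) (N : ℕ) : ∀ (p : ℂ[X]),
    (∀ w : ℂ, ‖w‖ ≤ 1 → ‖p.eval w‖ ≤ 1) → p.eval ((-1 / 2 : ℝ) : ℂ) ≠ 0 →
    (p.roots.filter (fun z => ‖z‖ < 1)).card = N →
    18 * Real.log ‖p.eval ((-1 / 2 : ℝ) : ℂ)‖ ≤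
      ∫ x in (1 - 2 * a)..(1 - a), Real.log ‖p.eval (((3 * x - 1) / 2 : ℝ) : ℂ)‖ := by
  have hab : 1 - 2 * a ≤ 1 - a := by linarith
  induction N with
  | zero =>
    intro p hp hp0 hcard
    have hpne : p ≠ 0 := by rintro rfl; simp at hp0
    have hz : ∀ w : ℂ, ‖w‖ < 1 → p.eval w ≠ 0 := by
      intro w hw h0
      have : w ∈ p.roots.filter (fun z => ‖z‖ < 1) := by
        rw [Multiset.mem_filter, mem_roots hpne]; exact ⟨h0, hw⟩
      rw [Multiset.card_eq_zero.1 hcard] at this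
      simp at this
    have hL : Real.log ‖p.eval ((-1 / 2 : ℝ) : ℂ)‖ ≤ 0 :=
      Real.log_nonpos (norm_nonneg _) (hp _ (by rw [Complex.norm_real]; norm_num))
    have := intervalIntegral.integral_mono_on (f := fun _ => 4 / a * Real.log ‖p.eval ((-1 / 2 : ℝ) : ℂ)‖)
      hab (by simp) (gm_int p _ _) (by
        intro x hx
        refine le_trans ?_ (gm_base p hp hz ((3 * x - 1) / 2) (by linarith [hx.1]) (by linarith [hx.2]))
        apply mul_le_mul_of_nonpos_right _ hL
        rw [div_le_div_iff₀ (by linarith [hx.2]) ha]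
        linarith [hx.2])
    rw [intervalIntegral.integral_const, smul_eq_mul] at this
    have e : (1 - a - (1 - 2 * a)) * (4 / a * Real.log ‖p.eval ((-1 / 2 : ℝ) : ℂ)‖) =
      4 * Real.log ‖p.eval ((-1 / 2 : ℝ) : ℂ)‖ := by field_simp; ring
    linarith
  | succ N ih =>
    intro p hp hp0 hcard
    have hpne : p ≠ 0 := by rintro rfl; simp at hp0
    obtain ⟨ζ, hζm⟩ := Multiset.card_pos_iff_exists_mem.1 (by rw [hcard]; exact Nat.succ_pos N)
    rw [Multiset.mem_filter, mem_roots hpne] at hζm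
    obtain ⟨hroot, hζ⟩ := hζm
    obtain ⟨R, hR⟩ := dvd_iff_isRoot.2 hroot
    have hRne : R ≠ 0 := by rintro rfl; simp at hR; exact hpne hR
    set p1 : ℂ[X] := (1 - C (conj ζ) * X) * R with hp1
    have hpe : ∀ w, p.eval w = (w - ζ) * R.eval w := by intro w; rw [hR]; simp
    have hp1e : ∀ w, p1.eval w = (1 - conj ζ * w) * R.eval w := by intro w; rw [hp1]; simp
    have hfac : ∀ w : ℂ, ‖w‖ ≤ 1 → 1 - conj ζ * w ≠ 0 := by
      intro w hw h
      have : ‖conj ζ * w‖ = 1 := by rw [← sub_eq_zero.1 h]; simp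
      rw [norm_mul, RCLike.norm_conj] at this
      nlinarith [norm_nonneg w, norm_nonneg ζ]
    have hp1b : ∀ w : ℂ, ‖w‖ ≤ 1 → ‖p1.eval w‖ ≤ 1 := by
      intro w hw
      apply norm_le_of_forall_mem_frontier_norm_le (U := ball (0:ℂ) 1) isBounded_ball
        (f := fun w => p1.eval w) p1.differentiable.diffContOnCl
      · intro z hz
        rw [frontier_ball (0:ℂ) one_ne_zero, mem_sphere_zero_iff_norm] at hz
        have h1 := hp z hz.le
        rw [hpe, norm_mul] at h1
        rw [hp1e, norm_mul]
        have : ‖1 - conj ζ * z‖ = ‖z - ζ‖ := by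
          have h3 : ‖1 - conj ζ * z‖ ^ 2 = ‖z - ζ‖ ^ 2 := by
            have h2 : ‖z‖ ^ 2 = 1 := by rw [hz]; norm_num
            simp only [Complex.sq_norm, normSq_apply] at h2 ⊢
            simp
            linear_combination (ζ.re ^ 2 + ζ.im ^ 2 - 1) * h2
          exact (sq_eq_sq₀ (norm_nonneg _) (norm_nonneg _)).1 h3
        rw [this]; exact h1
      · rw [closure_ball (0:ℂ) one_ne_zero]; simpa using hw
    have hh : ‖((-1 / 2 : ℝ) : ℂ)‖ ≤ 1 := by rw [Complex.norm_real]; norm_num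
    have hp0' := hp0
    rw [hpe] at hp0'
    have hA := left_ne_zero_of_mul hp0'
    have hB := right_ne_zero_of_mul hp0'
    have hp10 : p1.eval ((-1 / 2 : ℝ) : ℂ) ≠ 0 := by
      rw [hp1e]; exact mul_ne_zero (hfac _ hh) hB
    have hlne : (1 - C (conj ζ) * X : ℂ[X]) ≠ 0 := by
      intro h
      have := hfac 0 (by simp)
      apply this
      have h2 := congrArg (fun q : ℂ[X] => q.eval 0) h
      simpa using h2
    have hc1 : (p1.roots.filter (fun z => ‖z‖ < 1)).card = N := by
      have h1 : p.roots = ζ ::ₘ R.roots := by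
        rw [hR, roots_mul (by rw [← hR]; exact hpne), roots_X_sub_C]; rfl
      rw [h1, Multiset.filter_cons_of_pos (p := fun z : ℂ => ‖z‖ < 1) _ hζ, Multiset.card_cons] at hcard
      rw [hp1, roots_mul (mul_ne_zero hlne hRne), Multiset.filter_add, Multiset.card_add]
      have h2 : ((1 - C (conj ζ) * X : ℂ[X]).roots.filter (fun z => ‖z‖ < 1)) = 0 := by
        rw [Multiset.filter_eq_nil]
        intro w hw hw1
        rw [mem_roots hlne] at hw
        apply hfac w hw1.le
        simpa [IsRoot] using hw
      rw [h2]; simp; omega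
    have IH := ih p1 hp1b hp10 hc1
    obtain ⟨hGI, hG⟩ := gm_green a ha ha3 ζ hζ
    have hlow := gm_log_low ζ hζ (sub_ne_zero.1 hA)
    have hcv : Real.log ‖p1.eval ((-1 / 2 : ℝ) : ℂ)‖ = Real.log ‖p.eval ((-1 / 2 : ℝ) : ℂ)‖ +
        Real.log ‖(1 - conj ζ * ((-1 / 2 : ℝ) : ℂ)) / (((-1 / 2 : ℝ) : ℂ) - ζ)‖ := by
      rw [hp1e, hpe, norm_mul, norm_mul, norm_div, Real.log_mul (norm_ne_zero_iff.2 (hfac _ hh)) (norm_ne_zero_iff.2 hB),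
        Real.log_mul (norm_ne_zero_iff.2 hA) (norm_ne_zero_iff.2 hB),
        Real.log_div (norm_ne_zero_iff.2 (hfac _ hh)) (norm_ne_zero_iff.2 hA)]
      ring
    have hmono := intervalIntegral.integral_mono_on hab ((gm_int p1 _ _).sub hGI) (gm_int p _ _) (by
      intro x hx
      set t : ℝ := (3 * x - 1) / 2 with ht
      have ht0 : 0 ≤ t := by linarith [hx.1]
      have ht1 : t < 1 := by linarith [hx.2]
      have htn : ‖(t : ℂ)‖ ≤ 1 := by
        rw [Complex.norm_real, Real.norm_eq_abs, abs_of_nonneg ht0]; exact ht1.le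
      by_cases h1 : (t : ℂ) - ζ = 0
      · have h2 := Real.log_nonpos (norm_nonneg _) (hp1b t htn)
        rw [hpe, h1]; simpa using h2
      by_cases h2 : R.eval (t : ℂ) = 0
      · rw [hpe, hp1e, h2]
        simp only [mul_zero, norm_zero, Real.log_zero, zero_sub, Left.neg_nonpos_iff]
        rw [gm_log_eq ζ t (sub_ne_zero.1 h1)]
        apply mul_nonneg (by norm_num)
        apply Real.log_nonneg
        have : 0 ≤ (1 - t ^ 2) * (1 - ‖ζ‖ ^ 2) / ‖(t : ℂ) - ζ‖ ^ 2 := by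
          apply div_nonneg (mul_nonneg _ _) (by positivity)
          · nlinarith
          · nlinarith [norm_nonneg ζ]
        linarith
      rw [hp1e, hpe, norm_mul, norm_mul, norm_div, Real.log_mul (norm_ne_zero_iff.2 (hfac _ htn)) (norm_ne_zero_iff.2 h2),
        Real.log_mul (norm_ne_zero_iff.2 h1) (norm_ne_zero_iff.2 h2),
        Real.log_div (norm_ne_zero_iff.2 (hfac _ htn)) (norm_ne_zero_iff.2 h1)]
      linarith)
    rw [intervalIntegral.integral_sub (gm_int p1 _ _) hGI] at hmono
    linarith

lemma gm_coef (n k : ℕ) (M : ℝ) (hM : 1 ≤ M) (A b : ℕ → ℝ)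
    (hA : ∀ j ∈ Finset.Icc k n, A j ∈ Set.Icc (1 : ℝ) M)
    (hb : ∀ j ∈ Finset.Icc k n, b j = -1 ∨ b j = 0 ∨ b j = 1) (z : ℂ) (hz : ‖z‖ ≤ 1) :
    (1 - ‖z‖) * ‖∑ j ∈ Finset.Icc k n, ((b j * A j : ℝ) : ℂ) * z ^ (j - k)‖ ≤ M := by
  have h1 : ‖∑ j ∈ Finset.Icc k n, ((b j * A j : ℝ) : ℂ) * z ^ (j - k)‖ ≤
      ∑ j ∈ Finset.Icc k n, M * ‖z‖ ^ (j - k) := by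
    apply norm_sum_le_of_le
    intro j hj
    rw [norm_mul, norm_pow, Complex.norm_real, norm_mul]
    gcongr
    have h2 := hA j hj
    have h3 : ‖A j‖ ≤ M := by
      rw [Real.norm_eq_abs, abs_of_nonneg (by linarith [h2.1])]; exact h2.2
    have h4 : ‖b j‖ ≤ 1 := by rcases hb j hj with h | h | h <;> rw [h] <;> norm_num
    nlinarith [norm_nonneg (A j), norm_nonneg (b j)]
  have h2 : ∑ j ∈ Finset.Icc k n, M * ‖z‖ ^ (j - k) = M * ∑ i ∈ Finset.range (n + 1 - k), ‖z‖ ^ i := by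
    rw [← Finset.mul_sum]
    congr 1
    have : Finset.Icc k n = Finset.Ico k (n + 1) := by ext; simp [Nat.lt_succ_iff]
    rw [this, Finset.sum_Ico_eq_sum_range]
    simp
  have h3 := mul_neg_geom_sum ‖z‖ (n + 1 - k)
  have h4 : 0 ≤ ‖z‖ ^ (n + 1 - k) := by positivity
  calc _ ≤ (1 - ‖z‖) * (M * ∑ i ∈ Finset.range (n + 1 - k), ‖z‖ ^ i) := by
        rw [← h2]; exact mul_le_mul_of_nonneg_left h1 (by linarith)
    _ = M * (1 - ‖z‖ ^ (n + 1 - k)) := by rw [← h3]; ring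
    _ ≤ M := by nlinarith

lemma gm_disc (w : ℂ) (hw : ‖w‖ ≤ 1) : ‖(2 * w + 1) / 3‖ ≤ 1 ∧
    ‖1 - (2 * w + 1) / 3‖ ^ 2 ≤ 4 * (1 - ‖(2 * w + 1) / 3‖) := by
  have h1 : ‖(2 * w + 1) / 3‖ ≤ 1 := by
    rw [norm_div]
    have : ‖2 * w + 1‖ ≤ 3 := by
      refine (norm_add_le _ _).trans ?_
      rw [norm_mul]; norm_num; linarith
    norm_num; linarith
  refine ⟨h1, ?_⟩
  have h2 : ‖1 - (2 * w + 1) / 3‖ ^ 2 ≤ 2 - 2 * ‖(2 * w + 1) / 3‖ ^ 2 := by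
    have hw2 : ‖w‖ ^ 2 ≤ 1 := by nlinarith [norm_nonneg w]
    have e1 : (2 * w + 1) / 3 = ⟨(2 * w.re + 1) / 3, 2 * w.im / 3⟩ := by
      apply Complex.ext <;> simp
    rw [e1]
    simp only [Complex.sq_norm, Complex.normSq_apply] at hw2 ⊢
    simp
    nlinarith
  nlinarith [norm_nonneg ((2 * w + 1) / 3)]

lemma gm_const : (18:ℝ) ≤ 9 * Real.pi / Real.sqrt 2 := by
  have h1 := Real.pi_gt_three
  have h2 : Real.sqrt 2 ≤ 1.5 := by
    rw [Real.sqrt_le_left (by norm_num)]; norm_num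
  rw [le_div_iff₀ (by positivity)]
  nlinarith



/-- Geometric-mean lower bound for polynomials starting at degree `k`:
`‖P‖_{L_0(I_a)} ≥ (1-2a)^k exp(-c₁ log(4M)/a)` with `c₁ = 9π/√2`
for `P(x) = ∑_{j=k}^n b_j a_j x^j` with `a_j ∈ [1,M]`, `b_j ∈ {-1,0,1}`, `b_k ∈ {-1,1}`. -/
theorem geometric_mean_lower_bound_shifted (a : ℝ) (ha : a ∈ Set.Ioc (0 : ℝ) (1 / 3))
    (n k : ℕ) (hk : k ≤ n) (M : ℝ) (hM : 1 ≤ M)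
    (A b : ℕ → ℝ)
    (hA : ∀ j ∈ Finset.Icc k n, A j ∈ Set.Icc (1 : ℝ) M)
    (hb : ∀ j ∈ Finset.Icc k n, b j = -1 ∨ b j = 0 ∨ b j = 1)
    (hbk : b k = -1 ∨ b k = 1) :
    Real.exp ((1 / a) * ∫ x in (1 - 2 * a)..(1 - a),
        Real.log |∑ j ∈ Finset.Icc k n, b j * A j * x ^ j|) ≥
      (1 - 2 * a) ^ k * Real.exp (-(9 * Real.pi / Real.sqrt 2) * Real.log (4 * M) / a) := by
  obtain ⟨ha0, ha3⟩ := ha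
  have hab : 1 - 2 * a ≤ 1 - a := by linarith
  have hM4 : (0:ℝ) < 4 * M := by linarith
  set Q : Polynomial ℂ := ∑ j ∈ Finset.Icc k n,
    Polynomial.C ((b j * A j : ℝ) : ℂ) * Polynomial.X ^ (j - k) with hQ
  have hQe : ∀ z, Q.eval z = ∑ j ∈ Finset.Icc k n, ((b j * A j : ℝ) : ℂ) * z ^ (j - k) := by
    intro z; rw [hQ, Polynomial.eval_finsetSum]; simp
  set p : Polynomial ℂ := Polynomial.C (((4 * M)⁻¹ : ℝ) : ℂ) * ((1 - Polynomial.X) ^ 2 * Q).comp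
    (Polynomial.C (2 / 3) * Polynomial.X + Polynomial.C (1 / 3)) with hp
  have hpe : ∀ w, p.eval w = (((4 * M)⁻¹ : ℝ) : ℂ) *
      ((1 - (2 * w + 1) / 3) ^ 2 * Q.eval ((2 * w + 1) / 3)) := by
    intro w
    have e : (2 / 3 : ℂ) * w + 1 / 3 = (2 * w + 1) / 3 := by ring
    rw [hp]
    simp only [Polynomial.eval_mul, Polynomial.eval_comp, Polynomial.eval_pow, Polynomial.eval_sub,
      Polynomial.eval_add, Polynomial.eval_C, Polynomial.eval_X, Polynomial.eval_one, e]
  have hnM : ‖(((4 * M)⁻¹ : ℝ) : ℂ)‖ = (4 * M)⁻¹ := by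
    rw [Complex.norm_real, Real.norm_eq_abs, abs_of_pos (by positivity)]
  have hpb : ∀ w : ℂ, ‖w‖ ≤ 1 → ‖p.eval w‖ ≤ 1 := by
    intro w hw
    obtain ⟨hd1, hd2⟩ := gm_disc w hw
    have h1 := gm_coef n k M hM A b hA hb _ hd1
    rw [← hQe] at h1
    rw [hpe, norm_mul, hnM, norm_mul, norm_pow, inv_mul_le_one₀ hM4]
    have h2 := mul_le_mul_of_nonneg_right hd2 (norm_nonneg (Q.eval ((2 * w + 1) / 3)))
    linarith
  have hkm : k ∈ Finset.Icc k n := Finset.mem_Icc.2 ⟨le_rfl, hk⟩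
  have hQ0 : Q.eval 0 = ((b k * A k : ℝ) : ℂ) := by
    rw [hQe, Finset.sum_eq_single k]
    · simp
    · intro j hj hjk
      have : j - k ≠ 0 := by
        have := (Finset.mem_Icc.1 hj).1
        omega
      simp [this]
    · intro h; exact absurd hkm h
  have hQ1 : 1 ≤ ‖Q.eval 0‖ := by
    rw [hQ0, Complex.norm_real, norm_mul]
    have h1 : ‖b k‖ = 1 := by rcases hbk with h | h <;> rw [h] <;> norm_num
    have h2 := (hA k hkm).1
    rw [h1, Real.norm_eq_abs, abs_of_nonneg (by linarith)]; linarith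
  have hp0n : ‖p.eval ((-1 / 2 : ℝ) : ℂ)‖ = (4 * M)⁻¹ * ‖Q.eval 0‖ := by
    have e : (2 * ((-1 / 2 : ℝ) : ℂ) + 1) / 3 = 0 := by push_cast; norm_num
    rw [hpe, e, norm_mul, hnM]; simp
  have hp0pos : (4 * M)⁻¹ ≤ ‖p.eval ((-1 / 2 : ℝ) : ℂ)‖ := by
    rw [hp0n]; exact le_mul_of_one_le_right (by positivity) hQ1
  have hinv : 0 < (4 * M)⁻¹ := by positivity
  have hp0 : p.eval ((-1 / 2 : ℝ) : ℂ) ≠ 0 := norm_pos_iff.1 (by linarith)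
  have hmain := gm_main_s3 a ha0 ha3 _ p hpb hp0 rfl
  have hlogp := Real.log_le_log hinv hp0pos
  rw [Real.log_inv] at hlogp
  have hPe : ∀ x : ℝ, |∑ j ∈ Finset.Icc k n, b j * A j * x ^ j| = |x| ^ k * ‖Q.eval (x : ℂ)‖ := by
    intro x
    have e : Q.eval (x : ℂ) = ((∑ j ∈ Finset.Icc k n, b j * A j * x ^ (j - k) : ℝ) : ℂ) := by
      rw [hQe]; push_cast; rfl
    rw [e, Complex.norm_real, Real.norm_eq_abs, ← abs_pow, ← abs_mul, Finset.mul_sum]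
    congr 1
    apply Finset.sum_congr rfl
    intro j hj
    have : x ^ j = x ^ k * x ^ (j - k) := by
      rw [← pow_add, Nat.add_sub_cancel' (Finset.mem_Icc.1 hj).1]
    rw [this]; ring
  have hPI : IntervalIntegrable (fun x : ℝ => Real.log |∑ j ∈ Finset.Icc k n, b j * A j * x ^ j|)
      MeasureTheory.volume (1 - 2 * a) (1 - a) := by
    apply MeromorphicOn.intervalIntegrable_log_norm
      (f := fun x : ℝ => ∑ j ∈ Finset.Icc k n, b j * A j * x ^ j)
    intro x _
    apply AnalyticAt.meromorphicAt
    fun_prop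
  have hmono := intervalIntegral.integral_mono_on hab
    (f := fun x => k * Real.log (1 - 2 * a) + Real.log ‖p.eval (((3 * x - 1) / 2 : ℝ) : ℂ)‖)
    (IntervalIntegrable.add (by simp) (gm_int p _ _)) hPI (by
      intro x hx
      have hx0 : 0 < x := by linarith [hx.1]
      have ha1 : 0 < 1 - 2 * a := by linarith
      have hkl : k * Real.log (1 - 2 * a) ≤ k * Real.log x := by
        have := Real.log_le_log ha1 hx.1
        gcongr
      have e : (2 * (((3 * x - 1) / 2 : ℝ) : ℂ) + 1) / 3 = (x : ℂ) := by push_cast; ring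
      have e2 : ‖p.eval (((3 * x - 1) / 2 : ℝ) : ℂ)‖ = (4 * M)⁻¹ * ((1 - x) ^ 2 * ‖Q.eval (x : ℂ)‖) := by
        rw [hpe, e, norm_mul, hnM, norm_mul, norm_pow]
        have : ‖(1 - x : ℂ)‖ = 1 - x := by
          have h3 : (1 - x : ℂ) = ((1 - x : ℝ) : ℂ) := by push_cast; rfl
          rw [h3, Complex.norm_real, Real.norm_eq_abs, abs_of_pos (by linarith [hx.2])]
        rw [this]
      beta_reduce
      rw [hPe x, e2, abs_of_pos hx0]
      by_cases h0 : ‖Q.eval (x : ℂ)‖ = 0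
      · rw [h0]
        simp only [mul_zero, Real.log_zero, add_zero]
        exact mul_nonpos_of_nonneg_of_nonpos (by positivity)
          (Real.log_nonpos ha1.le (by linarith))
      · have hpos : 0 < ‖Q.eval (x : ℂ)‖ := lt_of_le_of_ne (norm_nonneg _) (Ne.symm h0)
        rw [Real.log_mul (by positivity) h0, Real.log_pow]
        have h1x : 0 < 1 - x := by linarith [hx.2]
        have h4 : (4 * M)⁻¹ * ((1 - x) ^ 2 * ‖Q.eval (x : ℂ)‖) ≤ ‖Q.eval (x : ℂ)‖ := by
          have h5 : (1 - x) ^ 2 ≤ 1 := by nlinarith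
          have h6 : (4 * M)⁻¹ ≤ 1 := inv_le_one_of_one_le₀ (by linarith)
          calc _ ≤ 1 * (1 * ‖Q.eval (x : ℂ)‖) := by gcongr
            _ = _ := by ring
        have := Real.log_le_log (by positivity) h4
        linarith)
  rw [intervalIntegral.integral_add (by simp) (gm_int p _ _), intervalIntegral.integral_const,
    smul_eq_mul] at hmono
  have ha1 : 0 < 1 - 2 * a := by linarith
  have hlog4 : 0 ≤ Real.log (4 * M) := Real.log_nonneg (by linarith)
  have hfin : a * (k * Real.log (1 - 2 * a)) - (9 * Real.pi / Real.sqrt 2) * Real.log (4 * M) ≤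
      ∫ x in (1 - 2 * a)..(1 - a), Real.log |∑ j ∈ Finset.Icc k n, b j * A j * x ^ j| := by
    have hc := mul_le_mul_of_nonneg_right gm_const hlog4
    have e : (1 - a - (1 - 2 * a)) * (k * Real.log (1 - 2 * a)) = a * (k * Real.log (1 - 2 * a)) := by
      ring
    linarith
  have hpow : (1 - 2 * a) ^ k = Real.exp (k * Real.log (1 - 2 * a)) := by
    rw [← Real.log_pow, Real.exp_log (by positivity)]
  rw [ge_iff_le, hpow, ← Real.exp_add]
  apply Real.exp_le_exp.2
  have h7 := mul_le_mul_of_nonneg_left hfin (by positivity : 0 ≤ 1 / a)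
  refine le_trans (le_of_eq ?_) h7
  field_simp
  ring
end
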